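/- For every odd prime p, the Schwartz genus of the quotient covering map q_{2p} : F(ℂ,2p) → F(ℂ,2p)/Σ_{2p} is strictly less than 2p; that is, there exist 2p−1 open subsets U_1, …, U_{2p−1} covering F(ℂ,2p)/Σ_{2p} such that for each i the restriction of q_{2p} over U_i is a trivial covering: there is a discrete topological space D_i and a homeomorphism h_i : q_{2p}^{-1}(U_i) → U_i × D_i with pr₁ ∘ h_i = q_{2p} on q_{2p}^{-1}(U_i). -/

import Mathlib

noncomputable section

/-- The ordered configuration space of `n` distinct points in the plane `ℂ`. -/
abbrev ConfigSpace (n : ℕ) : Type := { f : Fin n → ℂ // Function.Injective f }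

/-- The action of a permutation `σ` on the configuration space, `σ • f = f ∘ σ⁻¹`. -/
def configPermMap (n : ℕ) (σ : Equiv.Perm (Fin n)) : ConfigSpace n → ConfigSpace n :=
  fun f => ⟨f.1 ∘ ⇑σ⁻¹, f.2.comp (Equiv.injective _)⟩

/-- The orbit equivalence relation of the `Σ_n`-action on `F(ℂ,n)`. -/
def configSetoid (n : ℕ) : Setoid (ConfigSpace n) where
  r x y := ∃ σ : Equiv.Perm (Fin n), configPermMap n σ x = y
  iseqv := by
    constructor
    · intro x
      exact ⟨1, Subtype.ext (by funext i; simp [configPermMap])⟩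
    · rintro x y ⟨σ, rfl⟩
      exact ⟨σ⁻¹, Subtype.ext (by funext i; simp [configPermMap])⟩
    · rintro x y z ⟨σ, rfl⟩ ⟨τ, rfl⟩
      exact ⟨τ * σ, Subtype.ext (by funext i; simp [configPermMap, mul_inv_rev])⟩

/-- The quotient `F(ℂ,n)/Σ_n`, with the quotient topology. -/
abbrev ConfigQuotient (n : ℕ) : Type := Quotient (configSetoid n)

/-- The quotient (covering) map `q_n : F(ℂ,n) → F(ℂ,n)/Σ_n`. -/
def configProj (n : ℕ) : ConfigSpace n → ConfigQuotient n := Quotient.mk _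

/-- The assertion that the Schwartz genus of the covering `q_n : F(ℂ,n) → F(ℂ,n)/Σ_n` is
at most `t`: there are `t` open sets covering the base, over each of which `q_n` is a
trivial covering (i.e. the preimage is homeomorphic, over the base, to a product of the
open set with a discrete space). -/
def SchwartzGenusLE (n t : ℕ) : Prop :=
  ∃ U : Fin t → Set (ConfigQuotient n),
    (∀ i, IsOpen (U i)) ∧ (⋃ i, U i) = Set.univ ∧
      ∀ i : Fin t, ∃ (D : Type) (τ : TopologicalSpace D),
        @DiscreteTopology D τ ∧
          ∃ e : @Homeomorph { x : ConfigSpace n // configProj n x ∈ U i } (↥(U i) × D)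
              inferInstance (@instTopologicalSpaceProd _ _ _ τ),
            ∀ x, ((e.toEquiv x).1 : ConfigQuotient n) = configProj n x.1

noncomputable section
namespace SG
open Equiv

/-- The finite simplicial complex `G^{*t}`, `G = Σ_n`, by barycentric weights. -/
def KSet (n t : ℕ) : Set (Fin t × Perm (Fin n) → ℝ) :=
  {w | (∀ a, 0 ≤ w a) ∧ ∑ a, w a = 1 ∧ ∀ c g h, w (c, g) ≠ 0 → w (c, h) ≠ 0 → g = h}

abbrev KK (n t : ℕ) : Type := ↥(KSet n t)

variable {n t : ℕ}

/-- left translation action on labels -/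
def act (σ : Perm (Fin n)) (w : KK n t) : KK n t :=
  ⟨fun a => w.1 (a.1, σ⁻¹ * a.2), fun a => w.2.1 _, by
    rw [← w.2.2.1]
    exact Fintype.sum_equiv ((Equiv.refl _).prodCongr (Equiv.mulLeft σ⁻¹)) _ _ (fun _ => rfl),
    fun c g h h1 h2 => by
      have := w.2.2.2 c _ _ h1 h2
      exact mul_left_cancel this⟩

theorem act_apply (σ : Perm (Fin n)) (w : KK n t) (c) (g) :
    (act σ w).1 (c, g) = w.1 (c, σ⁻¹ * g) := rfl

theorem act_act (σ τ : Perm (Fin n)) (w : KK n t) : act σ (act τ w) = act (σ * τ) w := by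
  apply Subtype.ext; funext ⟨c, g⟩; simp [act_apply, mul_assoc]

theorem act_one (w : KK n t) : act 1 w = w := by
  apply Subtype.ext; funext ⟨c, g⟩; simp [act_apply]

theorem continuous_act (σ : Perm (Fin n)) : Continuous (act σ : KK n t → KK n t) := by
  apply Continuous.subtype_mk
  apply continuous_pi
  intro a
  exact (continuous_apply _).comp continuous_subtype_val

theorem isOpenMap_proj (n : ℕ) : IsOpenMap (configProj n) := by
  intro W hW
  have : IsOpen (configProj n ⁻¹' (configProj n '' W)) := by
    have : configProj n ⁻¹' (configProj n '' W) = ⋃ σ, configPermMap n σ ⁻¹' W := by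
      ext z
      simp only [Set.mem_preimage, Set.mem_image, Set.mem_iUnion]
      constructor
      · rintro ⟨w, hw, h⟩
        obtain ⟨σ, hσ⟩ := Quotient.exact h.symm
        exact ⟨σ, hσ ▸ hw⟩
      · rintro ⟨σ, h⟩
        exact ⟨_, h, (Quotient.sound ⟨σ, rfl⟩ : configProj n z = _).symm⟩
    rw [this]
    refine isOpen_iUnion fun σ => hW.preimage ?_
    apply Continuous.subtype_mk
    apply continuous_pi
    intro a
    exact (continuous_apply _).comp continuous_subtype_val
  exact isQuotientMap_quot_mk.isOpen_preimage.1 this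

theorem genus_of_map (Φ : ConfigSpace n → KK n t) (hc : Continuous Φ)
    (heq : ∀ σ z, Φ (configPermMap n σ z) = act σ (Φ z)) : SchwartzGenusLE n t := by
  classical
  let P : Fin t → Set (ConfigSpace n) := fun c => {z | ∃ g, 0 < (Φ z).1 (c, g)}
  have hPo : ∀ c, IsOpen (P c) := by
    intro c
    have : P c = ⋃ g, {z | 0 < (Φ z).1 (c, g)} := by ext z; simp [P]
    rw [this]
    refine isOpen_iUnion fun g => ?_
    exact isOpen_lt continuous_const ((continuous_apply _).comp (continuous_subtype_val.comp hc))
  have hPinv : ∀ c σ z, z ∈ P c → configPermMap n σ z ∈ P c := by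
    rintro c σ z ⟨g, hg⟩
    refine ⟨σ * g, ?_⟩
    rw [heq, act_apply]; simpa using hg
  let U : Fin t → Set (ConfigQuotient n) := fun c => configProj n '' P c
  have hUP : ∀ c z, configProj n z ∈ U c → z ∈ P c := by
    rintro c z ⟨w, hw, h⟩
    obtain ⟨σ, hσ⟩ := Quotient.exact h
    exact hσ ▸ hPinv c σ w hw
  refine ⟨U, fun c => isOpenMap_proj n _ (hPo c), ?_, ?_⟩
  · rw [Set.eq_univ_iff_forall]
    intro b
    induction b using Quotient.inductionOn with | _ z
    have hs := (Φ z).2.2.1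
    obtain ⟨⟨c, g⟩, -, h⟩ := Finset.exists_lt_of_sum_lt
      (s := Finset.univ) (f := fun _ => (0 : ℝ)) (g := (Φ z).1) (by rw [hs]; simp)
    exact Set.mem_iUnion.2 ⟨c, z, ⟨g, h⟩, rfl⟩
  · intro c
    refine ⟨Perm (Fin n), ⊥, @DiscreteTopology.mk _ ⊥ rfl, ?_⟩
    let _ : TopologicalSpace (Perm (Fin n)) := ⊥
    have : DiscreteTopology (Perm (Fin n)) := ⟨rfl⟩
    let E := {x : ConfigSpace n // configProj n x ∈ U c}
    let l : E → Perm (Fin n) := fun z => Classical.choose (hUP c z.1 z.2)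
    have hl : ∀ z : E, 0 < (Φ z.1).1 (c, l z) := fun z => Classical.choose_spec (hUP c z.1 z.2)
    have hlu : ∀ (z : E) g, 0 < (Φ z.1).1 (c, g) → l z = g := fun z g hg =>
      (Φ z.1).2.2.2 c _ _ (hl z).ne' hg.ne'
    let pr : E → U c := fun z => ⟨configProj n z.1, z.2⟩
    have hpro : IsOpenMap pr := (isOpenMap_proj n).restrictPreimage (U c)
    have hprc : Continuous pr := by
      apply Continuous.subtype_mk
      exact continuous_quot_mk.comp continuous_subtype_val
    have hlo : ∀ g, IsOpen (l ⁻¹' {g}) := by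
      intro g
      have : l ⁻¹' {g} = {z : E | 0 < (Φ z.1).1 (c, g)} := by
        ext z
        constructor
        · intro h; have := hl z; rwa [show l z = g from h] at this
        · intro h; exact hlu z g h
      rw [this]
      exact isOpen_lt continuous_const ((continuous_apply _).comp
        (continuous_subtype_val.comp (hc.comp continuous_subtype_val)))
    have hlc : Continuous l := continuous_discrete_rng.2 hlo
    let f : E → U c × Perm (Fin n) := fun z => (pr z, l z)
    have hfc : Continuous f := hprc.prodMk hlc
    have hfo : IsOpenMap f := by
      intro W hW
      have : f '' W = ⋃ g, (pr '' (W ∩ l ⁻¹' {g})) ×ˢ {g} := by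
        ext ⟨b, g⟩
        simp only [Set.mem_image, Set.mem_iUnion, Set.mem_prod, Set.mem_singleton_iff, f,
          Prod.mk.injEq, Set.mem_inter_iff, Set.mem_preimage]
        constructor
        · rintro ⟨z, hz, h1, h2⟩; exact ⟨g, ⟨z, ⟨hz, h2⟩, h1⟩, rfl⟩
        · rintro ⟨g', ⟨z, ⟨hz, h2⟩, h1⟩, rfl⟩; exact ⟨z, hz, h1, h2⟩
      rw [this]
      exact isOpen_iUnion fun g => (hpro _ (hW.inter (hlo g))).prod (isOpen_discrete _)
    have hinj : Function.Injective f := by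
      intro z z' h
      have h1 : configProj n z.1 = configProj n z'.1 := congrArg (fun q => (q.1 : ConfigQuotient n)) h
      have h2 : l z = l z' := congrArg Prod.snd h
      obtain ⟨σ, hσ⟩ := Quotient.exact h1
      have h3 := hl z'
      rw [← hσ, heq, act_apply] at h3
      have h4 := hlu z _ h3
      rw [h2] at h4
      have : σ = 1 := by
        have := mul_right_cancel (a := 1) (b := l z') (c := σ⁻¹) (by simpa using h4)
        simpa using this.symm
      subst this
      apply Subtype.ext
      rw [← hσ]; apply Subtype.ext; funext i; simp [configPermMap]
    have hsur : Function.Surjective f := by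
      rintro ⟨⟨b, hb⟩, g⟩
      induction b using Quotient.inductionOn with | _ z
      let zz : E := ⟨z, hb⟩
      let σ := g * (l zz)⁻¹
      have hq : configProj n (configPermMap n σ z) = configProj n z :=
        (Quotient.sound ⟨σ, rfl⟩ : configProj n z = _).symm
      let z' : E := ⟨configPermMap n σ z, by rw [hq]; exact hb⟩
      refine ⟨z', Prod.ext (Subtype.ext hq) (hlu z' g ?_)⟩
      change 0 < (Φ (configPermMap n σ z)).1 (c, g)
      rw [heq, act_apply]
      have := hl zz
      simpa [σ] using this
    refine ⟨(Equiv.ofBijective f ⟨hinj, hsur⟩).toHomeomorphOfContinuousOpen hfc hfo, fun x => rfl⟩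

end SG
end

noncomputable section
namespace SG
open Equiv

variable {n : ℕ}

def Cut (Q : Fin n → Fin n → Prop) (A : Finset (Fin n)) : Prop := ∀ k ∈ A, ∀ l ∉ A, Q k l

def SS (Q : Fin n → Fin n → Prop) (i j : Fin n) : Prop := ∃ A, Cut Q A ∧ i ∈ A ∧ j ∉ A

def RR (Q : Fin n → Fin n → Prop) : Setoid (Fin n) where
  r i j := ∀ A, Cut Q A → (i ∈ A ↔ j ∈ A)
  iseqv := ⟨fun _ _ _ => Iff.rfl, fun h A hA => (h A hA).symm,
    fun h h' A hA => (h A hA).trans (h' A hA)⟩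

theorem RR_iff {Q : Fin n → Fin n → Prop} {i j : Fin n} :
    RR Q i j ↔ ∀ A, Cut Q A → (i ∈ A ↔ j ∈ A) := Iff.rfl

def Lt (Q : Fin n → Fin n → Prop) (i j : Fin n) : Prop := SS Q i j ∨ (RR Q i j ∧ i < j)

def Listing (r : Fin n → Fin n → Prop) (g : Perm (Fin n)) : Prop := ∀ a b, a < b → r (g a) (g b)

open Classical in
def lab (Q : Fin n → Fin n → Prop) : Perm (Fin n) :=
  if h : ∃ g, Listing (Lt Q) g then h.choose else 1

def cnt (Q : Fin n → Fin n → Prop) : ℕ := Nat.card (Quotient (RR Q))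

def Asym (Q : Fin n → Fin n → Prop) : Prop := ∀ k l, Q k l → ¬ Q l k

theorem listing_unique {r : Fin n → Fin n → Prop} (hr : ∀ i j, r i j → ¬ r j i)
    {g g' : Perm (Fin n)} (hg : Listing r g) (hg' : Listing r g') : g = g' := by
  have key : ∀ {g : Perm (Fin n)}, Listing r g → ∀ a b, r (g a) (g b) → a < b := by
    intro g hg a b h
    rcases lt_trichotomy a b with h1 | h1 | h1
    · exact h1
    · subst h1; exact absurd h (hr _ _ h)
    · exact absurd h (hr _ _ (hg _ _ h1))
  have hm : StrictMono (g⁻¹ * g' : Perm (Fin n)) := by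
    intro a b hab
    apply key hg
    simpa using hg' a b hab
  have h1 : (hm.orderIsoOfSurjective _ (Equiv.surjective _)) = OrderIso.refl _ :=
    Subsingleton.elim _ _
  have h2 : (g⁻¹ * g' : Perm (Fin n)) = 1 := by
    ext a
    have := congrArg (fun f : Fin n ≃o Fin n => f a) h1
    simpa using congrArg Fin.val this
  rw [inv_mul_eq_one] at h2
  exact h2

section
variable {Q : Fin n → Fin n → Prop}

theorem SS_asymm (hQ : Asym Q) {i j : Fin n} (h : SS Q i j) : ¬ SS Q j i := by
  obtain ⟨A, hA, hi, hj⟩ := h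
  rintro ⟨B, hB, hj', hi'⟩
  exact hQ _ _ (hA i hi j hj) (hB j hj' i hi')

theorem SS_not_RR {i j : Fin n} (h : SS Q i j) : ¬ RR Q i j := by
  obtain ⟨A, hA, hi, hj⟩ := h
  intro h; exact hj ((h A hA).1 hi)

theorem SS_or_of_not_RR {i j : Fin n} (h : ¬ RR Q i j) : SS Q i j ∨ SS Q j i := by
  rw [RR_iff] at h
  push Not at h
  obtain ⟨A, hA, h⟩ := h
  rcases h with ⟨h1, h2⟩ | ⟨h1, h2⟩
  · exact Or.inl ⟨A, hA, h1, h2⟩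
  · exact Or.inr ⟨A, hA, h2, h1⟩

theorem Lt_asymm (hQ : Asym Q) (i j : Fin n) (h : Lt Q i j) : ¬ Lt Q j i := by
  rintro (h' | h')
  · rcases h with h | h
    · exact SS_asymm hQ h h'
    · exact SS_not_RR h' ((RR Q).symm h.1)
  · rcases h with h | h
    · exact SS_not_RR h ((RR Q).symm h'.1)
    · exact absurd h.2 (not_lt.2 h'.2.le)

theorem Lt_total {i j : Fin n} (h : i ≠ j) : Lt Q i j ∨ Lt Q j i := by
  by_cases hR : RR Q i j
  · rcases lt_or_gt_of_ne h with h | h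
    · exact Or.inl (Or.inr ⟨hR, h⟩)
    · exact Or.inr (Or.inr ⟨(RR Q).symm hR, h⟩)
  · exact (SS_or_of_not_RR hR).imp Or.inl Or.inl

theorem Lt_trans (hQ : Asym Q) {i j k : Fin n} (h : Lt Q i j) (h' : Lt Q j k) : Lt Q i k := by
  rcases h with h | h
  · obtain ⟨A, hA, hi, hj⟩ := h
    rcases h' with h' | h'
    · left
      refine ⟨A, hA, hi, fun hk => ?_⟩
      exact SS_asymm hQ h' ⟨A, hA, hk, hj⟩
    · exact Or.inl ⟨A, hA, hi, fun hk => hj ((h'.1 A hA).2 hk)⟩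
  · rcases h' with h' | h'
    · obtain ⟨A, hA, hj, hk⟩ := h'
      exact Or.inl ⟨A, hA, (h.1 A hA).2 hj, hk⟩
    · exact Or.inr ⟨(RR Q).trans h.1 h'.1, h.2.trans h'.2⟩

theorem exists_listing (hQ : Asym Q) : ∃ g, Listing (Lt Q) g := by
  classical
  have : IsStrictTotalOrder (Fin n) (Lt Q) :=
    { trichotomous := fun a b h1 h2 => by
        by_contra h
        rcases Lt_total (Q := Q) h with h | h
        · exact h1 h
        · exact h2 h
      irrefl := fun a h => Lt_asymm hQ _ _ h h
      trans := fun a b c => Lt_trans hQ }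
  let L : LinearOrder (Fin n) := linearOrderOfSTO (Lt Q)
  let e := @Fintype.orderIsoFinOfCardEq (Fin n) L _ n (Fintype.card_fin n)
  refine ⟨e.toEquiv, fun a b hab => ?_⟩
  exact (@OrderIso.lt_iff_lt _ _ _ L.toPreorder e a b).2 hab

theorem lab_spec (hQ : Asym Q) : Listing (Lt Q) (lab Q) := by
  unfold lab
  rw [dif_pos (exists_listing hQ)]
  exact (exists_listing hQ).choose_spec

theorem lab_unique (hQ : Asym Q) {g : Perm (Fin n)} (hg : Listing (Lt Q) g) : lab Q = g :=
  listing_unique (Lt_asymm hQ) (lab_spec hQ) hg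

end

theorem cnt_le_of_refine {Q Q' : Fin n → Fin n → Prop} (h : ∀ i j, RR Q' i j → RR Q i j) :
    cnt Q ≤ cnt Q' := by
  refine Nat.card_le_card_of_surjective (Quotient.map' id h) ?_
  intro b
  induction b using Quotient.inductionOn with | _ i
  exact ⟨Quotient.mk _ i, rfl⟩

theorem RR_mono {Q Q' : Fin n → Fin n → Prop} (h : ∀ k l, Q k l → Q' k l) (i j : Fin n)
    (hR : RR Q' i j) : RR Q i j :=
  fun A hA => hR A (fun k hk l hl => h _ _ (hA k hk l hl))

theorem RR_eq_of_cnt {Q Q' : Fin n → Fin n → Prop} (h : ∀ i j, RR Q' i j → RR Q i j)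
    (hc : cnt Q = cnt Q') (i j : Fin n) : RR Q i j → RR Q' i j := by
  have hs : Function.Surjective (Quotient.map' id h : Quotient (RR Q') → Quotient (RR Q)) := by
    intro b
    induction b using Quotient.inductionOn with | _ i
    exact ⟨Quotient.mk _ i, rfl⟩
  have hb := (Nat.bijective_iff_surjective_and_card _).2 ⟨hs, hc.symm⟩
  intro hR
  have := hb.1 (a₁ := Quotient.mk _ i) (a₂ := Quotient.mk _ j) (Quotient.sound hR)
  exact Quotient.exact this

theorem lab_eq_of_cnt {Q Q' : Fin n → Fin n → Prop} (hQ : Asym Q) (hQ' : Asym Q')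
    (h : ∀ k l, Q k l → Q' k l) (hc : cnt Q = cnt Q') : lab Q = lab Q' := by
  apply lab_unique hQ
  intro a b hab
  have hS : ∀ i j, SS Q i j → SS Q' i j := fun i j ⟨A, hA, h1, h2⟩ =>
    ⟨A, fun k hk l hl => h _ _ (hA k hk l hl), h1, h2⟩
  rcases lab_spec hQ' a b hab with h1 | h1
  · have : ¬ RR Q (lab Q' a) (lab Q' b) := fun hR =>
      SS_not_RR h1 (RR_eq_of_cnt (RR_mono h) hc _ _ hR)
    rcases SS_or_of_not_RR this with h2 | h2
    · exact Or.inl h2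
    · exact absurd (hS _ _ h2) (SS_asymm hQ' h1)
  · exact Or.inr ⟨RR_mono h _ _ h1.1, h1.2⟩

theorem cnt_le (Q : Fin n → Fin n → Prop) : cnt Q ≤ n := by
  have := Nat.card_le_card_of_surjective (Quotient.mk (RR Q)) Quotient.mk_surjective
  simpa [cnt] using this

theorem two_le_cnt {Q : Fin n → Fin n → Prop} {i j : Fin n} (h : ¬ RR Q i j) : 2 ≤ cnt Q := by
  have := Nat.card_le_card_of_injective (α := Fin 2)
    (![Quotient.mk (RR Q) i, Quotient.mk (RR Q) j]) (by
      intro a b hab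
      have q : ∀ {a b}, ¬ RR Q a b → ¬ (Quotient.mk (RR Q) a = Quotient.mk (RR Q) b) :=
          fun h h' => h (Quotient.exact h')
      fin_cases a <;> fin_cases b <;> first | rfl | (exfalso; revert hab)
      exacts [q h, q (mt (RR Q).symm h)])
  simpa [cnt] using this

theorem three_le_cnt {Q : Fin n → Fin n → Prop} (hQ : Asym Q) {A B : Finset (Fin n)}
    (hA : Cut Q A) (hB : Cut Q B) (hne : A ≠ B) (hA1 : A.Nonempty) (hA2 : Aᶜ.Nonempty)
    (hB1 : B.Nonempty) (hB2 : Bᶜ.Nonempty) : 3 ≤ cnt Q := by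
  have main : ∀ A B : Finset (Fin n), Cut Q A → Cut Q B → A.Nonempty → Bᶜ.Nonempty → A ⊂ B →
      3 ≤ cnt Q := by
    intro A B hA hB hA1 hB2 hAB
    obtain ⟨i, hi⟩ := hA1
    obtain ⟨j, hjB, hjA⟩ := Finset.exists_of_ssubset hAB
    obtain ⟨l, hl⟩ := hB2
    rw [Finset.mem_compl] at hl
    have hij : ¬ RR Q i j := fun h => hjA ((h A hA).1 hi)
    have hil : ¬ RR Q i l := fun h => hl ((h B hB).1 (hAB.1 hi))
    have hjl : ¬ RR Q j l := fun h => hl ((h B hB).1 hjB)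
    have := Nat.card_le_card_of_injective (α := Fin 3)
      (![Quotient.mk (RR Q) i, Quotient.mk (RR Q) j, Quotient.mk (RR Q) l]) (by
        intro a b hab
        have e1 := mt (RR Q).symm hij
        have e2 := mt (RR Q).symm hil
        have e3 := mt (RR Q).symm hjl
        have q : ∀ {a b}, ¬ RR Q a b → ¬ (Quotient.mk (RR Q) a = Quotient.mk (RR Q) b) :=
          fun h h' => h (Quotient.exact h')
        fin_cases a <;> fin_cases b <;> first | rfl | (exfalso; revert hab)
        exacts [q hij, q hil, q e1, q hjl, q e2, q e3])
    simpa [cnt] using this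
  have : A ⊆ B ∨ B ⊆ A := by
    by_contra hcon
    push Not at hcon
    obtain ⟨h1, h2⟩ := hcon
    obtain ⟨i, hi, hi'⟩ := Finset.not_subset.1 h1
    obtain ⟨j, hj, hj'⟩ := Finset.not_subset.1 h2
    exact hQ _ _ (hA i hi j hj') (hB j hj i hi')
  rcases this with h | h
  · exact main A B hA hB hA1 hB2 (h.ssubset_of_ne hne)
  · exact main B A hB hA hB1 hA2 (h.ssubset_of_ne hne.symm)

/-- permuted subset `π⁻¹ A` -/
def pm (π : Perm (Fin n)) (A : Finset (Fin n)) : Finset (Fin n) :=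
  Finset.univ.filter (fun i => π i ∈ A)

@[simp] theorem mem_pm {π : Perm (Fin n)} {A : Finset (Fin n)} {i : Fin n} :
    i ∈ pm π A ↔ π i ∈ A := by simp [pm]

theorem pm_eq_map (π : Perm (Fin n)) (A : Finset (Fin n)) : pm π A = A.map π.symm.toEmbedding := by
  ext x; simp

@[simp] theorem card_pm (π : Perm (Fin n)) (A : Finset (Fin n)) : (pm π A).card = A.card := by
  rw [pm_eq_map, Finset.card_map]

/-- equivariance -/
theorem Cut_comp {Q : Fin n → Fin n → Prop} (π : Perm (Fin n)) (A : Finset (Fin n)) :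
    Cut (fun k l => Q (π k) (π l)) (pm π A) ↔ Cut Q A := by
  constructor
  · intro h k hk l hl
    have := h (π⁻¹ k) (by simpa using hk) (π⁻¹ l) (by simpa using hl)
    simpa using this
  · intro h k hk l hl
    exact h (π k) (by simpa using hk) (π l) (by simpa using hl)

theorem exists_pm (π : Perm (Fin n)) (A : Finset (Fin n)) : ∃ B, A = pm π B :=
  ⟨pm π⁻¹ A, by ext; simp⟩

theorem RR_comp {Q : Fin n → Fin n → Prop} (π : Perm (Fin n)) (i j : Fin n) :
    RR (fun k l => Q (π k) (π l)) i j ↔ RR Q (π i) (π j) := by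
  constructor
  · intro h A hA
    simpa using h _ ((Cut_comp π A).2 hA)
  · intro h A hA
    obtain ⟨B, rfl⟩ := exists_pm π A
    simpa using h _ ((Cut_comp π B).1 hA)

theorem SS_comp {Q : Fin n → Fin n → Prop} (π : Perm (Fin n)) (i j : Fin n) :
    SS (fun k l => Q (π k) (π l)) i j ↔ SS Q (π i) (π j) := by
  constructor
  · rintro ⟨A, hA, h1, h2⟩
    obtain ⟨B, rfl⟩ := exists_pm π A
    exact ⟨_, (Cut_comp π B).1 hA, by simpa using h1, by simpa using h2⟩
  · rintro ⟨A, hA, h1, h2⟩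
    exact ⟨_, (Cut_comp π A).2 hA, by simpa using h1, by simpa using h2⟩

theorem cnt_comp {Q : Fin n → Fin n → Prop} (π : Perm (Fin n)) :
    cnt (fun k l => Q (π k) (π l)) = cnt Q := by
  apply Nat.card_congr
  exact Quotient.congr π (fun a b => RR_comp π a b)

theorem lab_comp {Q : Fin n → Fin n → Prop} (hQ : Asym Q) (π : Perm (Fin n))
    (h : ∀ i j, RR Q i j → i < j → π⁻¹ i < π⁻¹ j) :
    lab Q = π * lab (fun k l => Q (π k) (π l)) := by
  have hQ' : Asym (fun k l => Q (π k) (π l)) := fun k l => hQ _ _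
  apply lab_unique hQ
  intro a b hab
  rcases lab_spec hQ' a b hab with h1 | ⟨h1, h2⟩
  · exact Or.inl ((SS_comp π _ _).1 h1)
  · right
    have hR := (RR_comp π _ _).1 h1
    refine ⟨hR, ?_⟩
    rcases lt_trichotomy ((π * lab (fun k l => Q (π k) (π l))) a)
      ((π * lab (fun k l => Q (π k) (π l))) b) with h3 | h3 | h3
    · exact h3
    · rw [Perm.mul_apply, Perm.mul_apply] at h3
      have := π.injective h3
      rw [this] at h2; exact absurd h2 (lt_irrefl _)
    · have := h _ _ ((RR Q).symm hR) h3
      simp at this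
      exact absurd this (not_lt.2 h2.le)

/-- block listing -/
def QA (A : Finset (Fin n)) (k l : Fin n) : Prop := k ∈ A ∧ l ∉ A

theorem QA_asym (A : Finset (Fin n)) : Asym (QA A) := fun _ _ h h' => h.2 h'.1

def gg (A : Finset (Fin n)) : Perm (Fin n) := lab (QA A)

theorem cut_QA (A : Finset (Fin n)) : Cut (QA A) A := fun _ hk _ hl => ⟨hk, hl⟩

theorem RR_QA {A : Finset (Fin n)} {i j : Fin n} : RR (QA A) i j ↔ (i ∈ A ↔ j ∈ A) := by
  constructor
  · intro h; exact h A (cut_QA A)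
  · intro h B hB
    by_contra hcon
    have : (i ∈ B ∧ j ∉ B) ∨ (j ∈ B ∧ i ∉ B) := by tauto
    rcases this with ⟨h1, h2⟩ | ⟨h1, h2⟩
    · have := hB i h1 j h2; unfold QA at this; tauto
    · have := hB j h1 i h2; unfold QA at this; tauto

theorem Lt_QA {A : Finset (Fin n)} {i j : Fin n} :
    Lt (QA A) i j ↔ (i ∈ A ∧ j ∉ A) ∨ ((i ∈ A ↔ j ∈ A) ∧ i < j) := by
  unfold Lt
  rw [RR_QA]
  constructor
  · rintro (h | h)
    · obtain ⟨B, hB, h1, h2⟩ := h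
      exact Or.inl (hB _ h1 _ h2)
    · exact Or.inr h
  · rintro (h | h)
    · exact Or.inl ⟨A, cut_QA A, h.1, h.2⟩
    · exact Or.inr h

theorem gg_lt {A : Finset (Fin n)} {a b : Fin n} (h : a < b)  :
    (gg A a ∈ A ∧ gg A b ∉ A) ∨ ((gg A a ∈ A ↔ gg A b ∈ A) ∧ gg A a < gg A b) :=
  Lt_QA.1 (lab_spec (QA_asym A) a b h)

theorem gg_unique {A : Finset (Fin n)} {g : Perm (Fin n)}
    (h : ∀ a b, a < b → (g a ∈ A ∧ g b ∉ A) ∨ ((g a ∈ A ↔ g b ∈ A) ∧ g a < g b)) : gg A = g :=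
  lab_unique (QA_asym A) (fun a b hab => Lt_QA.2 (h a b hab))

theorem gg_mem_iff (A : Finset (Fin n)) (a : Fin n) : gg A a ∈ A ↔ (a : ℕ) < A.card := by
  -- the preimage of A is an initial segment of cardinality |A|
  have hdown : ∀ a b, a ≤ b → gg A b ∈ A → gg A a ∈ A := by
    intro a b hab hb
    rcases hab.eq_or_lt with rfl | hab
    · exact hb
    · rcases gg_lt (A := A) hab with h | h
      · exact h.1
      · exact h.1.2 hb
  let B := Finset.univ.filter (fun a => gg A a ∈ A)
  have hcard : B.card = A.card := by
    have : B.map (gg A).toEmbedding = A := by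
      ext x
      simp only [B, Finset.mem_map, Finset.mem_filter, Finset.mem_univ, true_and,
        Equiv.coe_toEmbedding]
      constructor
      · rintro ⟨a, h, rfl⟩; exact h
      · intro h; exact ⟨(gg A).symm x, by simpa using h, by simp⟩
    rw [← this, Finset.card_map]; 
  constructor
  · intro h
    have : Finset.Iic a ⊆ B := by
      intro b hb
      simp only [B, Finset.mem_filter, Finset.mem_univ, true_and]
      exact hdown b a (Finset.mem_Iic.1 hb) h
    have := Finset.card_le_card this
    rw [hcard, Fin.card_Iic] at this
    omega
  · intro h
    by_contra hcon
    have : B ⊆ Finset.Iio a := by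
      intro b hb
      simp only [B, Finset.mem_filter, Finset.mem_univ, true_and] at hb
      rw [Finset.mem_Iio]
      by_contra hab
      exact hcon (hdown a b (not_lt.1 hab) hb)
    have := Finset.card_le_card this
    rw [hcard, Fin.card_Iio] at this
    omega

theorem gg_pm {A : Finset (Fin n)} (π : Perm (Fin n))
    (h : ∀ i j, (i ∈ A ↔ j ∈ A) → i < j → π⁻¹ i < π⁻¹ j) :
    gg (pm π A) = π⁻¹ * gg A := by
  apply gg_unique
  intro a b hab
  have := gg_lt (A := A) hab
  have e : ∀ x, π (π⁻¹ x) = x := fun x => by simp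
  simp only [Perm.mul_apply, mem_pm, e]
  rcases this with h1 | h1
  · left; exact h1
  · right
    exact ⟨h1.1, h _ _ h1.1 h1.2⟩

/-- splitting relation -/
def QJ (J : Finset (Fin n)) (Q : Fin n → Fin n → Prop) (k l : Fin n) : Prop :=
  (k ∈ J ∧ l ∉ J) ∨ ((k ∈ J ↔ l ∈ J) ∧ Q k l)

theorem QJ_asym {J : Finset (Fin n)} {Q : Fin n → Fin n → Prop} (hQ : Asym Q) : Asym (QJ J Q) := by
  intro k l h h'
  have := hQ k l
  unfold QJ at h h'
  tauto

theorem cut_QJ (J : Finset (Fin n)) (Q : Fin n → Fin n → Prop) : Cut (QJ J Q) J :=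
  fun _ hk _ hl => Or.inl ⟨hk, hl⟩

theorem QJ_refine {J : Finset (Fin n)} {Q : Fin n → Fin n → Prop} (i j : Fin n)
    (h : RR (QJ J Q) i j) : RR Q i j := by
  intro A hA
  have hJ := h J (cut_QJ J Q)
  by_cases hi : i ∈ J
  · have hj := hJ.1 hi
    have := h (A ∩ J) (by
      intro k hk l hl
      have := hA k
      have := this (Finset.mem_inter.1 hk).1 l
      rw [Finset.mem_inter] at hk hl
      unfold QJ; tauto)
    simpa [hi, hj] using this
  · have hj : j ∉ J := fun h => hi (hJ.2 h)
    have := h (A ∪ J) (by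
      intro k hk l hl
      have := hA k
      rw [Finset.mem_union] at hk hl
      have := fun h => this h l
      unfold QJ; tauto)
    simpa [hi, hj] using this

end SG
end

noncomputable section
namespace SG
open Equiv MeasureTheory Topology

variable {n t : ℕ}

open Classical in
/-- weight of the value `a` for a step function on `(1,2)` -/
def wt (d : ℝ → Fin t × Perm (Fin n)) (a : Fin t × Perm (Fin n)) : ℝ :=
  ∫ θ in Set.Ioo (1 : ℝ) 2, (if d θ = a then (1 : ℝ) else 0)

/-- `d` is locally constant on `(1,2)` off a finite set -/
def Tame (d : ℝ → Fin t × Perm (Fin n)) : Prop :=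
  ∃ F : Set ℝ, F.Finite ∧ ∀ θ ∈ Set.Ioo (1 : ℝ) 2, θ ∉ F → ∀ᶠ θ' in 𝓝 θ, d θ' = d θ

theorem tame_aesm {d : ℝ → Fin t × Perm (Fin n)} (hd : Tame d) (a) : open Classical in
    AEStronglyMeasurable (fun θ => if d θ = a then (1 : ℝ) else 0)
      (volume.restrict (Set.Ioo (1 : ℝ) 2)) := by
  classical
  obtain ⟨F, hF, h⟩ := hd
  have hco : ContinuousOn (fun θ => if d θ = a then (1 : ℝ) else 0) (Set.Ioo (1 : ℝ) 2 \ F) := by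
    intro θ hθ
    apply ContinuousAt.continuousWithinAt
    have : (fun θ' => if d θ' = a then (1 : ℝ) else 0) =ᶠ[𝓝 θ]
        fun _ => if d θ = a then (1 : ℝ) else 0 := by
      filter_upwards [h θ hθ.1 hθ.2] with θ' hθ'
      rw [hθ']
    exact ContinuousAt.congr continuousAt_const this.symm
  have hm := hco.aestronglyMeasurable (μ := volume) (measurableSet_Ioo.diff hF.measurableSet)
  rwa [Measure.restrict_congr_set] at hm
  exact sdiff_null_ae_eq_self (hF.measure_zero _)

theorem tame_integrable {d : ℝ → Fin t × Perm (Fin n)} (hd : Tame d) (a) : open Classical in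
    Integrable (fun θ => if d θ = a then (1 : ℝ) else 0)
      (volume.restrict (Set.Ioo (1 : ℝ) 2)) := by
  classical
  have : IsFiniteMeasure (volume.restrict (Set.Ioo (1 : ℝ) 2)) := ⟨by simp⟩
  refine Integrable.mono' (integrable_const (1 : ℝ)) (tame_aesm hd a) ?_
  refine Filter.Eventually.of_forall fun θ => ?_
  split_ifs <;> simp

theorem wt_eq_zero {d : ℝ → Fin t × Perm (Fin n)} {a} (h : ∀ θ ∈ Set.Ioo (1 : ℝ) 2, d θ ≠ a) :
    wt d a = 0 := by
  classical
  unfold wt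
  rw [setIntegral_congr_fun (g := fun _ => (0 : ℝ)) measurableSet_Ioo
    (fun θ hθ => if_neg (h θ hθ))]
  simp

theorem wt_congr {d d' : ℝ → Fin t × Perm (Fin n)} (h : ∀ θ ∈ Set.Ioo (1 : ℝ) 2, d θ = d' θ) :
    wt d = wt d' := by
  classical
  funext a
  unfold wt
  exact setIntegral_congr_fun measurableSet_Ioo (fun θ hθ => by simp only [h θ hθ])

theorem wt_mem {d : ℝ → Fin t × Perm (Fin n)} (hd : Tame d)
    (h : ∀ θ ∈ Set.Ioo (1 : ℝ) 2, ∀ θ' ∈ Set.Ioo (1 : ℝ) 2, θ' ≤ θ → (d θ).1 = (d θ').1 →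
      (d θ).2 = (d θ').2) : wt d ∈ KSet n t := by
  classical
  refine ⟨fun a => ?_, ?_, ?_⟩
  · apply integral_nonneg
    intro θ; dsimp only; split_ifs <;> simp
  · unfold wt
    rw [← integral_finsetSum _ (fun a _ => tame_integrable hd a)]
    simp
    norm_num
  · intro c g g' h1 h2
    have key : ∀ a, wt d a ≠ 0 → ∃ θ ∈ Set.Ioo (1 : ℝ) 2, d θ = a := by
      intro a ha
      by_contra hcon
      push Not at hcon
      exact ha (wt_eq_zero hcon)
    obtain ⟨θ, hθ, e⟩ := key _ h1
    obtain ⟨θ', hθ', e'⟩ := key _ h2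
    have e1 : (d θ).1 = (d θ').1 := by rw [e, e']
    have : (d θ).2 = (d θ').2 := by
      rcases le_total θ' θ with hle | hle
      · exact h θ hθ θ' hθ' hle e1
      · exact (h θ' hθ' θ hθ hle e1.symm).symm
    rw [e, e'] at this
    exact this

theorem wt_continuous {X : Type*} [TopologicalSpace X] [FirstCountableTopology X]
    {D : X → ℝ → Fin t × Perm (Fin n)}
    (h : ∀ x, ∃ F : Set ℝ, F.Finite ∧ ∀ θ ∈ Set.Ioo (1 : ℝ) 2, θ ∉ F →
      ∀ᶠ p : X × ℝ in 𝓝 (x, θ), D p.1 p.2 = D x θ) :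
    (∀ x, Tame (D x)) ∧ Continuous (fun x => wt (D x)) := by
  classical
  have ht : ∀ x, Tame (D x) := by
    intro x
    obtain ⟨F, hF, h⟩ := h x
    refine ⟨F, hF, fun θ hθ hθF => ?_⟩
    have hc : Filter.Tendsto (fun θ' : ℝ => (x, θ')) (𝓝 θ) (𝓝 (x, θ)) :=
      (Continuous.prodMk_right x).tendsto θ
    exact hc.eventually (h θ hθ hθF)
  refine ⟨ht, continuous_pi fun a => continuous_iff_continuousAt.2 fun x => ?_⟩
  obtain ⟨F, hF, h⟩ := h x
  refine continuousAt_of_dominated (bound := fun _ => (1 : ℝ)) ?_ ?_ ?_ ?_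
  · exact Filter.Eventually.of_forall fun x => tame_aesm (ht x) a
  · refine Filter.Eventually.of_forall fun x => Filter.Eventually.of_forall fun θ => ?_
    split_ifs <;> simp
  · have : IsFiniteMeasure (volume.restrict (Set.Ioo (1 : ℝ) 2)) := ⟨by simp⟩
    exact integrable_const _
  · have h0 : ∀ᵐ θ ∂(volume.restrict (Set.Ioo (1 : ℝ) 2)), θ ∉ F :=
      ae_restrict_of_ae (measure_eq_zero_iff_ae_notMem.1 (hF.measure_zero _))
    filter_upwards [h0, ae_restrict_mem measurableSet_Ioo] with θ hθF hθ
    have hc : Filter.Tendsto (fun x' : X => (x', θ)) (𝓝 x) (𝓝 (x, θ)) :=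
      (Continuous.prodMk_left θ).tendsto x
    refine ContinuousAt.congr (f := fun _ => if D x θ = a then (1 : ℝ) else 0)
      continuousAt_const ?_
    filter_upwards [hc.eventually (h θ hθ hθF)] with x' hx'
    rw [hx']

end SG
end

noncomputable section
namespace SG
open Equiv Topology

variable {m : ℕ}

abbrev VV (m : ℕ) : Type := Fin (m + 5) → ℝ
abbrev KM (m : ℕ) : Type := KK (m + 5) (m + 4)

/-- proper nonempty subsets -/
abbrev PS (m : ℕ) : Type := {A : Finset (Fin (m + 5)) // A.Nonempty ∧ Aᶜ.Nonempty}

def nr (m : ℕ) : ℝ := (m : ℝ) + 5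

theorem nr_ge (m : ℕ) : 5 ≤ nr m := by unfold nr; linarith [(Nat.cast_nonneg m : (0 : ℝ) ≤ m)]

/-- pull back of a proper subset -/
def pmS (π : Perm (Fin (m + 5))) (A : PS m) : PS m :=
  ⟨pm π A.1, by
    obtain ⟨a, ha⟩ := A.2.1
    exact ⟨π⁻¹ a, by simpa using ha⟩, by
    obtain ⟨a, ha⟩ := A.2.2
    exact ⟨π⁻¹ a, by simpa using ha⟩⟩

@[simp] theorem mem_pmS {π : Perm (Fin (m + 5))} {A : PS m} {i} : i ∈ (pmS π A).1 ↔ π i ∈ A.1 :=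
  mem_pm

theorem pmS_mul (π σ : Perm (Fin (m + 5))) (A : PS m) : pmS σ (pmS π A) = pmS (π * σ) A := by
  apply Subtype.ext; ext i; simp

theorem pmS_one (A : PS m) : pmS 1 A = A := by
  apply Subtype.ext; ext i; simp

def pmE (π : Perm (Fin (m + 5))) : PS m ≃ PS m where
  toFun := pmS π
  invFun := pmS π⁻¹
  left_inv A := by rw [pmS_mul]; simp [pmS_one]
  right_inv A := by rw [pmS_mul]; simp [pmS_one]

def prs (A : PS m) : Finset (Fin (m + 5) × Fin (m + 5)) := A.1 ×ˢ A.1ᶜ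

theorem prs_nonempty (A : PS m) : (prs A).Nonempty := A.2.1.product A.2.2

theorem mem_prs {A : PS m} {p} : p ∈ prs A ↔ p.1 ∈ A.1 ∧ p.2 ∉ A.1 := by
  simp [prs]

def gap (A : PS m) (x : VV m) : ℝ := (prs A).inf' (prs_nonempty A) (fun p => x p.2 - x p.1)

theorem le_gap {A : PS m} {x : VV m} {c : ℝ} :
    c ≤ gap A x ↔ ∀ k ∈ A.1, ∀ l ∉ A.1, c ≤ x l - x k := by
  simp only [gap, Finset.le_inf'_iff, mem_prs, Prod.forall]
  tauto

theorem lt_gap {A : PS m} {x : VV m} {c : ℝ} :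
    c < gap A x ↔ ∀ k ∈ A.1, ∀ l ∉ A.1, c < x l - x k := by
  simp only [gap, Finset.lt_inf'_iff, mem_prs, Prod.forall]
  tauto

theorem gap_le {A : PS m} {x : VV m} {k l} (hk : k ∈ A.1) (hl : l ∉ A.1) : gap A x ≤ x l - x k :=
  le_gap.1 le_rfl k hk l hl

theorem exists_gap (A : PS m) (x : VV m) : ∃ k ∈ A.1, ∃ l ∉ A.1, gap A x = x l - x k := by
  obtain ⟨p, hp, h⟩ := Finset.exists_mem_eq_inf' (prs_nonempty A) (fun p => x p.2 - x p.1)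
  rw [mem_prs] at hp
  exact ⟨p.1, hp.1, p.2, hp.2, h⟩

theorem continuous_gap (A : PS m) : Continuous (gap A) := by
  unfold gap
  apply Continuous.finset_inf'_apply
  intro p _
  fun_prop

theorem univ2_nonempty : (Finset.univ : Finset (Fin (m + 5) × Fin (m + 5))).Nonempty :=
  Finset.univ_nonempty

open Classical in
def spr (A : PS m) (x : VV m) : ℝ := (Finset.univ : Finset (Fin (m + 5) × Fin (m + 5))).sup'
  univ2_nonempty (fun p => if (p.1 ∈ A.1 ↔ p.2 ∈ A.1) then x p.1 - x p.2 else 0)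

def spread (x : VV m) : ℝ := (Finset.univ : Finset (Fin (m + 5) × Fin (m + 5))).sup'
  univ2_nonempty (fun p => x p.1 - x p.2)

theorem spr_nonneg (A : PS m) (x : VV m) : 0 ≤ spr A x := by
  classical
  unfold spr
  refine le_trans ?_ (Finset.le_sup' _ (Finset.mem_univ (0, 0)))
  simp

theorem spread_nonneg (x : VV m) : 0 ≤ spread x := by
  unfold spread
  refine le_trans ?_ (Finset.le_sup' _ (Finset.mem_univ (0, 0)))
  simp

theorem le_spread (x : VV m) (i j) : x i - x j ≤ spread x :=
  Finset.le_sup' (f := fun p : Fin (m + 5) × Fin (m + 5) => x p.1 - x p.2) (Finset.mem_univ (i, j))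

theorem abs_le_spread (x : VV m) (i j) : |x i - x j| ≤ spread x := by
  rw [abs_le]; constructor <;> linarith [le_spread x i j, le_spread x j i]

theorem exists_spread (x : VV m) : ∃ i j, spread x = x i - x j := by
  obtain ⟨p, hp, h⟩ := Finset.exists_mem_eq_sup' univ2_nonempty
    (fun p : Fin (m + 5) × Fin (m + 5) => x p.1 - x p.2)
  exact ⟨p.1, p.2, h⟩

theorem le_spr {A : PS m} (x : VV m) {i j} (h : i ∈ A.1 ↔ j ∈ A.1) : x i - x j ≤ spr A x := by
  classical
  unfold spr
  refine le_trans ?_ (Finset.le_sup' _ (Finset.mem_univ (i, j)))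
  simp [h]

theorem abs_le_spr {A : PS m} (x : VV m) {i j} (h : i ∈ A.1 ↔ j ∈ A.1) :
    |x i - x j| ≤ spr A x := by
  rw [abs_le]; constructor <;> linarith [le_spr x h, le_spr x h.symm]

theorem exists_spr (A : PS m) (x : VV m) :
    ∃ i j, (i ∈ A.1 ↔ j ∈ A.1) ∧ spr A x = x i - x j := by
  classical
  obtain ⟨p, hp, h⟩ := Finset.exists_mem_eq_sup' univ2_nonempty
    (fun p : Fin (m + 5) × Fin (m + 5) => if (p.1 ∈ A.1 ↔ p.2 ∈ A.1) then x p.1 - x p.2 else 0)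
  by_cases hp : (p.1 ∈ A.1 ↔ p.2 ∈ A.1)
  · exact ⟨p.1, p.2, hp, by unfold spr; rw [h, if_pos hp]⟩
  · exact ⟨0, 0, Iff.rfl, by unfold spr; rw [h, if_neg hp]; simp⟩

theorem spr_le {A : PS m} {x : VV m} {c : ℝ}
    (h : ∀ i j, (i ∈ A.1 ↔ j ∈ A.1) → x i - x j ≤ c) : spr A x ≤ c := by
  obtain ⟨i, j, hij, e⟩ := exists_spr A x
  rw [e]; exact h i j hij

theorem spread_le {x : VV m} {c : ℝ} (h : ∀ i j, x i - x j ≤ c) : spread x ≤ c := by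
  obtain ⟨i, j, e⟩ := exists_spread x
  rw [e]; exact h i j

theorem continuous_spr (A : PS m) : Continuous (spr A) := by
  classical
  unfold spr
  apply Continuous.finset_sup'_apply
  intro p _
  split_ifs <;> fun_prop

theorem continuous_spread : Continuous (spread (m := m)) := by
  unfold spread
  apply Continuous.finset_sup'_apply
  intro p _
  fun_prop

theorem spread_le_gap_spr (A : PS m) (x : VV m) (h : 0 ≤ gap A x) :
    spread x ≤ gap A x + 2 * spr A x := by
  obtain ⟨k, hk, l, hl, e⟩ := exists_gap A x
  have h0 := spr_nonneg A x
  apply spread_le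
  intro i j
  by_cases hi : i ∈ A.1 <;> by_cases hj : j ∈ A.1
  · linarith [le_spr x (show i ∈ A.1 ↔ j ∈ A.1 by tauto)]
  · linarith [gap_le (x := x) hi hj]
  · have h1 := le_spr x (show i ∈ A.1 ↔ l ∈ A.1 by tauto)
    have h2 := le_spr x (show k ∈ A.1 ↔ j ∈ A.1 by tauto)
    linarith
  · linarith [le_spr x (show i ∈ A.1 ↔ j ∈ A.1 by tauto)]

/-- two different sets with positive gaps -/
theorem gap_spr {A A' : PS m} (hne : A ≠ A') {x : VV m} (h' : 0 ≤ gap A' x) :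
    gap A x ≤ spr A' x ∨ gap A' x ≤ spr A x := by
  by_contra hcon
  push Not at hcon
  obtain ⟨h1, h2⟩ := hcon
  have key : ∀ i j, i ∈ A.1 → j ∉ A.1 → i ∈ A'.1 ∧ j ∉ A'.1 := by
    intro i j hi hj
    have hg := gap_le (x := x) hi hj
    by_cases hi' : i ∈ A'.1 <;> by_cases hj' : j ∈ A'.1
    · exact absurd (le_spr x (show j ∈ A'.1 ↔ i ∈ A'.1 by tauto)) (by linarith)
    · exact ⟨hi', hj'⟩
    · have := gap_le (x := x) hj' hi'
      have := spr_nonneg A' x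
      linarith
    · exact absurd (le_spr x (show j ∈ A'.1 ↔ i ∈ A'.1 by tauto)) (by linarith)
  apply hne
  obtain ⟨a, ha⟩ := A.2.1
  obtain ⟨b, hb⟩ := A.2.2
  rw [Finset.mem_compl] at hb
  apply Subtype.ext
  ext i
  constructor
  · intro hi; exact (key i b hi hb).1
  · intro hi; by_contra hi'; exact (key a i ha hi').2 hi

theorem GAP {x : VV m} {i j} {h : ℝ} (hh : 0 ≤ h) (hx : nr m * h < x j - x i) :
    ∃ A : PS m, h < gap A x ∧ i ∈ A.1 ∧ j ∉ A.1 := by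
  by_contra hcon
  push Not at hcon
  have hk : ∀ k : Fin (m + 5), ∃ l, x i + k * h < x l ∧ x l ≤ x i + k * h + h := by
    intro k
    by_contra hc
    push Not at hc
    have hkn : (k : ℝ) ≤ nr m := by
      unfold nr
      have : (k : ℕ) ≤ m + 5 := k.2.le
      exact_mod_cast this
    have hkh : (k : ℝ) * h ≤ nr m * h := mul_le_mul_of_nonneg_right hkn hh
    have hk0 : 0 ≤ (k : ℝ) * h := by positivity
    let A : Finset (Fin (m + 5)) := Finset.univ.filter (fun l => x l ≤ x i + k * h)
    have hi : i ∈ A := by simp [A, hk0]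
    have hj : j ∉ A := by simp only [A, Finset.mem_filter, Finset.mem_univ, true_and]; linarith
    refine hcon ⟨A, ⟨i, hi⟩, ⟨j, by simpa using hj⟩⟩ ?_ hi |> hj
    rw [lt_gap]
    intro a ha b hb
    simp only [A, Finset.mem_filter, Finset.mem_univ, true_and, not_le] at ha hb
    have := hc b hb
    linarith
  choose l hl hl' using hk
  have hinj : Function.Injective l := by
    have : ∀ a b : Fin (m + 5), a < b → l a ≠ l b := by
      intro a b hab e
      have h1 := hl' a
      have h2 := hl b
      rw [e] at h1
      have : (a : ℝ) + 1 ≤ b := by exact_mod_cast hab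
      nlinarith
    intro a b e
    rcases lt_trichotomy a b with hab | hab | hab
    · exact absurd e (this a b hab)
    · exact hab
    · exact absurd e.symm (this b a hab)
  obtain ⟨k, hk⟩ := (Finite.injective_iff_surjective.1 hinj) i
  have := hl k
  rw [hk] at this
  have : 0 ≤ (k : ℝ) * h := by positivity
  linarith

theorem gap_pmS (π : Perm (Fin (m + 5))) (A : PS m) (x : VV m) :
    gap (pmS π A) (x ∘ π) = gap A x := by
  apply le_antisymm
  · rw [le_gap]; intro k hk l hl
    have := gap_le (A := pmS π A) (x := x ∘ π) (k := π⁻¹ k) (l := π⁻¹ l) (by simpa) (by simpa)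
    simpa using this
  · rw [le_gap]; intro k hk l hl
    exact gap_le (x := x) (by simpa using hk) (by simpa using hl)

theorem spr_pmS (π : Perm (Fin (m + 5))) (A : PS m) (x : VV m) :
    spr (pmS π A) (x ∘ π) = spr A x := by
  apply le_antisymm
  · apply spr_le; intro i j h
    exact le_spr x (by simpa using h)
  · apply spr_le; intro i j h
    have := le_spr (A := pmS π A) (x ∘ π) (i := π⁻¹ i) (j := π⁻¹ j) (by simpa using h)
    simpa using this

/-- truncated differences -/
def tr (x : VV m) (k l : Fin (m + 5)) : ℝ := max 0 (min 4 (x l - x k))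

theorem continuous_tr (k l) : Continuous (fun x : VV m => tr x k l) := by
  unfold tr; fun_prop

def tgap (A : PS m) (x : VV m) : ℝ := (prs A).inf' (prs_nonempty A) (fun p => tr x p.1 p.2)

theorem le_tgap {A : PS m} {x : VV m} {c : ℝ} :
    c ≤ tgap A x ↔ ∀ k ∈ A.1, ∀ l ∉ A.1, c ≤ tr x k l := by
  simp only [tgap, Finset.le_inf'_iff, mem_prs, Prod.forall]
  tauto

theorem continuous_tgap (A : PS m) : Continuous (tgap A) := by
  unfold tgap
  apply Continuous.finset_inf'_apply
  intro p _
  exact continuous_tr _ _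

open Classical in
def ppr (m : ℕ) : Finset (PS m × PS m) := Finset.univ.filter (fun p => p.1 ≠ p.2)

def sing (i : Fin (m + 5)) : PS m := ⟨{i}, ⟨i, by simp⟩, ⟨i + 1, by simp⟩⟩

theorem ppr_nonempty (m : ℕ) : (ppr m).Nonempty := by
  refine ⟨(sing 0, sing 1), ?_⟩
  simp [ppr, sing]

theorem mem_ppr {p : PS m × PS m} : p ∈ ppr m ↔ p.1 ≠ p.2 := by simp [ppr]

def bb (x : VV m) : ℝ := (ppr m).sup' (ppr_nonempty m) (fun p => min (tgap p.1 x) (tgap p.2 x))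

theorem le_bb {x : VV m} {A A' : PS m} (h : A ≠ A') {c : ℝ} (h1 : c ≤ tgap A x)
    (h2 : c ≤ tgap A' x) : c ≤ bb x :=
  le_trans (le_min h1 h2) (Finset.le_sup' (f := fun p : PS m × PS m =>
    min (tgap p.1 x) (tgap p.2 x)) (b := (A, A')) (mem_ppr.2 h))

theorem exists_bb (x : VV m) : ∃ A A' : PS m, A ≠ A' ∧ bb x ≤ tgap A x ∧ bb x ≤ tgap A' x := by
  obtain ⟨p, hp, h⟩ := Finset.exists_mem_eq_sup' (ppr_nonempty m)
    (fun p => min (tgap p.1 x) (tgap p.2 x))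
  refine ⟨p.1, p.2, mem_ppr.1 hp, ?_, ?_⟩
  · unfold bb; rw [h]; exact min_le_left _ _
  · unfold bb; rw [h]; exact min_le_right _ _

theorem continuous_bb : Continuous (bb (m := m)) := by
  unfold bb
  apply Continuous.finset_sup'_apply
  intro p _
  exact (continuous_tgap _).min (continuous_tgap _)

theorem le_tgap_of_gap {A : PS m} {x : VV m} {c : ℝ} (hc : c ≤ 4) (h : c ≤ gap A x) :
    c ≤ tgap A x := by
  rw [le_tgap]; intro k hk l hl
  exact le_max_of_le_right (le_min hc (h.trans (gap_le hk hl)))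

theorem three_le_bb {A : PS m} {x : VV m} (h : 3 ≤ gap A x) (hs : 3 * nr m < spr A x) :
    3 ≤ bb x := by
  obtain ⟨i, j, hij, e⟩ := exists_spr A x
  obtain ⟨A', h1, h2, h3⟩ := GAP (x := x) (i := j) (j := i) (h := 3) (by norm_num) (by linarith)
  refine le_bb (A := A) (A' := A') ?_ (le_tgap_of_gap (by norm_num) h)
    (le_tgap_of_gap (by norm_num) h1.le)
  rintro rfl
  tauto

theorem tgap_congr {x x' : VV m} (h : ∀ k l, tr x k l = tr x' k l) (A : PS m) :
    tgap A x = tgap A x' := by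
  unfold tgap; simp only [h]

theorem bb_congr {x x' : VV m} (h : ∀ k l, tr x k l = tr x' k l) : bb x = bb x' := by
  unfold bb; simp only [tgap_congr h]

theorem tgap_pmS (π : Perm (Fin (m + 5))) (A : PS m) (x : VV m) :
    tgap (pmS π A) (x ∘ π) = tgap A x := by
  apply le_antisymm
  · rw [le_tgap]; intro k hk l hl
    have := le_tgap.1 (le_refl (tgap (pmS π A) (x ∘ π))) (π⁻¹ k) (by simpa) (π⁻¹ l) (by simpa)
    simpa [tr] using this
  · rw [le_tgap]; intro k hk l hl
    exact le_tgap.1 (le_refl (tgap A x)) (π k) (by simpa using hk) (π l) (by simpa using hl)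

theorem bb_comp (π : Perm (Fin (m + 5))) (x : VV m) : bb (x ∘ π) = bb x := by
  have main : ∀ (π : Perm (Fin (m + 5))) (x : VV m), bb x ≤ bb (x ∘ π) := by
    intro π x
    obtain ⟨A, A', hne, h1, h2⟩ := exists_bb x
    refine le_bb (A := pmS π A) (A' := pmS π A') ?_ ?_ ?_
    · exact fun e => hne ((pmE π).injective e)
    · rwa [tgap_pmS]
    · rwa [tgap_pmS]
  apply le_antisymm
  · have := main π⁻¹ (x ∘ π)
    have e : (x ∘ π) ∘ ⇑π⁻¹ = x := by funext i; simp
    rwa [e] at this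
  · exact main π x

end SG
end

noncomputable section
namespace SG
open Equiv Topology

variable {m : ℕ}

def qa (x : VV m) (θ : ℝ) (k l : Fin (m + 5)) : Prop := θ < tr x k l

theorem qa_asym (x : VV m) {θ : ℝ} (hθ : 0 ≤ θ) : Asym (qa x θ) := by
  intro k l h h'
  unfold qa tr at *
  rcases lt_max_iff.1 h with h | h
  · linarith
  rcases lt_max_iff.1 h' with h' | h'
  · linarith
  have h1 := (lt_min_iff.1 h).2
  have h2 := (lt_min_iff.1 h').2
  linarith

theorem qa_iff {x : VV m} {θ : ℝ} (hθ : θ ∈ Set.Ioo (1 : ℝ) 2) {k l} :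
    qa x θ k l ↔ θ < x l - x k := by
  unfold qa tr
  obtain ⟨h1, h2⟩ := hθ
  rw [lt_max_iff, lt_min_iff]
  constructor
  · rintro (h | h)
    · linarith
    · exact h.2
  · intro h; right; exact ⟨by linarith, h⟩

open Classical in
def dat (j : PS m) (x : VV m) (θ : ℝ) : Fin (m + 4) × Perm (Fin (m + 5)) :=
  if 4 ≤ bb x + θ then
    (⟨cnt (qa x θ) - 3, by have := cnt_le (qa x θ); omega⟩, lab (qa x θ))
  else
    (⟨cnt (QJ j.1 (qa x θ)) - 2, by have := cnt_le (QJ j.1 (qa x θ)); omega⟩,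
      lab (QJ j.1 (qa x θ)))

theorem dat_pos {j : PS m} {x : VV m} {θ : ℝ} (h : 4 ≤ bb x + θ) : dat j x θ =
    (⟨cnt (qa x θ) - 3, by have := cnt_le (qa x θ); omega⟩, lab (qa x θ)) := if_pos h

theorem dat_neg {j : PS m} {x : VV m} {θ : ℝ} (h : ¬ 4 ≤ bb x + θ) : dat j x θ =
    (⟨cnt (QJ j.1 (qa x θ)) - 2, by have := cnt_le (QJ j.1 (qa x θ)); omega⟩,
      lab (QJ j.1 (qa x θ))) := if_neg h

theorem dat_congr {j : PS m} {x x' : VV m} {θ θ' : ℝ} (hq : ∀ k l, qa x θ k l ↔ qa x' θ' k l)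
    (hb : 4 ≤ bb x + θ ↔ 4 ≤ bb x' + θ') : dat j x θ = dat j x' θ' := by
  have : qa x θ = qa x' θ' := by funext k l; exact propext (hq k l)
  unfold dat
  simp only [this, hb]

theorem dat_locconst (j : PS m) (x : VV m) : ∃ F : Set ℝ, F.Finite ∧
    ∀ θ ∈ Set.Ioo (1 : ℝ) 2, θ ∉ F → ∀ᶠ p : VV m × ℝ in 𝓝 (x, θ), dat j p.1 p.2 = dat j x θ := by
  refine ⟨Set.range (fun q : Fin (m + 5) × Fin (m + 5) => tr x q.1 q.2) ∪ {4 - bb x},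
    (Set.finite_range _).union (Set.finite_singleton _), ?_⟩
  intro θ hθ hF
  have h1 : ∀ k l, θ ≠ tr x k l := by
    intro k l e; exact hF (Or.inl ⟨(k, l), e.symm⟩)
  have h2 : θ ≠ 4 - bb x := fun e => hF (Or.inr e)
  have e1 : ∀ᶠ p : VV m × ℝ in 𝓝 (x, θ), ∀ k l, (qa p.1 p.2 k l ↔ qa x θ k l) := by
    rw [Filter.eventually_all]; intro k
    rw [Filter.eventually_all]; intro l
    have hc1 : ContinuousAt (fun p : VV m × ℝ => tr p.1 k l) (x, θ) :=
      ((continuous_tr k l).comp continuous_fst).continuousAt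
    have hc2 : ContinuousAt (fun p : VV m × ℝ => p.2) (x, θ) := continuous_snd.continuousAt
    rcases lt_or_gt_of_ne (h1 k l) with h | h
    · filter_upwards [hc2.eventually_lt hc1 h] with p hp
      exact iff_of_true hp h
    · filter_upwards [hc1.eventually_lt hc2 h] with p hp
      exact iff_of_false (not_lt.2 (le_of_lt hp)) (not_lt.2 (le_of_lt h))
  have e2 : ∀ᶠ p : VV m × ℝ in 𝓝 (x, θ), (4 ≤ bb p.1 + p.2 ↔ 4 ≤ bb x + θ) := by
    have hc1 : ContinuousAt (fun p : VV m × ℝ => bb p.1 + p.2) (x, θ) :=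
      ((continuous_bb.comp continuous_fst).add continuous_snd).continuousAt
    have hc2 : ContinuousAt (fun p : VV m × ℝ => (4 : ℝ)) (x, θ) := continuousAt_const
    rcases lt_or_gt_of_ne h2 with h | h
    · filter_upwards [hc1.eventually_lt hc2 (by show bb x + θ < 4; linarith)] with p hp
      exact iff_of_false (not_le.2 hp) (not_le.2 (by linarith))
    · filter_upwards [hc2.eventually_lt hc1 (by show 4 < bb x + θ; linarith)] with p hp
      exact iff_of_true (le_of_lt hp) (by linarith)
  filter_upwards [e1, e2] with p h1 h2
  exact dat_congr h1 h2

theorem qa_mono {x : VV m} {θ θ' : ℝ} (h : θ' ≤ θ) (k l) (hq : qa x θ k l) : qa x θ' k l :=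
  lt_of_le_of_lt h hq

theorem cut_of_tgap {A : PS m} {x : VV m} {θ : ℝ} (h : θ < tgap A x) : Cut (qa x θ) A.1 :=
  fun k hk l hl => lt_of_lt_of_le h (le_tgap.1 le_rfl k hk l hl)

theorem three_le_cnt_qa {x : VV m} {θ : ℝ} (hθ : θ ∈ Set.Ioo (1 : ℝ) 2) (h : 4 ≤ bb x + θ) :
    3 ≤ cnt (qa x θ) := by
  obtain ⟨A, A', hne, h1, h2⟩ := exists_bb x
  have hb : θ < bb x := by linarith [hθ.2]
  exact three_le_cnt (qa_asym x (by linarith [hθ.1])) (cut_of_tgap (hb.trans_le h1))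
    (cut_of_tgap (hb.trans_le h2)) (fun e => hne (Subtype.ext e)) A.2.1 A.2.2 A'.2.1 A'.2.2

theorem two_le_cnt_QJ (j : PS m) (Q : Fin (m + 5) → Fin (m + 5) → Prop) :
    2 ≤ cnt (QJ j.1 Q) := by
  obtain ⟨a, ha⟩ := j.2.1
  obtain ⟨b, hb⟩ := j.2.2
  rw [Finset.mem_compl] at hb
  refine two_le_cnt (i := a) (j := b) fun h => hb ((h j.1 (cut_QJ j.1 Q)).1 ha)

theorem QJ_mono {J : Finset (Fin (m + 5))} {Q Q' : Fin (m + 5) → Fin (m + 5) → Prop}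
    (h : ∀ k l, Q k l → Q' k l) (k l) (hq : QJ J Q k l) : QJ J Q' k l := by
  rcases hq with hq | hq
  · exact Or.inl hq
  · exact Or.inr ⟨hq.1, h _ _ hq.2⟩

theorem dat_ok (j : PS m) (x : VV m) (θ : ℝ) (hθ : θ ∈ Set.Ioo (1 : ℝ) 2) (θ' : ℝ)
    (hθ' : θ' ∈ Set.Ioo (1 : ℝ) 2) (hle : θ' ≤ θ) (e : (dat j x θ).1 = (dat j x θ').1) :
    (dat j x θ).2 = (dat j x θ').2 := by
  have hp : (0 : ℝ) ≤ θ := by linarith [hθ.1]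
  have hp' : (0 : ℝ) ≤ θ' := by linarith [hθ'.1]
  by_cases h : 4 ≤ bb x + θ <;> by_cases h' : 4 ≤ bb x + θ'
  · rw [dat_pos h, dat_pos h'] at e ⊢
    have := three_le_cnt_qa hθ h
    have := three_le_cnt_qa hθ' h'
    simp only [Fin.mk.injEq] at e
    exact lab_eq_of_cnt (qa_asym x hp) (qa_asym x hp') (qa_mono hle) (by omega)
  · exfalso
    rw [dat_pos h, dat_neg h'] at e
    have h3 := three_le_cnt_qa hθ h
    have := two_le_cnt_QJ j (qa x θ')
    have h1 := cnt_le_of_refine (RR_mono (qa_mono (x := x) hle))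
    have h2 := cnt_le_of_refine (QJ_refine (J := j.1) (Q := qa x θ'))
    simp only [Fin.mk.injEq] at e
    omega
  · exfalso; linarith
  · rw [dat_neg h, dat_neg h'] at e ⊢
    have := two_le_cnt_QJ j (qa x θ')
    have := two_le_cnt_QJ j (qa x θ)
    simp only [Fin.mk.injEq] at e
    exact lab_eq_of_cnt (QJ_asym (qa_asym x hp)) (QJ_asym (qa_asym x hp'))
      (QJ_mono (qa_mono hle)) (by omega)

theorem dat_tame (j : PS m) (x : VV m) : Tame (dat j x) := (wt_continuous (dat_locconst j)).1 x

def EE (j : PS m) (x : VV m) : KM m := ⟨wt (dat j x), wt_mem (dat_tame j x) (dat_ok j x)⟩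

theorem continuous_EE (j : PS m) : Continuous (EE j) :=
  (wt_continuous (dat_locconst j)).2.subtype_mk _

theorem EE_congr {j : PS m} {x x' : VV m} (h : ∀ k l, tr x k l = tr x' k l) :
    EE j x = EE j x' := by
  apply Subtype.ext
  apply wt_congr
  intro θ hθ
  exact dat_congr (fun k l => by unfold qa; rw [h]) (by rw [bb_congr h])

theorem EE_indep {j j' : PS m} {x : VV m} (h : 3 ≤ bb x) : EE j x = EE j' x := by
  apply Subtype.ext
  apply wt_congr
  intro θ hθ
  have : 4 ≤ bb x + θ := by linarith [hθ.1]
  rw [dat_pos this, dat_pos this]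

def top : Fin (m + 4) := Fin.last (m + 3)

theorem EE_top {j : PS m} {x : VV m} (h : 3 ≤ bb x) (g) : (EE j x).1 (top, g) = 0 := by
  apply wt_eq_zero
  intro θ hθ
  have : 4 ≤ bb x + θ := by linarith [hθ.1]
  rw [dat_pos this]
  intro e
  have h1 := cnt_le (qa x θ)
  have h2 := congrArg (fun a => (a.1 : ℕ)) e
  simp [top] at h2
  omega

theorem RR_qa_le {x : VV m} {θ : ℝ} (hθ : θ ∈ Set.Ioo (1 : ℝ) 2) {i j} (h : RR (qa x θ) i j) :
    |x i - x j| ≤ 2 * nr m := by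
  have main : ∀ i j, RR (qa x θ) i j → x j - x i ≤ 2 * nr m := by
    intro i j h
    by_contra hc
    push Not at hc
    obtain ⟨A, h1, h2, h3⟩ := GAP (x := x) (i := i) (j := j) (h := 2) (by norm_num) (by linarith)
    refine h3 ((h A.1 ?_).1 h2)
    intro k hk l hl
    rw [qa_iff hθ]
    have := gap_le (x := x) hk hl
    linarith [hθ.2]
  rw [abs_le]
  constructor
  · linarith [main i j h]
  · linarith [main j i ((RR _).symm h)]

/-- permutation compatible with `x` at distance `M` -/
def MC (M : ℝ) (π : Perm (Fin (m + 5))) (x : VV m) : Prop :=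
  ∀ i j, i < j → π⁻¹ j < π⁻¹ i → M ≤ |x i - x j|

theorem MC.lt {M : ℝ} {π : Perm (Fin (m + 5))} {x : VV m} (h : MC M π x) {i j}
    (hij : i < j) (hx : |x i - x j| < M) : π⁻¹ i < π⁻¹ j := by
  rcases lt_trichotomy (π⁻¹ i) (π⁻¹ j) with h1 | h1 | h1
  · exact h1
  · exact absurd (π⁻¹.injective h1) hij.ne
  · exact absurd (h i j hij h1) (not_le.2 hx)

theorem dat_sym {M : ℝ} (hM : 2 * nr m < M) {π : Perm (Fin (m + 5))} {x : VV m} (h : MC M π x)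
    (j : PS m) {θ : ℝ} (hθ : θ ∈ Set.Ioo (1 : ℝ) 2) :
    dat j x θ = ((dat (pmS π j) (x ∘ π) θ).1, π * (dat (pmS π j) (x ∘ π) θ).2) := by
  have hp : (0 : ℝ) ≤ θ := by linarith [hθ.1]
  have hR : ∀ i k, RR (qa x θ) i k → i < k → π⁻¹ i < π⁻¹ k := fun i k hR hik =>
    h.lt hik (lt_of_le_of_lt (RR_qa_le hθ hR) hM)
  have hqa : qa (x ∘ π) θ = fun k l => qa x θ (π k) (π l) := rfl
  have hQJ : QJ (pmS π j).1 (qa (x ∘ π) θ) = fun k l => QJ j.1 (qa x θ) (π k) (π l) := by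
    funext k l
    unfold QJ
    simp only [mem_pmS, hqa]
  by_cases hb : 4 ≤ bb x + θ
  · have hb' : 4 ≤ bb (x ∘ π) + θ := by rwa [bb_comp]
    rw [dat_pos hb, dat_pos hb']
    refine Prod.ext ?_ ?_
    · simp only [hqa, cnt_comp]
    · simp only [hqa]
      exact lab_comp (qa_asym x hp) π hR
  · have hb' : ¬ 4 ≤ bb (x ∘ π) + θ := by rwa [bb_comp]
    rw [dat_neg hb, dat_neg hb']
    refine Prod.ext ?_ ?_
    · simp only [hQJ]
      simp only [cnt_comp (Q := QJ j.1 (qa x θ))]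
    · simp only [hQJ]
      exact lab_comp (QJ_asym (qa_asym x hp)) π (fun i k h' => hR i k (QJ_refine i k h'))

theorem EE_sym {M : ℝ} (hM : 2 * nr m < M) {π : Perm (Fin (m + 5))} {x : VV m} (h : MC M π x)
    (j : PS m) : EE j x = act π (EE (pmS π j) (x ∘ π)) := by
  classical
  apply Subtype.ext
  funext ⟨c, g⟩
  rw [act_apply]
  show wt (dat j x) (c, g) = wt (dat (pmS π j) (x ∘ π)) (c, π⁻¹ * g)
  unfold wt
  refine MeasureTheory.setIntegral_congr_fun measurableSet_Ioo (fun θ hθ => ?_)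
  have := dat_sym hM h j hθ
  simp only [this]
  congr 1
  rw [Prod.ext_iff, Prod.ext_iff]
  simp only [eq_inv_mul_iff_mul_eq]

end SG
end

noncomputable section
namespace SG
open Equiv Topology

variable {m : ℕ}

def LS (m : ℕ) : ℝ := 4 * nr m
def LD (m : ℕ) : ℝ := (1 + nr m) * LS m
def LX (m : ℕ) : ℝ := (3 + nr m) * LD m
def L1 (m : ℕ) : ℝ := nr m * LX m
def GC (m : ℕ) : ℝ := L1 m + 2

theorem LS_pos (m : ℕ) : 20 ≤ LS m := by unfold LS; linarith [nr_ge m]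
theorem LD_ge (m : ℕ) : 6 * LS m ≤ LD m := by
  unfold LD; nlinarith [nr_ge m, LS_pos m]
theorem LX_ge (m : ℕ) : 8 * LD m ≤ LX m := by
  unfold LX; nlinarith [nr_ge m, LS_pos m, LD_ge m]
theorem L1_ge (m : ℕ) : 5 * LX m ≤ L1 m := by
  unfold L1; nlinarith [nr_ge m, LS_pos m, LD_ge m, LX_ge m]
theorem L1_ge' (m : ℕ) : 100 * nr m ≤ L1 m := by
  unfold L1; nlinarith [nr_ge m, LS_pos m, LD_ge m, LX_ge m]

def cl01 (r : ℝ) : ℝ := max 0 (min 1 r)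
theorem cl01_nonneg (r : ℝ) : 0 ≤ cl01 r := le_max_left _ _
theorem cl01_le (r : ℝ) : cl01 r ≤ 1 := max_le zero_le_one (min_le_left _ _)
theorem cl01_zero {r : ℝ} (h : r ≤ 0) : cl01 r = 0 :=
  max_eq_left ((min_le_right _ _).trans h)
theorem cl01_one {r : ℝ} (h : 1 ≤ r) : cl01 r = 1 := by
  unfold cl01; rw [min_eq_left h]; exact max_eq_right zero_le_one
theorem cl01_pos {r : ℝ} (h : cl01 r ≠ 0) : 0 < r := by
  by_contra hc; exact h (cl01_zero (not_lt.1 hc))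
@[fun_prop] theorem continuous_cl01 : Continuous cl01 := by unfold cl01; fun_prop

def trap (m : ℕ) (r : ℝ) : ℝ := cl01 (r / nr m - 3) * cl01 (L1 m + 1 - r)

def tau (A : PS m) (x : VV m) : ℝ := cl01 (gap A x - GC m) * trap m (spr A x)

theorem continuous_tau (A : PS m) : Continuous (tau A) := by
  have := continuous_gap A
  have := continuous_spr A
  unfold tau trap
  fun_prop

theorem tau_nonneg (A : PS m) (x : VV m) : 0 ≤ tau A x :=
  mul_nonneg (cl01_nonneg _) (mul_nonneg (cl01_nonneg _) (cl01_nonneg _))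

theorem tau_le (A : PS m) (x : VV m) : tau A x ≤ 1 :=
  mul_le_one₀ (cl01_le _) (mul_nonneg (cl01_nonneg _) (cl01_nonneg _))
    (mul_le_one₀ (cl01_le _) (cl01_nonneg _) (cl01_le _))

theorem tau_ne {A : PS m} {x : VV m} (h : tau A x ≠ 0) :
    GC m < gap A x ∧ 3 * nr m < spr A x ∧ spr A x < L1 m + 1 := by
  unfold tau trap at h
  have h1 := cl01_pos (left_ne_zero_of_mul h)
  have h2 := cl01_pos (left_ne_zero_of_mul (right_ne_zero_of_mul h))
  have h3 := cl01_pos (right_ne_zero_of_mul (right_ne_zero_of_mul h))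
  refine ⟨by linarith, ?_, by linarith⟩
  have : 0 < nr m := by linarith [nr_ge m]
  have h4 : 3 < spr A x / nr m := by linarith
  exact (lt_div_iff₀ this).1 h4

theorem tau_one {A : PS m} {x : VV m} (h1 : GC m + 1 ≤ gap A x) (h2 : LS m ≤ spr A x)
    (h3 : spr A x ≤ L1 m) : tau A x = 1 := by
  have : 0 < nr m := by linarith [nr_ge m]
  unfold tau trap
  rw [cl01_one (by linarith), cl01_one, cl01_one (by linarith)]
  · norm_num
  · have : 4 ≤ spr A x / nr m := by rw [le_div_iff₀ this]; exact h2
    linarith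

theorem tau_other {A A' : PS m} (hne : A ≠ A') {x : VV m} (h : GC m < gap A x) (hs : spr A x ≤ GC m) :
    tau A' x = 0 := by
  by_contra hc
  obtain ⟨h1, h2, h3⟩ := tau_ne hc
  have h0 : 0 < GC m := by unfold GC; linarith [L1_ge' m, nr_ge m]
  have : L1 m + 2 = GC m := rfl
  rcases gap_spr hne (x := x) (by linarith) with h4 | h4 <;> linarith

theorem tau_unique {A A' : PS m} (hne : A ≠ A') {x : VV m} (h : tau A x ≠ 0) : tau A' x = 0 := by
  obtain ⟨h1, h2, h3⟩ := tau_ne h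
  exact tau_other hne h1 (by unfold GC; linarith)

theorem tau_bb {A : PS m} {x : VV m} (h : tau A x ≠ 0) : 3 ≤ bb x := by
  obtain ⟨h1, h2, h3⟩ := tau_ne h
  refine three_le_bb (A := A) ?_ h2
  unfold GC at h1
  linarith [L1_ge' m, nr_ge m]

theorem tau_pmS (π : Perm (Fin (m + 5))) (A : PS m) (x : VV m) :
    tau (pmS π A) (x ∘ π) = tau A x := by
  unfold tau; rw [gap_pmS, spr_pmS]

section
variable {n t : ℕ}
def delta (a : Fin t × Perm (Fin n)) : KK n t :=
  ⟨Pi.single a 1, fun b => by by_cases h : b = a <;> simp [h, Pi.single_apply], by simp,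
    fun c g h h1 h2 => by
      simp only [Pi.single_apply, ne_eq, ite_eq_right_iff, one_ne_zero, imp_false, not_not] at h1 h2
      have := h1.trans h2.symm
      simpa using this⟩

theorem act_delta (σ : Perm (Fin n)) (c : Fin t) (g) : act σ (delta (c, g)) = delta (c, σ * g) := by
  apply Subtype.ext
  funext ⟨d, h⟩
  rw [act_apply]
  simp only [delta, Pi.single_apply, Prod.mk.injEq, inv_mul_eq_iff_eq_mul]
end

def st0 : KM m := delta (top, 1)

def epw (j : PS m) (x : VV m) (a : Fin (m + 4) × Perm (Fin (m + 5))) : ℝ :=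
  (1 - ∑ A, tau A x) * (EE j x).1 a + ∑ A : PS m, tau A x * (delta (top, gg A.1)).1 a

theorem epw_of {A : PS m} {x : VV m} (h : ∀ A', A ≠ A' → tau A' x = 0) (j : PS m) (a) :
    epw j x a = (1 - tau A x) * (EE j x).1 a + tau A x * (delta (top, gg A.1)).1 a := by
  unfold epw
  rw [Finset.sum_eq_single A (fun B _ hB => h B hB.symm) (by simp),
    Finset.sum_eq_single A (fun B _ hB => by rw [h B hB.symm, zero_mul]) (by simp)]

theorem epw_zero {x : VV m} (h : ∀ A, tau A x = 0) (j : PS m) (a) :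
    epw j x a = (EE j x).1 a := by
  unfold epw; simp [h]

theorem epw_mem (j : PS m) (x : VV m) : epw j x ∈ KSet (m + 5) (m + 4) := by
  by_cases h : ∀ A, tau A x = 0
  · have : epw j x = (EE j x).1 := funext (epw_zero h j)
    rw [this]; exact (EE j x).2
  · push Not at h
    obtain ⟨A, hA⟩ := h
    have e := epw_of (fun A' hne => tau_unique hne hA) j
    have hb := tau_bb hA
    refine ⟨fun a => ?_, ?_, ?_⟩
    · rw [e]
      have h1 := (EE j x).2.1 a
      have h2 := (delta (t := m + 4) (top, gg A.1)).2.1 a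
      have h3 := tau_nonneg A x
      have h4 := tau_le A x
      have h5 : 0 ≤ 1 - tau A x := by linarith
      positivity
    · simp only [e]
      rw [Finset.sum_add_distrib, ← Finset.mul_sum, ← Finset.mul_sum, (EE j x).2.2.1,
        (delta (t := m + 4) (top, gg A.1)).2.2.1]
      ring
    · intro c g g' h1 h2
      rw [e] at h1 h2
      by_cases hc : c = top
      · subst hc
        rw [EE_top hb] at h1 h2
        refine (delta (t := m + 4) (top, gg A.1)).2.2.2 top g g' ?_ ?_
        · intro h0; apply h1; rw [h0]; ring
        · intro h0; apply h2; rw [h0]; ring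
      · have hd : ∀ g, (delta (t := m + 4) (top, gg A.1)).1 (c, g) = 0 := by
          intro g; simp [delta, Pi.single_apply, hc]
        rw [hd] at h1 h2
        refine (EE j x).2.2.2 c g g' ?_ ?_
        · intro h0; apply h1; rw [h0]; ring
        · intro h0; apply h2; rw [h0]; ring

def EP (j : PS m) (x : VV m) : KM m := ⟨epw j x, epw_mem j x⟩

theorem continuous_EP (j : PS m) : Continuous (EP j) := by
  apply Continuous.subtype_mk
  apply continuous_pi
  intro a
  unfold epw
  have h1 : Continuous (fun x => (EE j x).1 a) :=
    (continuous_apply a).comp (continuous_subtype_val.comp (continuous_EE j))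
  have h2 := fun A : PS m => continuous_tau A
  fun_prop

theorem EP_star {A : PS m} {x : VV m} (h1 : GC m + 1 ≤ gap A x) (h2 : LS m ≤ spr A x)
    (h3 : spr A x ≤ L1 m) (j : PS m) : EP j x = act (gg A.1) st0 := by
  have ht := tau_one h1 h2 h3
  apply Subtype.ext
  funext a
  show epw j x a = _
  rw [epw_of (A := A) (fun A' hne => tau_unique hne (by rw [ht]; norm_num)) j a, ht, st0, act_delta]
  simp

theorem EP_indep {x : VV m} (h : 3 ≤ bb x) (j j' : PS m) : EP j x = EP j' x := by
  apply Subtype.ext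
  funext a
  show epw j x a = epw j' x a
  unfold epw
  rw [EE_indep (j := j) (j' := j') h]

theorem tr_eq_four {x : VV m} {k l} (h : 4 ≤ x l - x k) : tr x k l = 4 := by
  unfold tr; rw [min_eq_left h]; simp
theorem tr_eq_zero {x : VV m} {k l} (h : x l - x k ≤ 0) : tr x k l = 0 := by
  unfold tr; exact max_eq_left ((min_le_right _ _).trans h)

theorem EP_inv {A : PS m} {x x' : VV m} (h : GC m + 1 ≤ gap A x) (h' : GC m + 1 ≤ gap A x')
    (hs : spr A x ≤ L1 m)
    (hd : ∀ i j, (i ∈ A.1 ↔ j ∈ A.1) → x i - x j = x' i - x' j) (j : PS m) :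
    EP j x = EP j x' := by
  have hG : 102 < GC m := by unfold GC; linarith [L1_ge' m, nr_ge m]
  have hs' : spr A x' = spr A x := by
    apply le_antisymm
    · apply spr_le; intro i j hij; rw [← hd i j hij]; exact le_spr x hij
    · apply spr_le; intro i j hij; rw [hd i j hij]; exact le_spr x' hij
  have hE : EE j x = EE j x' := by
    apply EE_congr
    intro k l
    by_cases hk : k ∈ A.1 <;> by_cases hl : l ∈ A.1
    · unfold tr; rw [hd l k (by tauto)]
    · rw [tr_eq_four, tr_eq_four]
      · linarith [gap_le (x := x') hk hl]
      · linarith [gap_le (x := x) hk hl]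
    · rw [tr_eq_zero, tr_eq_zero]
      · linarith [gap_le (x := x') hl hk]
      · linarith [gap_le (x := x) hl hk]
    · unfold tr; rw [hd l k (by tauto)]
  have ht : tau A x = tau A x' := by
    unfold tau
    rw [hs', cl01_one (by linarith), cl01_one (by linarith)]
  have hGC : GC m = L1 m + 2 := rfl
  apply Subtype.ext
  funext a
  show epw j x a = epw j x' a
  rw [epw_of (A := A) (fun A' hne => tau_other hne (by linarith) (by linarith)),
    epw_of (A := A) (fun A' hne => tau_other hne (by linarith) (by linarith)), hE, ht]

theorem EP_sym {M : ℝ} (hM : L1 m + 1 ≤ M) {π : Perm (Fin (m + 5))} {x : VV m} (h : MC M π x)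
    (j : PS m) : EP j x = act π (EP (pmS π j) (x ∘ π)) := by
  have hM2 : 2 * nr m < M := by linarith [L1_ge' m, nr_ge m]
  have hE := EE_sym hM2 h j
  apply Subtype.ext
  funext ⟨c, g⟩
  rw [act_apply]
  show epw j x (c, g) = epw (pmS π j) (x ∘ π) (c, π⁻¹ * g)
  unfold epw
  have h1 : ∑ A, tau A x = ∑ A, tau A (x ∘ π) := by
    refine Fintype.sum_equiv (pmE π) _ _ (fun A => ?_)
    exact (tau_pmS π A x).symm
  rw [h1, hE, act_apply]
  congr 1
  refine Fintype.sum_equiv (pmE π) _ _ (fun A => ?_)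
  show _ = tau (pmS π A) (x ∘ π) * _
  rw [tau_pmS]
  by_cases h0 : tau A x = 0
  · rw [h0]; simp
  · congr 1
    have hg : gg (pmS π A).1 = π⁻¹ * gg A.1 := by
      apply gg_pm
      intro i k hik hlt
      apply h.lt hlt
      have := abs_le_spr x hik
      have := tau_ne h0
      linarith
    show _ = (delta (top, gg (pmS π A).1)).1 (c, π⁻¹ * g)
    rw [hg, ← act_delta, act_apply]
    simp

end SG
end

noncomputable section
namespace SG
open Equiv Topology

variable {m : ℕ}

/-- positions of in-block consecutive pairs -/
abbrev NN (m a : ℕ) : Type := {i : Fin (m + 4) // (i : ℕ) + 1 ≠ a}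

/-- the chart of in-block consecutive differences -/
def chart (A : PS m) (x : VV m) (i : NN m A.1.card) : ℝ :=
  x (gg A.1 i.1.succ) - x (gg A.1 i.1.castSucc)

@[fun_prop] theorem continuous_chart (A : PS m) : Continuous (chart A) := by
  unfold chart; fun_prop

theorem chart_add (A : PS m) (x y : VV m) : chart A (x + y) = chart A x + chart A y := by
  funext i; simp [chart]; ring
theorem chart_smul (A : PS m) (s : ℝ) (x : VV m) : chart A (s • x) = s • chart A x := by
  funext i; simp [chart]; ring
theorem chart_sub (A : PS m) (x y : VV m) : chart A (x - y) = chart A x - chart A y := by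
  funext i; simp [chart]; ring

theorem pos_bound {v : VV m} {c : ℕ} {L : ℝ}
    (h : ∀ i : Fin (m + 4), (i : ℕ) + 1 ≠ c → |v i.succ - v i.castSucc| ≤ L) :
    ∀ (k : ℕ) (a b : Fin (m + 5)), (b : ℕ) = a + k → ((a : ℕ) < c ↔ (b : ℕ) < c) →
      |v b - v a| ≤ k * L := by
  intro k
  induction k with
  | zero =>
    intro a b hb _
    have : b = a := Fin.ext (by omega)
    subst this; simp
  | succ k ih =>
    intro a b hb hc
    have hb' : (b : ℕ) - 1 < m + 4 := by omega
    let i : Fin (m + 4) := ⟨(b : ℕ) - 1, hb'⟩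
    have hi : i.succ = b := Fin.ext (by simp [i]; omega)
    have hic : ((i.castSucc : Fin (m + 5)) : ℕ) = a + k := by simp [i]; omega
    have h1 := ih a i.castSucc hic (by rw [hic]; omega)
    have h2 := h i (by simp [i]; omega)
    rw [hi] at h2
    push_cast
    calc |v b - v a| = |(v b - v i.castSucc) + (v i.castSucc - v a)| := by congr 1; ring
      _ ≤ |v b - v i.castSucc| + |v i.castSucc - v a| := abs_add_le _ _
      _ ≤ (k + 1) * L := by linarith

theorem pos_bound' {v : VV m} {c : ℕ} {L : ℝ} (hL : 0 ≤ L)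
    (h : ∀ i : Fin (m + 4), (i : ℕ) + 1 ≠ c → |v i.succ - v i.castSucc| ≤ L)
    (a b : Fin (m + 5)) (hab : (a : ℕ) < c ↔ (b : ℕ) < c) : |v b - v a| ≤ nr m * L := by
  have main : ∀ a b : Fin (m + 5), a ≤ b → ((a : ℕ) < c ↔ (b : ℕ) < c) →
      |v b - v a| ≤ nr m * L := by
    intro a b hle hab
    have hle' : (a : ℕ) ≤ b := hle
    refine (pos_bound h ((b : ℕ) - a) a b (by omega) hab).trans ?_
    apply mul_le_mul_of_nonneg_right _ hL
    have : (b : ℕ) - (a : ℕ) ≤ m + 5 := by omega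
    unfold nr
    exact_mod_cast this
  rcases le_total a b with h1 | h1
  · exact main a b h1 hab
  · rw [abs_sub_comm]; exact main b a h1 hab.symm

theorem chart_spr {A : PS m} {x : VV m} {L : ℝ} (hL : 0 ≤ L) (h : ∀ i, |chart A x i| ≤ L) :
    spr A x ≤ nr m * L := by
  apply spr_le
  intro i j hij
  have := pos_bound' (v := x ∘ gg A.1) (c := A.1.card) hL (fun k hk => h ⟨k, hk⟩)
    ((gg A.1)⁻¹ j) ((gg A.1)⁻¹ i) (by rw [← gg_mem_iff, ← gg_mem_iff]; simp [hij])
  simp at this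
  exact (le_abs_self _).trans this

theorem gg_same (A : Finset (Fin (m + 5))) (i : NN m A.card) :
    gg A i.1.succ ∈ A ↔ gg A i.1.castSucc ∈ A := by
  rw [gg_mem_iff, gg_mem_iff]
  have := i.2
  simp only [Fin.val_succ, Fin.val_castSucc]
  omega

theorem chart_le_spr (A : PS m) (x : VV m) (i) : |chart A x i| ≤ spr A x :=
  abs_le_spr x (gg_same A.1 i)

theorem chart_inj {A : PS m} {x x' : VV m} (h : chart A x = chart A x') (i j)
    (hij : i ∈ A.1 ↔ j ∈ A.1) : x i - x j = x' i - x' j := by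
  have h1 : spr A (x - x') ≤ nr m * 0 :=
    chart_spr le_rfl (fun i => by rw [chart_sub, h]; simp)
  have h2 := abs_le_spr (x - x') hij
  have h3 : |(x - x') i - (x - x') j| ≤ 0 := by linarith
  have := abs_nonpos_iff.1 h3
  simp only [Pi.sub_apply] at this
  linarith

/-- the direction `c = (0,1,...,n-1)` -/
def cc (m : ℕ) : VV m := fun i => (i : ℕ)

theorem chart_cc_ge (A : PS m) (i) : 1 ≤ chart A (cc m) i := by
  have hlt : i.1.castSucc < i.1.succ := Fin.castSucc_lt_succ
  have h := gg_lt (A := A.1) hlt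
  have hs := gg_same A.1 i
  have h2 : gg A.1 i.1.castSucc < gg A.1 i.1.succ := by tauto
  unfold chart cc
  have : ((gg A.1 i.1.castSucc : Fin (m + 5)) : ℕ) + 1 ≤ (gg A.1 i.1.succ : Fin (m + 5)) := h2
  have : (((gg A.1 i.1.castSucc : Fin (m + 5)) : ℕ) : ℝ) + 1 ≤ ((gg A.1 i.1.succ : Fin (m + 5)) : ℕ) := by
    exact_mod_cast this
  linarith

theorem cc_diff (i j : Fin (m + 5)) : |cc m i - cc m j| ≤ nr m := by
  have h : ∀ i : Fin (m + 5), 0 ≤ cc m i ∧ cc m i ≤ nr m := by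
    intro i
    refine ⟨by simp [cc], ?_⟩
    unfold cc nr
    have := i.2.le
    exact_mod_cast this
  rw [abs_le]; constructor <;> linarith [h i, h j]

theorem chart_cc_le (A : PS m) (i) : chart A (cc m) i ≤ nr m :=
  (le_abs_self _).trans (cc_diff _ _)

/-- initial segment of the size of `A` -/
def seg (A : PS m) : PS m := pmS (gg A.1) A

theorem mem_seg {A : PS m} {i} : i ∈ (seg A).1 ↔ (i : ℕ) < A.1.card := by
  unfold seg; rw [mem_pmS, gg_mem_iff]

theorem gg_seg (A : PS m) : gg (seg A).1 = 1 := by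
  apply gg_unique
  intro a b hab
  have hab' : (a : ℕ) < b := hab
  simp only [Perm.one_apply, mem_seg]
  by_cases h : (b : ℕ) < A.1.card
  · right; exact ⟨by omega, hab⟩
  · by_cases h' : (a : ℕ) < A.1.card
    · left; exact ⟨h', h⟩
    · right; exact ⟨by omega, hab⟩

theorem card_seg (A : PS m) : (seg A).1.card = A.1.card := card_pm _ _

def jmp {a : ℕ} (q : NN m a → ℝ) : ℝ := GC m + 1 + 2 * (nr m * ∑ i, |q i|)

def dd {a : ℕ} (q : NN m a → ℝ) (i : Fin (m + 4)) : ℝ :=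
  if h : (i : ℕ) + 1 ≠ a then q ⟨i, h⟩ else jmp q

def Xs {a : ℕ} (q : NN m a → ℝ) : VV m := fun k => ∑ i : Fin (m + 4), if i.castSucc < k then dd q i else 0

theorem continuous_Xs {a : ℕ} : Continuous (Xs (m := m) (a := a)) := by
  unfold Xs
  apply continuous_pi
  intro k
  apply continuous_finsetSum
  intro i _
  split_ifs
  · unfold dd jmp
    split_ifs <;> fun_prop
  · fun_prop

theorem Xs_step {a : ℕ} (q : NN m a → ℝ) (i : Fin (m + 4)) :
    Xs q i.succ - Xs q i.castSucc = dd q i := by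
  unfold Xs
  rw [← Finset.sum_sub_distrib, Finset.sum_eq_single i]
  · simp
  · intro b _ hb
    have : (b.castSucc < i.succ) ↔ (b.castSucc < i.castSucc) := by
      have : (b : ℕ) ≠ i := fun h => hb (Fin.ext h)
      simp only [Fin.lt_def, Fin.val_castSucc, Fin.val_succ]
      omega
    simp [this]
  · simp

theorem Xs_gap (A : PS m) (q : NN m A.1.card → ℝ) : GC m + 1 ≤ gap (seg A) (Xs q) := by
  rw [le_gap]
  intro k hk l hl
  rw [mem_seg] at hk hl
  have hS : ∀ i, |q i| ≤ ∑ i, |q i| := fun i =>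
    Finset.single_le_sum (f := fun i => |q i|) (fun _ _ => abs_nonneg _) (Finset.mem_univ i)
  have hS0 : 0 ≤ ∑ i, |q i| := Finset.sum_nonneg fun _ _ => abs_nonneg _
  have hb := pos_bound' (v := Xs q) (c := A.1.card) hS0 (fun i hi => by
    rw [Xs_step, dd, dif_pos hi]; exact hS _)
  have hl' : (l : ℕ) < m + 5 := l.2
  let i : Fin (m + 4) := ⟨A.1.card - 1, by omega⟩
  have hi := Xs_step q i
  rw [dd, dif_neg (by simp [i]; omega)] at hi
  have ei : ((i.castSucc : Fin (m + 5)) : ℕ) = A.1.card - 1 := rfl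
  have ei' : ((i.succ : Fin (m + 5)) : ℕ) = A.1.card - 1 + 1 := rfl
  have h1 := hb i.castSucc k (by omega)
  have h2 := hb l i.succ (by omega)
  rw [abs_le] at h1 h2
  unfold jmp at hi
  linarith

theorem Xs_diff (A : PS m) (x : VV m) (q : NN m A.1.card → ℝ)
    (h : ∀ i, q i = x i.1.succ - x i.1.castSucc) (i j) (hij : i ∈ (seg A).1 ↔ j ∈ (seg A).1) :
    x i - x j = Xs q i - Xs q j := by
  rw [mem_seg, mem_seg] at hij
  have := pos_bound' (v := x - Xs q) (c := A.1.card) le_rfl (fun k hk => by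
    have := Xs_step q k
    rw [dd, dif_pos hk, h] at this
    simp only [Pi.sub_apply]
    rw [abs_nonpos_iff]
    linarith) j i hij.symm
  simp only [Pi.sub_apply] at this
  have := abs_nonpos_iff.1 (this.trans (by simp))
  linarith

theorem Xs_spr_le (A : PS m) {q : NN m A.1.card → ℝ} {L : ℝ} (hL : 0 ≤ L) (h : ∀ i, |q i| ≤ L) :
    spr (seg A) (Xs q) ≤ nr m * L := by
  apply spr_le
  intro i j hij
  rw [mem_seg, mem_seg] at hij
  refine (le_abs_self _).trans (pos_bound' (v := Xs q) (c := A.1.card) hL (fun k hk => ?_) j i hij.symm)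
  rw [Xs_step, dd, dif_pos hk]; exact h _

theorem Xs_le_spr (A : PS m) (q : NN m A.1.card → ℝ) (i) : |q i| ≤ spr (seg A) (Xs q) := by
  have h := Xs_step q i.1
  rw [dd, dif_pos i.2] at h
  have e : q ⟨i.1, i.2⟩ = q i := rfl
  rw [← e, ← h]
  apply abs_le_spr
  rw [mem_seg, mem_seg]
  have := i.2
  simp only [Fin.val_succ, Fin.val_castSucc]
  omega

def clp (m : ℕ) (r : ℝ) : ℝ := max (-LX m) (min (LX m) r)
@[fun_prop] theorem continuous_clp : Continuous (clp m) := by unfold clp; fun_prop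

theorem LX_pos (m : ℕ) : 0 < LX m := by linarith [LX_ge m, LD_ge m, LS_pos m]
theorem LS_le_LX (m : ℕ) : LS m < LX m := by linarith [LX_ge m, LD_ge m, LS_pos m]

theorem clp_abs (r : ℝ) : |clp m r| ≤ LX m := by
  have := LX_pos m
  unfold clp
  rw [abs_le]
  exact ⟨le_max_left _ _, max_le (by linarith) (min_le_left _ _)⟩

theorem clp_eq {r : ℝ} (h : |r| ≤ LX m) : clp m r = r := by
  rw [abs_le] at h
  unfold clp
  rw [min_eq_right h.2, max_eq_right h.1]

theorem clp_ge {r : ℝ} (h : LS m ≤ |r|) : LS m ≤ |clp m r| := by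
  by_cases h1 : |r| ≤ LX m
  · rwa [clp_eq h1]
  · have := LX_pos m
    have hh := LS_le_LX m
    push Not at h1
    unfold clp
    rcases lt_abs.1 h1 with h2 | h2
    · rw [min_eq_left h2.le, max_eq_right (by linarith), abs_of_pos this]; linarith
    · rw [min_eq_right (by linarith), max_eq_left (by linarith), abs_neg, abs_of_pos]
      · linarith
      · linarith

def FF (j : PS m) (a : ℕ) (q : NN m a → ℝ) : KM m := EP j (Xs (fun i => clp m (q i)))

theorem continuous_FF (j : PS m) (a : ℕ) : Continuous (FF j a) := by
  unfold FF
  exact (continuous_EP j).comp (continuous_Xs.comp (by fun_prop))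

theorem FF_supp (j : PS m) (A : PS m) (q : NN m A.1.card → ℝ) (i) (hi : LS m ≤ |q i|) :
    FF j A.1.card q = st0 := by
  unfold FF
  rw [EP_star (A := seg A) (Xs_gap A _), gg_seg, act_one]
  · exact (clp_ge hi).trans (Xs_le_spr A (fun i => clp m (q i)) i)
  · exact Xs_spr_le A (LX_pos m).le (fun i => clp_abs _)

theorem gg_MC {A : PS m} {x : VV m} : MC (gap A x) (gg A.1) x := by
  intro i j hij hlt
  have := gg_lt (A := A.1) hlt
  simp at this
  rcases this with h | h
  · exact (gap_le h.1 h.2).trans (le_abs_self _)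
  · exact absurd h.2 (not_lt.2 hij.le)

theorem EP_real (j : PS m) (A : PS m) (x : VV m) (h1 : GC m + 1 ≤ gap A x) (h2 : spr A x ≤ L1 m) :
    EP j x = act (gg A.1) (FF (pmS (gg A.1) j) A.1.card (chart A x)) := by
  have hGC : GC m = L1 m + 2 := rfl
  rw [EP_sym (M := gap A x) (by linarith) gg_MC j]
  congr 1
  have e1 : gap (seg A) (x ∘ gg A.1) = gap A x := gap_pmS _ _ _
  have e2 : spr (seg A) (x ∘ gg A.1) = spr A x := spr_pmS _ _ _
  by_cases h : ∀ i, |chart A x i| ≤ LX m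
  · unfold FF
    apply EP_inv (A := seg A)
    · rw [e1]; exact h1
    · exact Xs_gap A _
    · rw [e2]; exact h2
    · apply Xs_diff
      intro i
      rw [clp_eq (h i)]
      rfl
  · push Not at h
    obtain ⟨i, hi⟩ := h
    rw [FF_supp _ A _ i (by linarith [LS_le_LX m])]
    rw [EP_star (A := seg A), gg_seg, act_one]
    · rw [e1]; exact h1
    · rw [e2]; linarith [LS_le_LX m, chart_le_spr A x i]
    · rw [e2]; exact h2

end SG
end

noncomputable section
namespace SG
open Equiv Topology

variable {m : ℕ}

theorem glue {X Y ι : Type*} [TopologicalSpace X] [TopologicalSpace Y] [Finite ι]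
    (C : ι → Set X) (g : ι → X → Y) (hC : ∀ i, IsClosed (C i)) (hcov : ∀ x, ∃ i, x ∈ C i)
    (hg : ∀ i, ContinuousOn (g i) (C i)) (hag : ∀ i j x, x ∈ C i → x ∈ C j → g i x = g j x) :
    ∃ G : X → Y, Continuous G ∧ ∀ i x, x ∈ C i → G x = g i x := by
  choose k hk using hcov
  refine ⟨fun x => g (k x) x, ?_, fun i x hx => hag _ _ x (hk x) hx⟩
  refine (locallyFinite_of_finite C).continuous ?_ hC ?_
  · rw [Set.eq_univ_iff_forall]; intro x; exact Set.mem_iUnion.2 ⟨k x, hk x⟩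
  · intro i
    exact (hg i).congr fun x hx => hag _ _ x (hk x) hx

abbrev Fam (m : ℕ) : Type := ∀ A : PS m, (NN m A.1.card → ℝ) → KM m

def SuppF (L : ℝ) (f : Fam m) : Prop := ∀ A q i, L ≤ |q i| → f A q = st0

theorem SuppF.mono {L L' : ℝ} {f : Fam m} (h : SuppF L f) (hL : L ≤ L') : SuppF L' f :=
  fun A q i hi => h A q i (hL.trans hi)

def ap (x : VV m) : KM m := EP (sing 0) x

structure RealF (Ψ : VV m → KM m) (f : Fam m) (R : ℝ) : Prop where
  r1 : ∀ A x, R ≤ gap A x → spr A x ≤ L1 m → Ψ x = act (gg A.1) (f A (chart A x))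
  r2 : ∀ x, R ≤ spread x → (∀ A, 0 < gap A x → L1 m ≤ spr A x) → Ψ x = ap x

theorem RealF.mono {Ψ : VV m → KM m} {f : Fam m} {R R' : ℝ} (h : RealF Ψ f R) (hR : R ≤ R') :
    RealF Ψ f R' :=
  ⟨fun A x h1 => h.r1 A x (hR.trans h1), fun x h1 => h.r2 x (hR.trans h1)⟩

def ExtF (f : Fam m) : Prop := ∃ Ψ R, Continuous Ψ ∧ RealF Ψ f R

theorem ext_EP (j : PS m) : ExtF (fun A => FF (pmS (gg A.1) j) A.1.card) := by
  refine ⟨EP j, GC m + 1, continuous_EP j, ⟨fun A x => EP_real j A x, ?_⟩⟩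
  intro x h1 h2
  apply EP_indep
  have hGC : GC m = L1 m + 2 := rfl
  obtain ⟨i, k, e⟩ := exists_spread x
  obtain ⟨A, h3, -⟩ := GAP (x := x) (i := k) (j := i) (h := 3) (by norm_num)
    (by linarith [L1_ge' m, nr_ge m])
  exact three_le_bb h3.le (by linarith [h2 A (by linarith), L1_ge' m, nr_ge m])

instance (a : ℕ) : Nontrivial (NN m a) := by
  by_cases h1 : a = 1
  · exact ⟨⟨⟨1, by omega⟩, by simp [h1]⟩, ⟨⟨2, by omega⟩, by simp [h1]⟩, by simp⟩
  · by_cases h2 : a = 2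
    · exact ⟨⟨⟨0, by omega⟩, by simp [h2]⟩, ⟨⟨2, by omega⟩, by simp [h2]⟩, by simp⟩
    · exact ⟨⟨⟨0, by omega⟩, by simp; omega⟩, ⟨⟨1, by omega⟩, by simp; omega⟩, by simp⟩

theorem chart_spr_lt {A : PS m} {x : VV m} {L : ℝ} (h : ∀ i, |chart A x i| < L) :
    spr A x < nr m * L := by
  obtain ⟨i, hi⟩ := Finite.exists_max (fun i => |chart A x i|)
  have h1 := chart_spr (abs_nonneg _) hi
  have := h i
  nlinarith [nr_ge m]

theorem exists_big {A : PS m} {x : VV m} (h : L1 m ≤ spr A x) : ∃ i, LX m ≤ |chart A x i| := by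
  by_contra hc
  push Not at hc
  have := chart_spr_lt hc
  unfold L1 at h
  linarith

theorem disjZ {A A' : PS m} {x : VV m} (h1 : L1 m < gap A x) (h1' : spr A x ≤ L1 m)
    (h2 : L1 m < gap A' x) (h2' : spr A' x ≤ L1 m) : A = A' := by
  by_contra hne
  have := L1_ge' m
  have := nr_ge m
  rcases gap_spr hne (x := x) (by linarith) with h | h <;> linarith

theorem N1 (H : ∀ A : PS m, ℝ × (NN m A.1.card → ℝ) → KM m) (hH : ∀ A, Continuous (H A))
    (hs : ∀ τ, SuppF (LX m) (fun A q => H A (τ, q)))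
    (h0 : ExtF (fun A q => H A (0, q))) : ExtF (fun A q => H A (1, q)) := by
  obtain ⟨Ψ, R0, hΨ, hR0⟩ := h0
  obtain ⟨R, hR1, hR2⟩ : ∃ R, R0 ≤ R ∧ L1 m < R := ⟨max R0 (L1 m + 1), le_max_left _ _,
    lt_of_lt_of_le (by linarith) (le_max_right _ _)⟩
  have hR := hR0.mono hR1
  have hRp : 0 < R := by linarith [L1_ge' m, nr_ge m]
  let C : Option (PS m) → Set (VV m) := fun o => match o with
    | none => {x | ∀ A, gap A x ≤ R ∨ L1 m ≤ spr A x}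
    | some A => {x | R ≤ gap A x ∧ spr A x ≤ L1 m}
  let g : Option (PS m) → VV m → KM m := fun o => match o with
    | none => Ψ
    | some A => fun x => act (gg A.1) (H A (cl01 (gap A x - R), chart A x))
  have hag0 : ∀ A x, x ∈ C none → x ∈ C (some A) → g none x = g (some A) x := by
    intro A x h1 h2
    show Ψ x = act (gg A.1) (H A (cl01 (gap A x - R), chart A x))
    rw [hR.r1 A x h2.1 h2.2]
    congr 1
    rcases h1 A with h | h
    · rw [cl01_zero (by linarith)]
    · obtain ⟨i, hi⟩ := exists_big h
      have e1 := hs 0 A _ i hi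
      have e2 := hs (cl01 (gap A x - R)) A _ i hi
      simp only at e1 e2
      rw [e1, e2]
  suffices key : ∃ G : VV m → KM m, Continuous G ∧ ∀ i x, x ∈ C i → G x = g i x by
    obtain ⟨G, hG, hGe⟩ := key
    refine ⟨G, R + 1, hG, ?_, ?_⟩
    · intro A x h1 h2
      rw [hGe (some A) x ⟨by linarith, h2⟩]
      show act (gg A.1) (H A (cl01 (gap A x - R), chart A x)) = _
      rw [cl01_one (by linarith)]
    · intro x h1 h2
      rw [hGe none x ?_]
      · exact hR.r2 x (by linarith) h2
      · intro A
        by_cases h : 0 < gap A x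
        · exact Or.inr (h2 A h)
        · left; linarith
  apply glue
  · rintro (_ | A)
    · have : C none = ⋂ A, ({x | gap A x ≤ R} ∪ {x | L1 m ≤ spr A x}) := by
        ext x; simp [C]
      rw [this]
      exact isClosed_iInter fun A => (isClosed_le (continuous_gap A) continuous_const).union
        (isClosed_le continuous_const (continuous_spr A))
    · exact (isClosed_le continuous_const (continuous_gap A)).inter
        (isClosed_le (continuous_spr A) continuous_const)
  · intro x
    by_cases h : ∃ A, R ≤ gap A x ∧ spr A x ≤ L1 m
    · obtain ⟨A, hA⟩ := h
      exact ⟨some A, hA⟩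
    · push Not at h
      refine ⟨none, fun A => ?_⟩
      rcases le_or_gt R (gap A x) with h1 | h1
      · exact Or.inr (h A h1).le
      · exact Or.inl h1.le
  · rintro (_ | A)
    · exact hΨ.continuousOn
    · apply Continuous.continuousOn
      refine (continuous_act _).comp ((hH A).comp ?_)
      have := continuous_gap A
      fun_prop
  · rintro (_ | A) (_ | A') x h1 h2
    · rfl
    · exact hag0 A' x h1 h2
    · exact (hag0 A x h2 h1).symm
    · have : A = A' := disjZ (x := x) (hR2.trans_le h1.1) h1.2 (hR2.trans_le h2.1) h2.2
      rw [this]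

end SG
end

noncomputable section
namespace SG
open Equiv Topology

variable {m : ℕ}

/-! zigzag -/
section zz
variable {K : Type*}

def zz (u v s : ℝ) (a a' a'' : ℝ → K) : K :=
  if s ≤ u then a s else if s ≤ u + (v - u) / 4 then a (u + 4 * (s - u)) else
  if s ≤ u + (v - u) / 2 then a' (v - 4 * (s - u - (v - u) / 4)) else
  if s ≤ v then a'' (u + 2 * (s - u - (v - u) / 2)) else a s

theorem zz_deg (u s : ℝ) (a a' a'' : ℝ → K) : zz u u s a a' a'' = a s := by
  unfold zz
  by_cases h : s ≤ u <;> simp [h]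

theorem zz_out {u v s : ℝ} (huv : u ≤ v) (a a' a'' : ℝ → K) (h : s ≤ u ∨ v < s) :
    zz u v s a a' a'' = a s := by
  unfold zz
  rcases h with h | h
  · rw [if_pos h]
  · rw [if_neg (by linarith), if_neg (by linarith), if_neg (by linarith), if_neg (by linarith)]

theorem zz_map {K' : Type*} (φ : K → K') {u v s : ℝ} {a a' a'' : ℝ → K} {b b' b'' : ℝ → K'} (huv : u ≤ v)
    (h0 : b s = φ (a s)) (h : ∀ r, u ≤ r → r ≤ v → b r = φ (a r) ∧ b' r = φ (a' r) ∧ b'' r = φ (a'' r)) :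
    zz u v s b b' b'' = φ (zz u v s a a' a'') := by
  unfold zz
  split_ifs with h1 h2 h3 h4
  · exact h0
  · exact (h _ (by linarith) (by linarith)).1
  · exact (h _ (by linarith) (by linarith)).2.1
  · exact (h _ (by linarith) (by linarith)).2.2
  · exact h0

theorem zz_const {k : K} {u v s : ℝ} {a a' a'' : ℝ → K} (huv : u ≤ v)
    (h0 : a s = k) (h : ∀ r, u ≤ r → r ≤ v → a r = k ∧ a' r = k ∧ a'' r = k) :
    zz u v s a a' a'' = k := by
  have := zz_map (fun _ : K => k) (a := a) (a' := a') (a'' := a'') huv h0 h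
  exact this

theorem zz_shift (u v s c : ℝ) (a a' a'' : ℝ → K) :
    zz (c + u) (c + v) (c + s) a a' a'' =
      zz u v s (fun r => a (c + r)) (fun r => a' (c + r)) (fun r => a'' (c + r)) := by
  unfold zz
  have e1 : c + s ≤ c + u ↔ s ≤ u := by constructor <;> intro <;> linarith
  have e2 : c + s ≤ c + u + (c + v - (c + u)) / 4 ↔ s ≤ u + (v - u) / 4 := by
    constructor <;> intro <;> linarith
  have e3 : c + s ≤ c + u + (c + v - (c + u)) / 2 ↔ s ≤ u + (v - u) / 2 := by
    constructor <;> intro <;> linarith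
  have e4 : c + s ≤ c + v ↔ s ≤ v := by constructor <;> intro <;> linarith
  simp only [e1, e2, e3, e4]
  congr 1
  congr 1
  · congr 1; ring
  · congr 1
    · congr 1; ring
    · congr 2; ring

theorem zz_continuous [TopologicalSpace K] {X : Type*} [TopologicalSpace X] {u v s : X → ℝ}
    {a a' a'' : X → ℝ → K} (hu : Continuous u) (hv : Continuous v) (hs : Continuous s)
    (huv : ∀ x, u x ≤ v x) (ha : Continuous (Function.uncurry a))
    (ha' : Continuous (Function.uncurry a')) (ha'' : Continuous (Function.uncurry a''))
    (h1 : ∀ x, a x (v x) = a' x (v x)) (h2 : ∀ x, a' x (u x) = a'' x (u x))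
    (h3 : ∀ x, a'' x (v x) = a x (v x)) :
    Continuous (fun x => zz (u x) (v x) (s x) (a x) (a' x) (a'' x)) := by
  have c0 : Continuous fun x => a x (s x) := ha.comp (continuous_id.prodMk hs)
  have c1 : Continuous fun x => a x (u x + 4 * (s x - u x)) :=
    ha.comp (continuous_id.prodMk (by fun_prop))
  have c2 : Continuous fun x => a' x (v x - 4 * (s x - u x - (v x - u x) / 4)) :=
    ha'.comp (continuous_id.prodMk (by fun_prop))
  have c3 : Continuous fun x => a'' x (u x + 2 * (s x - u x - (v x - u x) / 2)) :=
    ha''.comp (continuous_id.prodMk (by fun_prop))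
  unfold zz
  refine Continuous.if_le c0 (Continuous.if_le c1 (Continuous.if_le c2 (Continuous.if_le c3 c0
    hs hv ?_) hs (by fun_prop) ?_) hs (by fun_prop) ?_) hs hu ?_
  · intro x e
    have : u x + 2 * (s x - u x - (v x - u x) / 2) = v x := by rw [e]; ring
    rw [this, e, h3]
  · intro x e
    have e1 : v x - 4 * (s x - u x - (v x - u x) / 4) = u x := by rw [e]; ring
    have e2 : u x + 2 * (s x - u x - (v x - u x) / 2) = u x := by rw [e]; ring
    rw [if_pos (by linarith [huv x]), e1, e2, h2]
  · intro x e
    have e1 : v x - 4 * (s x - u x - (v x - u x) / 4) = v x := by rw [e]; ring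
    have e2 : u x + 4 * (s x - u x) = v x := by rw [e]; ring
    rw [if_pos (by linarith [huv x]), e1, e2, h1]
  · intro x e
    have e2 : u x + 4 * (s x - u x) = s x := by rw [e]; ring
    rw [if_pos (by linarith [huv x]), e2]
end zz

/-! moving along the direction `cc` -/

theorem gap_shift (A : PS m) (x : VV m) (r : ℝ) :
    gap A x - |r| * nr m ≤ gap A (x + r • cc m) := by
  rw [le_gap]
  intro k hk l hl
  have h1 := gap_le (x := x) hk hl
  have h2 := abs_mul r (cc m l - cc m k)
  have h3 := mul_le_mul_of_nonneg_left (cc_diff l k) (abs_nonneg r)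
  have h4 := neg_abs_le (r * (cc m l - cc m k))
  simp only [Pi.add_apply, Pi.smul_apply, smul_eq_mul]
  linarith

theorem spr_shift (A : PS m) (x : VV m) (r : ℝ) :
    spr A (x + r • cc m) ≤ spr A x + |r| * nr m := by
  apply spr_le
  intro k l hkl
  have h1 := le_spr x hkl
  have h2 := abs_mul r (cc m k - cc m l)
  have h3 := mul_le_mul_of_nonneg_left (cc_diff k l) (abs_nonneg r)
  have h4 := le_abs_self (r * (cc m k - cc m l))
  simp only [Pi.add_apply, Pi.smul_apply, smul_eq_mul]
  linarith

theorem spread_shift (x : VV m) (r : ℝ) :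
    spread (x + r • cc m) ≤ spread x + |r| * nr m := by
  apply spread_le
  intro k l
  have h1 := le_spread x k l
  have h2 := abs_mul r (cc m k - cc m l)
  have h3 := mul_le_mul_of_nonneg_left (cc_diff k l) (abs_nonneg r)
  have h4 := le_abs_self (r * (cc m k - cc m l))
  simp only [Pi.add_apply, Pi.smul_apply, smul_eq_mul]
  linarith

theorem cc_ne {i j : Fin (m + 5)} (h : i ≠ j) : 1 ≤ |cc m i - cc m j| := by
  unfold cc
  have h' : (i : ℕ) ≠ j := fun e => h (Fin.ext e)
  rcases lt_or_gt_of_ne h' with h | h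
  · have : ((i : ℕ) : ℝ) + 1 ≤ (j : ℕ) := by exact_mod_cast h
    rw [abs_sub_comm]; exact le_trans (by linarith) (le_abs_self _)
  · have : ((j : ℕ) : ℝ) + 1 ≤ (i : ℕ) := by exact_mod_cast h
    exact le_trans (by linarith) (le_abs_self _)

theorem shift_bound (x : VV m) (r : ℝ) {i j : Fin (m + 5)} (h : i ≠ j) :
    |r| ≤ |x i - x j| + |(x + r • cc m) i - (x + r • cc m) j| := by
  have h1 := cc_ne h
  have e : r * (cc m i - cc m j) = ((x + r • cc m) i - (x + r • cc m) j) - (x i - x j) := by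
    simp only [Pi.add_apply, Pi.smul_apply, smul_eq_mul]; ring
  have h2 := abs_mul r (cc m i - cc m j)
  have h3 := abs_sub ((x + r • cc m) i - (x + r • cc m) j) (x i - x j)
  rw [← e] at h3
  nlinarith [abs_nonneg r]

theorem atom (A A' : PS m) : ∃ i j : Fin (m + 5), i ≠ j ∧ (i ∈ A.1 ↔ j ∈ A.1) ∧
    (i ∈ A'.1 ↔ j ∈ A'.1) := by
  obtain ⟨i, j, h, e⟩ := Fintype.exists_ne_map_eq_of_card_lt
    (fun i : Fin (m + 5) => (decide (i ∈ A.1), decide (i ∈ A'.1))) (by simp)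
  simp only [Prod.mk.injEq, decide_eq_decide] at e
  exact ⟨i, j, h, e.1, e.2⟩

def KU (m : ℕ) : ℝ := (1 + 2 * nr m) * L1 m

theorem UQ {A A' : PS m} {y : VV m} {r : ℝ} (h1 : spr A y ≤ L1 m) (h2 : KU m < gap A y)
    (h3 : spr A' (y + r • cc m) ≤ L1 m) (h4 : KU m < gap A' (y + r • cc m)) : A = A' := by
  by_contra hne
  obtain ⟨i, j, hij, hA, hA'⟩ := atom A A'
  have hr := shift_bound y r hij
  have b1 := abs_le_spr y hA
  have b2 := abs_le_spr (y + r • cc m) hA'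
  have hr' : |r| ≤ 2 * L1 m := by linarith
  have e : y + r • cc m + (-r) • cc m = y := by
    rw [add_assoc, ← add_smul]; simp
  have g1 := gap_shift A' (y + r • cc m) (-r)
  have g2 := spr_shift A' (y + r • cc m) (-r)
  rw [e, abs_neg] at g1 g2
  have hn := nr_ge m
  have hL := L1_ge' m
  have hm : |r| * nr m ≤ 2 * L1 m * nr m := mul_le_mul_of_nonneg_right hr' (by linarith)
  unfold KU at h2 h4
  have hp : 0 < L1 m * nr m := by nlinarith
  rcases gap_spr hne (x := y) (by linarith) with h | h <;> linarith

/-! line invariants -/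
def i0 (A : PS m) : NN m A.1.card := Classical.arbitrary _
def pA (A : PS m) : NN m A.1.card → ℝ := chart A (cc m)
theorem pA_ge (A : PS m) (i) : 1 ≤ pA A i := chart_cc_ge A i
theorem pA_le (A : PS m) (i) : pA A i ≤ nr m := chart_cc_le A i

def sq (A : PS m) (q : NN m A.1.card → ℝ) : ℝ := q (i0 A) / pA A (i0 A)
def omq (A : PS m) (q : NN m A.1.card → ℝ) : ℝ := ‖q - sq A q • pA A‖

theorem sq_add (A : PS m) (q) (r : ℝ) : sq A (q + r • pA A) = sq A q + r := by
  have := pA_ge A (i0 A)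
  unfold sq
  simp only [Pi.add_apply, Pi.smul_apply, smul_eq_mul]
  field_simp

theorem omq_add (A : PS m) (q) (r : ℝ) : omq A (q + r • pA A) = omq A q := by
  unfold omq
  rw [sq_add]
  congr 1
  rw [add_smul]; abel

theorem abs_sq_le (A : PS m) (q) : |sq A q| ≤ |q (i0 A)| := by
  have := pA_ge A (i0 A)
  unfold sq
  rw [abs_div, abs_of_pos (by linarith : 0 < pA A (i0 A))]
  exact div_le_self (abs_nonneg _) this

theorem omq_le {A : PS m} {q} (h : ∀ i, |q i| < LS m) : omq A q ≤ LD m := by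
  unfold omq
  have := LS_pos m
  have hn := nr_ge m
  rw [pi_norm_le_iff_of_nonneg (by linarith [LD_ge m])]
  intro i
  simp only [Pi.sub_apply, Pi.smul_apply, smul_eq_mul, Real.norm_eq_abs]
  have h1 := h i
  have h2 := (abs_sq_le A q).trans (h (i0 A)).le
  have h3 := pA_ge A i
  have h4 := pA_le A i
  have h5 : |sq A q * pA A i| ≤ LS m * nr m := by
    rw [abs_mul, abs_of_pos (by linarith : 0 < pA A i)]
    exact mul_le_mul h2 h4 (by linarith) (by linarith)
  have h6 := abs_sub (q i) (sq A q * pA A i)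
  unfold LD
  linarith

theorem comp_le {A : PS m} {q} {S W : ℝ} (hs : |sq A q| ≤ S) (hw : omq A q ≤ W) (i) :
    |q i| ≤ W + S * nr m := by
  have h1 := (norm_le_pi_norm (q - sq A q • pA A) i).trans hw
  simp only [Pi.sub_apply, Pi.smul_apply, smul_eq_mul, Real.norm_eq_abs] at h1
  have h3 := pA_ge A i
  have h4 := pA_le A i
  have h5 : |sq A q * pA A i| ≤ S * nr m := by
    rw [abs_mul, abs_of_pos (by linarith : 0 < pA A i)]
    exact mul_le_mul hs h4 (by linarith) ((abs_nonneg _).trans hs)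
  have h6 := abs_add_le (q i - sq A q * pA A i) (sq A q * pA A i)
  rw [sub_add_cancel] at h6
  linarith

@[fun_prop] theorem continuous_sq (A : PS m) : Continuous (sq A) := by unfold sq; fun_prop
@[fun_prop] theorem continuous_omq (A : PS m) : Continuous (omq A) := by unfold omq; fun_prop

/-- the folded family -/
def Tf (f f' f'' : Fam m) : Fam m := fun A q =>
  zz (-LD m) (LD m) (sq A q) (fun r => f A (q + (r - sq A q) • pA A))
    (fun r => f' A (q + (r - sq A q) • pA A)) (fun r => f'' A (q + (r - sq A q) • pA A))

end SG
end

noncomputable section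
namespace SG
open Equiv Topology

variable {m : ℕ}

def sx (x : VV m) : ℝ := x 1 - x 0
def ww (x : VV m) : VV m := x + (-sx x) • cc m
def sA (A : PS m) (x : VV m) : ℝ := sq A (chart A x)
def xA (A : PS m) (x : VV m) : VV m := x + (-sA A x) • cc m
def om (A : PS m) (x : VV m) : ℝ := omq A (chart A x)
def mA (A : PS m) (x : VV m) : ℝ := sx x - sA A x

@[fun_prop] theorem continuous_sx : Continuous (sx (m := m)) := by unfold sx; fun_prop
@[fun_prop] theorem continuous_sA (A : PS m) : Continuous (sA A) := by unfold sA; fun_prop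
@[fun_prop] theorem continuous_om (A : PS m) : Continuous (om A) := by unfold om; fun_prop
@[fun_prop] theorem continuous_mA (A : PS m) : Continuous (mA A) := by unfold mA; fun_prop
@[fun_prop] theorem continuous_ww : Continuous (ww (m := m)) := by unfold ww; fun_prop
@[fun_prop] theorem continuous_xA (A : PS m) : Continuous (xA A) := by unfold xA; fun_prop

theorem chart_shift (A : PS m) (x : VV m) (r : ℝ) : chart A (x + r • cc m) = chart A x + r • pA A := by
  rw [chart_add, chart_smul]; rfl

theorem sx_shift (x : VV m) (r : ℝ) : sx (x + r • cc m) = sx x + r := by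
  unfold sx cc
  simp
  ring
theorem sA_shift (A : PS m) (x : VV m) (r : ℝ) : sA A (x + r • cc m) = sA A x + r := by
  unfold sA; rw [chart_shift, sq_add]
theorem om_shift (A : PS m) (x : VV m) (r : ℝ) : om A (x + r • cc m) = om A x := by
  unfold om; rw [chart_shift, omq_add]
theorem mA_shift (A : PS m) (x : VV m) (r : ℝ) : mA A (x + r • cc m) = mA A x := by
  unfold mA; rw [sx_shift, sA_shift]; ring
theorem ww_shift (x : VV m) (r : ℝ) : ww (x + r • cc m) = ww x := by
  unfold ww; rw [sx_shift, add_assoc, ← add_smul]; congr 2; ring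
theorem xA_shift (A : PS m) (x : VV m) (r : ℝ) : xA A (x + r • cc m) = xA A x := by
  unfold xA; rw [sA_shift, add_assoc, ← add_smul]; congr 2; ring

theorem abs_mA (A : PS m) (x : VV m) : |mA A x| ≤ spread (ww x) := by
  have h0 : chart A (xA A x) (i0 A) = 0 := by
    have := pA_ge A (i0 A)
    unfold xA
    rw [chart_shift]
    unfold sA sq
    simp only [Pi.add_apply, Pi.smul_apply, smul_eq_mul]
    field_simp
    ring
  have e : xA A x + (- mA A x) • cc m = ww x := by
    unfold xA ww mA
    rw [add_assoc, ← add_smul]; congr 2; ring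
  have h := shift_bound (xA A x) (- mA A x) (i := gg A.1 (i0 A).1.succ) (j := gg A.1 (i0 A).1.castSucc)
    (fun h => by
      have := (gg A.1).injective h
      exact absurd this (by simp [Fin.ext_iff]))
  rw [e, abs_neg] at h
  unfold chart at h0
  rw [h0, abs_zero, zero_add] at h
  exact h.trans (abs_le_spread _ _ _)

/-- weights -/
def ch (A : PS m) (x : VV m) : ℝ := cl01 (2 - om A x / LD m) * cl01 (gap A (xA A x) - (KU m + 1))
def ct (A : PS m) (x : VV m) : ℝ := cl01 (3 - om A x / LD m) * cl01 (gap A (xA A x) - KU m)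

theorem LD_pos (m : ℕ) : 0 < LD m := by linarith [LD_ge m, LS_pos m]
theorem KU_ge (m : ℕ) : L1 m + nr m * L1 m ≤ KU m := by
  unfold KU; nlinarith [L1_ge' m, nr_ge m]

theorem spr_of_comp {A : PS m} {x : VV m} {S W : ℝ} (hs : |sA A x| ≤ S) (hw : om A x ≤ W) :
    spr A x ≤ nr m * (W + S * nr m) := by
  have h : ∀ i, |chart A x i| ≤ W + S * nr m := fun i => comp_le hs hw i
  exact chart_spr ((abs_nonneg _).trans (h (i0 A))) h

theorem sA_xA (A : PS m) (x : VV m) : sA A (xA A x) = 0 := by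
  unfold xA; rw [sA_shift]; ring
theorem om_xA (A : PS m) (x : VV m) : om A (xA A x) = om A x := by
  unfold xA; rw [om_shift]

theorem ct_ne {A : PS m} {x : VV m} (h : ct A x ≠ 0) :
    om A x < 3 * LD m ∧ KU m < gap A (xA A x) ∧ spr A (xA A x) ≤ L1 m := by
  unfold ct at h
  have h1 := cl01_pos (left_ne_zero_of_mul h)
  have h2 := cl01_pos (right_ne_zero_of_mul h)
  have hD := LD_pos m
  have h3 : om A x < 3 * LD m := by
    rw [sub_pos, div_lt_iff₀ hD] at h1; exact h1
  refine ⟨h3, by linarith, ?_⟩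
  have := spr_of_comp (A := A) (x := xA A x) (S := 0) (W := 3 * LD m) (by rw [sA_xA, abs_zero])
    (by rw [om_xA]; exact h3.le)
  unfold L1 LX
  have hn := nr_ge m
  have : 0 < nr m * (nr m * LD m) := by positivity
  linarith

theorem ch_ne {A : PS m} {x : VV m} (h : ch A x ≠ 0) :
    om A x < 2 * LD m ∧ KU m + 1 < gap A (xA A x) ∧ ct A x = 1 := by
  unfold ch at h
  have h1 := cl01_pos (left_ne_zero_of_mul h)
  have h2 := cl01_pos (right_ne_zero_of_mul h)
  have hD := LD_pos m
  have h3 : om A x < 2 * LD m := by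
    rw [sub_pos, div_lt_iff₀ hD] at h1; exact h1
  refine ⟨h3, by linarith, ?_⟩
  unfold ct
  rw [cl01_one (by linarith), cl01_one (by linarith), one_mul]

theorem ct_unique {A A' : PS m} {x y : VV m} {r : ℝ} (e : y + r • cc m = x) (h1 : spr A y ≤ L1 m)
    (h2 : KU m < gap A y) (hne : A' ≠ A) : ct A' x = 0 := by
  by_contra h
  obtain ⟨_, h3, h4⟩ := ct_ne h
  have e' : xA A' x = y + (r - sA A' x) • cc m := by
    unfold xA
    rw [← e, add_assoc, ← add_smul]; congr 2
  rw [e'] at h3 h4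
  exact hne (UQ h1 h2 h4 h3).symm

theorem exists_A (x : VV m) : ∃ A : PS m, ∀ A' ≠ A, ct A' x = 0 := by
  by_cases h : ∃ A : PS m, ct A x ≠ 0
  · obtain ⟨A, hA⟩ := h
    obtain ⟨_, h3, h4⟩ := ct_ne hA
    refine ⟨A, fun A' hne => ct_unique (y := xA A x) (r := sA A x) ?_ h4 h3 hne⟩
    unfold xA
    rw [add_assoc, ← add_smul]; simp
  · push Not at h
    exact ⟨sing 0, fun A' _ => h A'⟩

def lc (x : VV m) : ℝ := ∑ A : PS m, ct A x * mA A x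
def lr (x : VV m) : ℝ := LD m * ∑ A : PS m, ch A x

theorem lc_of {A : PS m} {x : VV m} (h : ∀ A' ≠ A, ct A' x = 0) : lc x = ct A x * mA A x := by
  unfold lc
  exact Finset.sum_eq_single A (fun A' _ hne => by rw [h A' hne, zero_mul]) (fun h => absurd (Finset.mem_univ _) h)
theorem lr_of {A : PS m} {x : VV m} (h : ∀ A' ≠ A, ct A' x = 0) : lr x = LD m * ch A x := by
  unfold lr
  congr 1
  refine Finset.sum_eq_single A (fun A' _ hne => ?_) (fun h => absurd (Finset.mem_univ _) h)
  by_contra hc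
  have := (ch_ne hc).2.2
  rw [h A' hne] at this
  exact zero_ne_one this

theorem ct_nonneg (A : PS m) (x : VV m) : 0 ≤ ct A x := mul_nonneg (cl01_nonneg _) (cl01_nonneg _)
theorem ct_le (A : PS m) (x : VV m) : ct A x ≤ 1 :=
  mul_le_one₀ (cl01_le _) (cl01_nonneg _) (cl01_le _)
theorem ch_nonneg (A : PS m) (x : VV m) : 0 ≤ ch A x := mul_nonneg (cl01_nonneg _) (cl01_nonneg _)
theorem ch_le (A : PS m) (x : VV m) : ch A x ≤ 1 :=
  mul_le_one₀ (cl01_le _) (cl01_nonneg _) (cl01_le _)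

theorem abs_lc (x : VV m) : |lc x| ≤ spread (ww x) := by
  obtain ⟨A, h⟩ := exists_A x
  rw [lc_of h, abs_mul, abs_of_nonneg (ct_nonneg A x)]
  have := abs_mA A x
  nlinarith [ct_le A x, ct_nonneg A x, abs_nonneg (mA A x)]
theorem lr_nonneg (x : VV m) : 0 ≤ lr x :=
  mul_nonneg (LD_pos m).le (Finset.sum_nonneg fun A _ => ch_nonneg A x)
theorem lr_le (x : VV m) : lr x ≤ LD m := by
  obtain ⟨A, h⟩ := exists_A x
  rw [lr_of h]
  nlinarith [ch_le A x, LD_pos m]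

def lam (R1 : ℝ) (x : VV m) : ℝ := cl01 (spread (ww x) - R1)
def cen (R1 : ℝ) (x : VV m) : ℝ := lam R1 x * lc x
def rad (R1 B : ℝ) (x : VV m) : ℝ := (1 - lam R1 x) * (spread (ww x) + B) + lam R1 x * lr x

theorem ct_shift (A : PS m) (x : VV m) (r : ℝ) : ct A (x + r • cc m) = ct A x := by
  unfold ct; rw [om_shift, xA_shift]
theorem ch_shift (A : PS m) (x : VV m) (r : ℝ) : ch A (x + r • cc m) = ch A x := by
  unfold ch; rw [om_shift, xA_shift]
theorem cen_shift (R1 : ℝ) (x : VV m) (r : ℝ) : cen R1 (x + r • cc m) = cen R1 x := by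
  simp only [cen, lam, lc, ww_shift, ct_shift, mA_shift]
theorem rad_shift (R1 B : ℝ) (x : VV m) (r : ℝ) : rad R1 B (x + r • cc m) = rad R1 B x := by
  simp only [rad, lam, lr, ww_shift, ch_shift]
theorem rad_nonneg (R1 : ℝ) {B : ℝ} (hB : 0 ≤ B) (x : VV m) : 0 ≤ rad R1 B x := by
  have h1 := cl01_nonneg (spread (ww x) - R1)
  have h2 := cl01_le (spread (ww x) - R1)
  have h3 := spread_nonneg (ww x)
  have h4 := lr_nonneg x
  unfold rad lam
  have := mul_nonneg (sub_nonneg.2 h2) (add_nonneg h3 hB)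
  have := mul_nonneg h1 h4
  linarith

@[fun_prop] theorem continuous_ct (A : PS m) : Continuous (ct A) := by
  unfold ct
  have := (continuous_gap A).comp (continuous_xA A)
  simp only [Function.comp_def] at this
  fun_prop
@[fun_prop] theorem continuous_ch (A : PS m) : Continuous (ch A) := by
  unfold ch
  have := (continuous_gap A).comp (continuous_xA A)
  simp only [Function.comp_def] at this
  fun_prop
@[fun_prop] theorem continuous_cen (R1 : ℝ) : Continuous (cen (m := m) R1) := by
  unfold cen lam lc
  have := continuous_spread.comp (continuous_ww (m := m))
  simp only [Function.comp_def] at this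
  fun_prop
@[fun_prop] theorem continuous_rad (R1 B : ℝ) : Continuous (rad (m := m) R1 B) := by
  unfold rad lam lr
  have := continuous_spread.comp (continuous_ww (m := m))
  simp only [Function.comp_def] at this
  fun_prop

end SG
end

noncomputable section
namespace SG
open Equiv Topology

variable {m : ℕ}

theorem ww_add (x : VV m) : ww x + sx x • cc m = x := by
  unfold ww; rw [add_assoc, ← add_smul]; simp

theorem spread_ww (x : VV m) : spread (ww x) ≤ (1 + nr m) * spread x := by
  have h := spread_shift x (-sx x)
  have h2 := abs_le_spread x 1 0
  rw [abs_neg] at h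
  have := nr_ge m
  unfold ww
  have h3 : |sx x| * nr m ≤ spread x * nr m := mul_le_mul_of_nonneg_right h2 (by linarith)
  linarith

theorem spread_le_ww (x : VV m) : spread x ≤ spread (ww x) + |sx x| * nr m := by
  have h := spread_shift (ww x) (sx x)
  rw [ww_add] at h
  exact h

theorem sx_le (x : VV m) {i j : Fin (m + 5)} (h : i ≠ j) : |sx x| ≤ |x i - x j| + spread (ww x) := by
  have h1 := shift_bound x (-sx x) h
  rw [abs_neg] at h1
  have h2 := abs_le_spread (ww x) i j
  unfold ww at h2 ⊢
  linarith

theorem gap_le_spread (A : PS m) (x : VV m) : gap A x ≤ spread x := by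
  obtain ⟨k, hk, l, hl, e⟩ := exists_gap A x
  rw [e]; exact le_spread _ _ _

theorem agree {f f' : Fam m} {Ψ Ψ' : VV m → KM m} {R : ℝ} (hf : SuppF (LS m) f) (hf' : SuppF (LS m) f')
    (h : RealF Ψ f R) (h' : RealF Ψ' f' R) {y : VV m} (hy : R + 2 * L1 m ≤ spread y) 
    (hb : ∀ A, R ≤ gap A y → ∃ i, LS m ≤ |chart A y i|) : Ψ y = Ψ' y := by
  have hL := L1_ge' m
  have hn := nr_ge m
  by_cases hA : ∃ A, 0 < gap A y ∧ spr A y < L1 m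
  · obtain ⟨A, h1, h2⟩ := hA
    have h3 := spread_le_gap_spr A y h1.le
    have h4 : R ≤ gap A y := by linarith
    obtain ⟨i, hi⟩ := hb A h4
    rw [h.r1 A y h4 h2.le, h'.r1 A y h4 h2.le, hf A _ i hi, hf' A _ i hi]
  · push Not at hA
    rw [h.r2 y (by linarith) hA, h'.r2 y (by linarith) hA]

theorem endpt {R R1 B : ℝ} (hR : 0 ≤ R) (hR1 : (1 + nr m) * (R + 2 * L1 m) ≤ R1) (hB : R + 2 * L1 m ≤ B)
    (hRK : KU m + 2 + LS m * nr m ≤ R) {y : VV m} (hy : |sx y - cen R1 y| = rad R1 B y) :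
    R + 2 * L1 m ≤ spread y ∧ ∀ A, R ≤ gap A y → ∃ i, LS m ≤ |chart A y i| := by
  have hL := L1_ge' m
  have hn := nr_ge m
  have hS := LS_pos m
  have hSX := LS_le_LX m
  have hL5 := L1_ge m
  have hD := LD_ge m
  have hK := KU_ge m
  have hLn : 0 ≤ nr m * L1 m := by nlinarith
  by_cases hl : lam R1 y = 0
  · unfold cen rad at hy
    rw [hl] at hy
    have hy' : |sx y| = spread (ww y) + B := by simpa using hy
    have key : ∀ i j : Fin (m + 5), i ≠ j → B ≤ |y i - y j| := fun i j hij => by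
      have := sx_le y hij
      linarith
    refine ⟨?_, fun A _ => ?_⟩
    · have h1 := key 1 0 (by simp)
      have h2 := abs_le_spread y 1 0
      linarith
    · obtain ⟨i, j, hij, hA, -⟩ := atom A A
      have h1 := key i j hij
      have h2 := abs_le_spr y hA
      obtain ⟨k, hk⟩ := exists_big (A := A) (x := y) (by linarith)
      exact ⟨k, by linarith⟩
  · have hl1 := cl01_pos hl
    have hl0 : 0 < lam R1 y := lt_of_le_of_ne (cl01_nonneg _) (Ne.symm hl)
    have hl2 : lam R1 y ≤ 1 := cl01_le _
    have hsw := spread_ww y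
    have hs0 := spread_nonneg (ww y)
    refine ⟨?_, fun A hA => ?_⟩
    · by_contra hc
      push Not at hc
      have : (1 + nr m) * spread y ≤ (1 + nr m) * (R + 2 * L1 m) :=
        mul_le_mul_of_nonneg_left hc.le (by linarith)
      linarith
    · by_contra hc
      push Not at hc
      have h1 : om A y ≤ LD m := omq_le hc
      have h2 : |sA A y| < LS m := lt_of_le_of_lt (abs_sq_le _ _) (hc (i0 A))
      have h3 := gap_shift A y (-sA A y)
      rw [abs_neg] at h3
      have h4 : |sA A y| * nr m ≤ LS m * nr m := mul_le_mul_of_nonneg_right h2.le (by linarith)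
      have h5 : KU m + 2 ≤ gap A (xA A y) := by unfold xA; linarith
      have h6 : om A y / LD m ≤ 1 := (div_le_one (LD_pos m)).2 h1
      have hct : ct A y = 1 := by
        unfold ct; rw [cl01_one (by linarith), cl01_one (by linarith), one_mul]
      have hch : ch A y = 1 := by
        unfold ch; rw [cl01_one (by linarith), cl01_one (by linarith), one_mul]
      have hU : ∀ A' ≠ A, ct A' y = 0 := by
        obtain ⟨-, g1, g2⟩ := ct_ne (A := A) (x := y) (by rw [hct]; exact one_ne_zero)
        refine fun A' hne => ct_unique (y := xA A y) (r := sA A y) ?_ g2 g1 hne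
        unfold xA
        rw [add_assoc, ← add_smul]; simp
      unfold cen rad at hy
      rw [lc_of hU, lr_of hU, hct, hch] at hy
      have hm := abs_mA A y
      have e : sx y - lam R1 y * (1 * mA A y) = (1 - lam R1 y) * mA A y + sA A y := by
        unfold mA; ring
      rw [e] at hy
      have h7 := abs_add_le ((1 - lam R1 y) * mA A y) (sA A y)
      rw [abs_mul, abs_of_nonneg (sub_nonneg.2 hl2)] at h7
      have h8 : (1 - lam R1 y) * (|mA A y| + LS m) ≤ (1 - lam R1 y) * (spread (ww y) + B) :=
        mul_le_mul_of_nonneg_left (by linarith) (sub_nonneg.2 hl2)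
      have h9 : lam R1 y * LS m < lam R1 y * LD m := mul_lt_mul_of_pos_left (by linarith) hl0
      linarith

set_option maxHeartbeats 1600000 in
theorem N2 {f f' f'' : Fam m} (hf : SuppF (LS m) f) (hf' : SuppF (LS m) f') (hf'' : SuppF (LS m) f'')
    (h : ExtF f) (h' : ExtF f') (h'' : ExtF f'') : ExtF (Tf f f' f'') := by
  obtain ⟨Ψ, Ra, hc, hΨ⟩ := h
  obtain ⟨Ψ', Rb, hc', hΨ'⟩ := h'
  obtain ⟨Ψ'', Rc, hc'', hΨ''⟩ := h''
  have hL := L1_ge' m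
  have hn := nr_ge m
  have hS := LS_pos m
  have hD := LD_ge m
  have hX := LX_ge m
  have hLX := L1_ge m
  have hK := KU_ge m
  have hDp := LD_pos m
  have hLn : 0 ≤ nr m * L1 m := by nlinarith
  have hSn : 0 ≤ LS m * nr m := by nlinarith
  obtain ⟨R, hRa, hRb, hRc, hR⟩ : ∃ R, Ra ≤ R ∧ Rb ≤ R ∧ Rc ≤ R ∧ KU m + 2 + LS m * nr m ≤ R :=
    ⟨max (max Ra Rb) (max Rc (KU m + 2 + LS m * nr m)), by simp, by simp, by simp, by simp⟩
  replace hΨ := hΨ.mono hRa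
  replace hΨ' := hΨ'.mono hRb
  replace hΨ'' := hΨ''.mono hRc
  have hR0 : 0 ≤ R := by linarith
  obtain ⟨R1, hR1⟩ : ∃ R1, R1 = (1 + nr m) * (R + 2 * L1 m) := ⟨_, rfl⟩
  obtain ⟨B, hB⟩ : ∃ B, B = R + 2 * L1 m := ⟨_, rfl⟩
  have hB0 : 0 ≤ B := by linarith
  have hR10 : 0 ≤ R1 := by rw [hR1]; apply mul_nonneg <;> linarith
  have E := fun y => endpt (m := m) (y := y) hR0 hR1.ge hB.ge hR
  have hrad := rad_nonneg (m := m) R1 hB0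
  -- values at the ends
  have E1 : ∀ (x : VV m) (c : ℝ), |c - cen R1 x| = rad R1 B x → 
      Ψ (x + (c - sx x) • cc m) = Ψ' (x + (c - sx x) • cc m) ∧
      Ψ' (x + (c - sx x) • cc m) = Ψ'' (x + (c - sx x) • cc m) := by
    intro x c hx
    obtain ⟨e1, e2⟩ := E (x + (c - sx x) • cc m) (by
      rw [sx_shift, cen_shift, rad_shift, ← hx]; congr 1; ring)
    exact ⟨agree hf hf' hΨ hΨ' e1 e2, agree hf' hf'' hΨ' hΨ'' e1 e2⟩
  have E2 : ∀ x, |cen R1 x - rad R1 B x - cen R1 x| = rad R1 B x := fun x => by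
    rw [sub_sub_cancel_left, abs_neg, abs_of_nonneg (hrad x)]
  have E3 : ∀ x, |cen R1 x + rad R1 B x - cen R1 x| = rad R1 B x := fun x => by
    rw [add_sub_cancel_left, abs_of_nonneg (hrad x)]
  obtain ⟨T, hT⟩ : ∃ T : VV m → KM m, T = fun x => zz (cen R1 x - rad R1 B x) (cen R1 x + rad R1 B x) (sx x)
      (fun c => Ψ (x + (c - sx x) • cc m)) (fun c => Ψ' (x + (c - sx x) • cc m))
      (fun c => Ψ'' (x + (c - sx x) • cc m)) := ⟨_, rfl⟩
  have cs : Continuous fun p : VV m × ℝ => p.1 + (p.2 - sx p.1) • cc m := by fun_prop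
  have hTc : Continuous T := by
    rw [hT]
    refine zz_continuous (by fun_prop) (by fun_prop) (by fun_prop) (fun x => by linarith [hrad x])
      (hc.comp cs) (hc'.comp cs) (hc''.comp cs) (fun x => (E1 x _ (E3 x)).1)
      (fun x => (E1 x _ (E2 x)).2) (fun x => ((E1 x _ (E3 x)).1.trans (E1 x _ (E3 x)).2).symm)
  obtain ⟨RT, hRT1, hRT2, hRT3, hRT4⟩ : ∃ RT, (1 + nr m) * (R1 + 1) + nr m * L1 m ≤ RT ∧
      KU m + 2 + nr m * L1 m ≤ RT ∧ R + nr m * (L1 m + LD m) ≤ RT ∧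
      R1 + 1 + nr m * (2 * (R1 + 1) + B + LD m) < RT :=
    ⟨max (max ((1 + nr m) * (R1 + 1) + nr m * L1 m) (KU m + 2 + nr m * L1 m))
      (max (R + nr m * (L1 m + LD m)) (R1 + 1 + nr m * (2 * (R1 + 1) + B + LD m) + 1)), by simp, by simp,
      by simp, by simp⟩
  have hLDn : 0 ≤ nr m * LD m := by nlinarith
  have hnnD : 0 ≤ nr m * (nr m * LD m) := mul_nonneg (by linarith) hLDn
  have hL1e : L1 m = nr m * ((3 + nr m) * LD m) := rfl
  have hRT5 : R ≤ RT := by linarith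
  refine ⟨T, RT, hTc, ⟨?_, ?_⟩⟩
  · intro A x hg hsp
    obtain ⟨i, j, hij, hA, -⟩ := atom A A
    have h1 := sx_le x hij
    have h2 := (abs_le_spr x hA).trans hsp
    have h3 := gap_le_spread A x
    have h4 := spread_le_ww x
    have h5 : |sx x| * nr m ≤ (L1 m + spread (ww x)) * nr m :=
      mul_le_mul_of_nonneg_right (by linarith) (by linarith)
    have h6 : R1 + 1 ≤ spread (ww x) := by
      by_contra hcon
      push Not at hcon
      have : (1 + nr m) * spread (ww x) < (1 + nr m) * (R1 + 1) :=
        mul_lt_mul_of_pos_left hcon (by linarith)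
      linarith
    have hlam : lam R1 x = 1 := cl01_one (by linarith)
    have hsA : |sA A x| ≤ L1 m := (abs_sq_le _ _).trans ((chart_le_spr A x _).trans hsp)
    have hgx := gap_shift A x (-sA A x)
    rw [abs_neg] at hgx
    have hsAn : |sA A x| * nr m ≤ L1 m * nr m := mul_le_mul_of_nonneg_right hsA (by linarith)
    have hgx' : KU m + 2 ≤ gap A (xA A x) := by unfold xA; linarith
    have hU : ∀ A' ≠ A, ct A' x = 0 := fun A' hne => 
      ct_unique (y := x) (r := 0) (by simp) hsp (by linarith) hne
    have hcen : cen R1 x = ct A x * mA A x := by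
      unfold cen; rw [hlam, lc_of hU, one_mul]
    have hrd : rad R1 B x = LD m * ch A x := by
      unfold rad; rw [hlam, lr_of hU, one_mul]; ring
    have ect : ct A x = cl01 (3 - om A x / LD m) := by
      unfold ct; rw [cl01_one (r := gap A (xA A x) - KU m) (by linarith), mul_one]
    have ech : ch A x = cl01 (2 - om A x / LD m) := by
      unfold ch; rw [cl01_one (r := gap A (xA A x) - (KU m + 1)) (by linarith), mul_one]
    have hsm : sx x = mA A x + sA A x := by unfold mA; ring
    -- values along the line
    have key : om A x ≤ 2 * LD m → ∀ r : ℝ, |r| ≤ LD m → 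
        ∀ {g : Fam m} {Θ : VV m → KM m}, RealF Θ g R → 
        Θ (x + (r - sA A x) • cc m) = act (gg A.1) (g A (chart A x + (r - sA A x) • pA A)) := by
      intro hom r hr g Θ hΘ
      rw [← chart_shift]
      apply hΘ.r1
      · have g1 := gap_shift A x (r - sA A x)
        have g2 := abs_sub r (sA A x)
        have g3 : |r - sA A x| * nr m ≤ (LD m + L1 m) * nr m :=
          mul_le_mul_of_nonneg_right (by linarith) (by linarith)
        linarith
      · have := spr_of_comp (A := A) (x := x + (r - sA A x) • cc m) (S := LD m) (W := 2 * LD m)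
          (by rw [sA_shift]; simpa using hr) (by rw [om_shift]; exact hom)
        linarith
    by_cases hom : om A x ≤ LD m
    · have h7 : om A x / LD m ≤ 1 := (div_le_one hDp).2 hom
      rw [cl01_one (by linarith)] at ect ech
      rw [hT]
      simp only []
      rw [hcen, hrd, ect, ech, one_mul, mul_one, sub_eq_add_neg, hsm, zz_shift]
      unfold Tf
      have e : ∀ r, mA A x + r - (mA A x + sA A x) = r - sA A x := fun r => by ring
      simp only [e]
      refine zz_map (act (gg A.1)) (by linarith) ?_ ?_
      · have : sq A (chart A x) = sA A x := rfl
        rw [this, sub_self, zero_smul, zero_smul, add_zero, add_zero]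
        exact hΨ.r1 A x (by linarith) hsp
      · intro r h8 h9
        have hr : |r| ≤ LD m := abs_le.2 ⟨h8, h9⟩
        exact ⟨key (by linarith) r hr hΨ, key (by linarith) r hr hΨ', key (by linarith) r hr hΨ''⟩
    · push Not at hom
      have hz : ∀ r : ℝ, ∀ {g : Fam m}, SuppF (LS m) g → g A (chart A x + r • pA A) = st0 := by
        intro r g hg
        by_contra hcon
        have : omq A (chart A x + r • pA A) ≤ LD m := omq_le fun i => by
          by_contra h9
          push Not at h9
          exact hcon (hg A _ i h9)
        rw [omq_add] at this
        unfold om at hom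
        linarith
      have hTf : Tf f f' f'' A (chart A x) = st0 := 
        zz_const (by linarith) (hz _ hf) fun r _ _ => ⟨hz _ hf, hz _ hf', hz _ hf''⟩
      have hxx : Ψ (x + (sx x - sx x) • cc m) = act (gg A.1) st0 := by
        rw [sub_self, zero_smul, add_zero, hΨ.r1 A x (by linarith) hsp]
        have := hz 0 hf
        rw [zero_smul, add_zero] at this
        rw [this]
      rw [hTf, hT]
      simp only []
      by_cases hom2 : om A x ≤ 2 * LD m
      · refine zz_const (by linarith [hrad x]) hxx fun c h8 h9 => ?_
        have h10 : om A x / LD m ≤ 2 := (div_le_iff₀ hDp).2 hom2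
        rw [cl01_one (by linarith)] at ect
        rw [hcen, hrd, ect, one_mul] at h8 h9
        have hchl : LD m * ch A x ≤ LD m * 1 := mul_le_mul_of_nonneg_left (ch_le A x) hDp.le
        have hr : |c - mA A x| ≤ LD m := abs_le.2 ⟨by linarith, by linarith⟩
        have e : c - sx x = c - mA A x - sA A x := by rw [hsm]; ring
        rw [e, key hom2 _ hr hΨ, key hom2 _ hr hΨ', key hom2 _ hr hΨ'', hz _ hf, hz _ hf', hz _ hf'']
        exact ⟨rfl, rfl, rfl⟩
      · push Not at hom2
        have h10 : 2 < om A x / LD m := (lt_div_iff₀ hDp).2 hom2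
        rw [cl01_zero (by linarith)] at ech
        rw [ech, mul_zero] at hrd
        rw [hrd, sub_zero, add_zero, zz_deg]
        exact hxx
  · intro x hsp hbig
    have hout : sx x ≤ cen R1 x - rad R1 B x ∨ cen R1 x + rad R1 B x < sx x := by
      by_contra hcon
      push Not at hcon
      obtain ⟨h1, h2⟩ := hcon
      have h3 := spread_le_ww x
      have hl0 : 0 ≤ lam R1 x := cl01_nonneg _
      have hl1 : lam R1 x ≤ 1 := cl01_le _
      have hw0 := spread_nonneg (ww x)
      by_cases hw : spread (ww x) ≤ R1 + 1
      · have h4 : |cen R1 x| ≤ spread (ww x) := by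
          unfold cen
          rw [abs_mul, abs_of_nonneg hl0]
          exact (mul_le_of_le_one_left (abs_nonneg _) hl1).trans (abs_lc x)
        have h5 : rad R1 B x ≤ spread (ww x) + B + LD m := by
          unfold rad
          have q1 := mul_le_mul hl1 (lr_le x) (lr_nonneg x) zero_le_one
          have q2 := mul_nonneg hl0 (add_nonneg hw0 hB0)
          linarith
        have h6 : |sx x| ≤ 2 * (R1 + 1) + B + LD m := by
          have := abs_le.1 h4
          rw [abs_le]; constructor <;> linarith
        have h7 := mul_le_mul_of_nonneg_right h6 (by linarith : 0 ≤ nr m)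
        linarith
      · push Not at hw
        have hlam : lam R1 x = 1 := cl01_one (by linarith)
        obtain ⟨A, hU⟩ := exists_A x
        have hcen : cen R1 x = ct A x * mA A x := by
          unfold cen; rw [hlam, lc_of hU, one_mul]
        have hrd : rad R1 B x = LD m * ch A x := by
          unfold rad; rw [hlam, lr_of hU, one_mul]; ring
        have hch : ch A x ≠ 0 := by
          intro h0
          rw [h0, mul_zero] at hrd
          linarith
        obtain ⟨g1, g2, g3⟩ := ch_ne hch
        rw [g3, one_mul] at hcen
        have hchl : LD m * ch A x ≤ LD m * 1 := mul_le_mul_of_nonneg_left (ch_le A x) hDp.le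
        have hs : |sA A x| ≤ LD m := by
          have e : sA A x = sx x - mA A x := by unfold mA; ring
          rw [e, abs_le]; constructor <;> linarith
        have g4 := gap_shift (m := m) A (xA A x) (sA A x)
        have e : xA A x + sA A x • cc m = x := by
          unfold xA; rw [add_assoc, ← add_smul]; simp
        rw [e] at g4
        have g5 := mul_le_mul_of_nonneg_right hs (by linarith : 0 ≤ nr m)
        have g6 := spr_of_comp hs g1.le
        have g8 : LD m * nr m ≤ L1 m * nr m := mul_le_mul_of_nonneg_right (by linarith) (by linarith)
        have g7 := hbig A (by linarith)
        have g9 : 0 < nr m * LD m := mul_pos (by linarith) hDp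
        linarith
    rw [hT]
    simp only []
    rw [zz_out (by linarith [hrad x]) _ _ _ hout, sub_self, zero_smul, add_zero]
    exact hΨ.r2 x (by linarith) hbig

end SG
end

noncomputable section
namespace SG
open Equiv Topology unitInterval Topology.Homotopy

section cls
variable {N : Type} {K : Type} [TopologicalSpace K] {k : K}

def box (L : ℝ) (t : N → I) : N → ℝ := fun i => L * (2 * (t i : ℝ) - 1)
def unbox (L : ℝ) (q : N → ℝ) : N → I := fun i => Set.projIcc 0 1 zero_le_one (q i / (2 * L) + 1 / 2)

theorem continuous_box (L : ℝ) : Continuous (box (N := N) L) := by unfold box; fun_prop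
theorem continuous_unbox (L : ℝ) : Continuous (unbox (N := N) L) := by
  unfold unbox
  refine continuous_pi fun i => continuous_projIcc.comp ?_
  fun_prop

theorem unbox_box {L : ℝ} (hL : 0 < L) (t : N → I) : unbox L (box L t) = t := by
  funext i
  unfold unbox box
  have : L * (2 * (t i : ℝ) - 1) / (2 * L) + 1 / 2 = t i := by field_simp; ring
  rw [this, Set.projIcc_val]

theorem unbox_bd {L : ℝ} (hL : 0 < L) {q : N → ℝ} {i : N} (h : L ≤ |q i|) :
    unbox L q ∈ Cube.boundary N := by
  refine ⟨i, ?_⟩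
  unfold unbox
  rcases le_abs.1 h with h | h
  · right
    apply Set.projIcc_of_right_le
    have : 1 / 2 ≤ q i / (2 * L) := by rw [le_div_iff₀ (by linarith)]; linarith
    linarith
  · left
    apply Set.projIcc_of_le_left
    have : q i / (2 * L) ≤ - (1 / 2) := by rw [div_le_iff₀ (by linarith)]; linarith
    linarith

theorem box_unbox {L : ℝ} (hL : 0 < L) {q : N → ℝ} (h : ∀ i, |q i| ≤ L) : box L (unbox L q) = q := by
  funext i
  unfold unbox box
  have h1 := abs_le.1 (h i)
  have : q i / (2 * L) + 1 / 2 ∈ Set.Icc (0 : ℝ) 1 := by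
    have e1 : - (1 / 2) ≤ q i / (2 * L) := by rw [le_div_iff₀ (by linarith)]; linarith
    have e2 : q i / (2 * L) ≤ 1 / 2 := by rw [div_le_iff₀ (by linarith)]; linarith
    constructor <;> linarith
  simp only [Set.projIcc_of_mem _ this]
  field_simp
  ring

theorem box_bd {L : ℝ} (hL : 0 < L) {t : N → I} (h : t ∈ Cube.boundary N) : ∃ i, L ≤ |box L t i| := by
  obtain ⟨i, h | h⟩ := h
  · refine ⟨i, ?_⟩
    unfold box
    rw [h]
    simp [abs_of_pos hL]
  · refine ⟨i, ?_⟩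
    unfold box
    rw [h]
    norm_num [abs_of_pos hL]

structure Good (k : K) (L : ℝ) (f : (N → ℝ) → K) : Prop where
  pos : 0 < L
  cont : Continuous f
  supp : ∀ q i, L ≤ |q i| → f q = k

theorem Good.mono {L L' : ℝ} {f : (N → ℝ) → K} (h : Good k L f) (hL : L ≤ L') : Good k L' f :=
  ⟨h.pos.trans_le hL, h.cont, fun q i hi => h.supp q i (hL.trans hi)⟩

def gl {L : ℝ} {f : (N → ℝ) → K} (h : Good k L f) : Ω^ N K k :=
  ⟨⟨fun t => f (box L t), h.cont.comp (continuous_box L)⟩, fun t ht => by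
    obtain ⟨i, hi⟩ := box_bd h.pos ht
    exact h.supp _ i hi⟩

theorem gl_apply {L : ℝ} {f : (N → ℝ) → K} (h : Good k L f) (t) : gl h t = f (box L t) := rfl

def hmk (γ : Ω^ N K k) : HomotopyGroup N K k := Quotient.mk _ γ

open Classical in
def cls (k : K) (L : ℝ) (f : (N → ℝ) → K) : HomotopyGroup N K k :=
  if h : Good k L f then hmk (gl h) else default

theorem cls_eq {L : ℝ} {f : (N → ℝ) → K} (h : Good k L f) : cls k L f = hmk (gl h) := by
  unfold cls; rw [dif_pos h]

theorem cls_homotopy {L : ℝ} (H : ℝ × (N → ℝ) → K) (hH : Continuous H) (hL : 0 < L)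
    (hs : ∀ τ q i, 0 ≤ τ → τ ≤ 1 → L ≤ |q i| → H (τ, q) = k) :
    cls k L (fun q => H (0, q)) = cls k L (fun q => H (1, q)) := by
  have h0 : Good k L (fun q => H (0, q)) := ⟨hL, by fun_prop, fun q i hi => hs _ q i le_rfl zero_le_one hi⟩
  have h1 : Good k L (fun q => H (1, q)) := ⟨hL, by fun_prop, fun q i hi => hs _ q i zero_le_one le_rfl hi⟩
  rw [cls_eq h0, cls_eq h1]
  apply Quotient.sound
  have cb := continuous_box (N := N) L
  refine ⟨⟨⟨⟨fun p => H ((p.1 : ℝ), box L p.2), ?_⟩, ?_, ?_⟩, ?_⟩⟩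
  · exact hH.comp (Continuous.prodMk (by fun_prop) (cb.comp continuous_snd))
  · intro t; simp; rfl
  · intro t; simp; rfl
  · intro τ t ht
    obtain ⟨i, hi⟩ := box_bd hL ht
    simp only [ContinuousMap.coe_mk]
    rw [hs τ _ i τ.2.1 τ.2.2 hi]
    exact (h0.supp _ i hi).symm

theorem homotopy_of_cls {L : ℝ} {f g : (N → ℝ) → K} (hf : Good k L f) (hg : Good k L g)
    (h : cls k L f = cls k L g) : ∃ H : ℝ × (N → ℝ) → K, Continuous H ∧ 
      (∀ q, H (0, q) = f q) ∧ (∀ q, H (1, q) = g q) ∧ ∀ τ q i, L ≤ |q i| → H (τ, q) = k := by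
  rw [cls_eq hf, cls_eq hg] at h
  obtain ⟨F⟩ := Quotient.exact h
  have hL := hf.pos
  have key : ∀ {f : (N → ℝ) → K} (hf : Good k L f) q, gl hf (unbox L q) = f q := by
    intro f hf q
    by_cases hq : ∃ i, L ≤ |q i|
    · obtain ⟨i, hi⟩ := hq
      rw [hf.supp q i hi]
      exact (gl hf).2 _ (unbox_bd hL hi)
    · push Not at hq
      rw [gl_apply, box_unbox hL fun i => (hq i).le]
  refine ⟨fun p => F (Set.projIcc 0 1 zero_le_one p.1, unbox L p.2), ?_, ?_, ?_, ?_⟩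
  · exact F.continuous.comp (Continuous.prodMk (continuous_projIcc.comp continuous_fst)
      ((continuous_unbox L).comp continuous_snd))
  · intro q
    simp only [Set.projIcc_left]
    exact (F.apply_zero _).trans (key hf q)
  · intro q
    simp only [Set.projIcc_right]
    exact (F.apply_one _).trans (key hg q)
  · intro τ q i hi
    have := F.eq_fst (Set.projIcc 0 1 zero_le_one τ) (unbox_bd hL hi)
    exact this.trans ((gl hf).2 _ (unbox_bd hL hi))

theorem exists_rep {L : ℝ} (hL : 0 < L) (e : HomotopyGroup N K k) :
    ∃ f : (N → ℝ) → K, Good k L f ∧ cls k L f = e := by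
  obtain ⟨γ, rfl⟩ := Quotient.exists_rep e
  have hf : Good k L (fun q => γ (unbox L q)) := 
    ⟨hL, (ContinuousMap.continuous γ.1).comp (continuous_unbox L), fun q i hi => γ.2 _ (unbox_bd hL hi)⟩
  refine ⟨_, hf, ?_⟩
  rw [cls_eq hf]
  congr 1
  ext t
  rw [gl_apply, unbox_box hL]

theorem cls_mono {L L' : ℝ} {f : (N → ℝ) → K} (h : Good k L f) (hL : L ≤ L') : cls k L f = cls k L' f := by
  have hp := h.pos
  have h1 : 1 ≤ L' / L := (one_le_div hp).2 hL
  have key := cls_homotopy (k := k) (L := L) (fun p : ℝ × (N → ℝ) => f ((1 + p.1 * (L' / L - 1)) • p.2))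
    (h.cont.comp (by fun_prop)) hp (fun τ q i h0 _ hi => h.supp _ i (by
      simp only [Pi.smul_apply, smul_eq_mul, abs_mul]
      have : 0 ≤ τ * (L' / L - 1) := mul_nonneg h0 (by linarith)
      rw [abs_of_nonneg (by linarith)]
      nlinarith [abs_nonneg (q i)]))
  simp only [zero_mul, add_zero, one_smul, one_mul, add_sub_cancel] at key
  rw [key]
  have hg : Good k L (fun q => f ((L' / L) • q)) := ⟨hp, h.cont.comp (by fun_prop), fun q i hi => 
    h.supp _ i (by
      simp only [Pi.smul_apply, smul_eq_mul, abs_mul]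
      rw [abs_of_nonneg (by linarith)]
      nlinarith [abs_nonneg (q i)])⟩
  rw [cls_eq hg, cls_eq (h.mono hL)]
  congr 1
  ext t
  rw [gl_apply, gl_apply]
  congr 1
  funext i
  simp only [box, Pi.smul_apply, smul_eq_mul]
  field_simp

theorem cls_congr {L : ℝ} {f g : (N → ℝ) → K} (h : ∀ q, f q = g q) : cls k L f = cls k L g := by
  rw [funext h]

variable [DecidableEq N]

theorem box_update (L : ℝ) (t : N → I) (i : N) (r : I) :
    box L (Function.update t i r) = Function.update (box L t) i (L * (2 * (r : ℝ) - 1)) := by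
  funext j
  by_cases h : j = i
  · subst h; simp [box]
  · simp [box, Function.update_of_ne h]

theorem good_zz {L : ℝ} {f f' f'' : (N → ℝ) → K} (hf : Good k L f) (hf' : Good k L f') (hf'' : Good k L f'')
    (i : N) : Good k L (fun q => zz (-L) L (q i) (fun r => f (Function.update q i r))
      (fun r => f' (Function.update q i r)) (fun r => f'' (Function.update q i r))) := by
  have hL := hf.pos
  have cu : Continuous fun p : (N → ℝ) × ℝ => Function.update p.1 i p.2 := continuous_fst.update i continuous_snd
  have ev : ∀ {f : (N → ℝ) → K} (hf : Good k L f) q r, L ≤ |r| → f (Function.update q i r) = k :=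
    fun hf q r hr => hf.supp _ i (by simpa using hr)
  have a1 : L ≤ |L| := le_abs_self L
  have a2 : L ≤ |-L| := by rw [abs_neg]; exact a1
  refine ⟨hL, ?_, ?_⟩
  · refine zz_continuous (by fun_prop) (by fun_prop) (by fun_prop) (fun x => by linarith)
      (hf.cont.comp cu) (hf'.cont.comp cu) (hf''.cont.comp cu) ?_ ?_ ?_ <;> intro q
    · rw [ev hf _ _ a1, ev hf' _ _ a1]
    · rw [ev hf' _ _ a2, ev hf'' _ _ a2]
    · rw [ev hf _ _ a1, ev hf'' _ _ a1]
  · intro q j hj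
    by_cases h : j = i
    · subst h
      rcases le_abs.1 hj with h | h
      · rcases h.lt_or_eq with h | h
        · rw [zz_out (by linarith) _ _ _ (Or.inr h)]
          exact ev hf _ _ hj
        · unfold zz
          rw [if_neg (by linarith), if_neg (by linarith), if_neg (by linarith), if_pos h.ge]
          refine ev hf'' _ _ ?_
          rw [← h]
          ring_nf
          exact a1
      · rw [zz_out (by linarith) _ _ _ (Or.inl (by linarith))]
        exact ev hf _ _ hj
    · have hv : ∀ {f : (N → ℝ) → K} (hf : Good k L f) r, f (Function.update q i r) = k :=
        fun hf r => hf.supp _ j (by rw [Function.update_of_ne h]; exact hj)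
      exact zz_const (by linarith) (hv hf _) fun r _ _ => ⟨hv hf _, hv hf' _, hv hf'' _⟩

theorem cls_zz [Nontrivial N] {L : ℝ} {f f' f'' : (N → ℝ) → K} (hf : Good k L f) (hf' : Good k L f') (hf'' : Good k L f'')
    (i : N) : cls k L (fun q => zz (-L) L (q i) (fun r => f (Function.update q i r))
      (fun r => f' (Function.update q i r)) (fun r => f'' (Function.update q i r))) =
      cls k L f * (cls k L f')⁻¹ * cls k L f'' := by
  have hL := hf.pos
  have e : gl (good_zz hf hf' hf'' i) = GenLoop.transAt i (GenLoop.transAt i (gl hf) (GenLoop.symmAt i (gl hf'))) (gl hf'') := by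
    ext t
    rw [gl_apply]
    have t0 := (t i).2.1
    have t1 := (t i).2.2
    have hb : box L t i = L * (2 * (t i : ℝ) - 1) := rfl
    unfold GenLoop.transAt GenLoop.symmAt zz
    simp only [GenLoop.coe_copy, gl_apply, Function.update_self, Function.update_idem, hb]
    by_cases h2 : (t i : ℝ) ≤ 1 / 2
    · have e1 : (Set.projIcc (0 : ℝ) 1 zero_le_one (2 * (t i : ℝ)) : ℝ) = 2 * (t i : ℝ) := by
        rw [Set.projIcc_of_mem _ ⟨by linarith, by linarith⟩]
      rw [if_pos h2, e1]
      by_cases h4 : (t i : ℝ) ≤ 1 / 4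
      · have e2 : (Set.projIcc (0 : ℝ) 1 zero_le_one (2 * (2 * (t i : ℝ))) : ℝ) = 2 * (2 * (t i : ℝ)) := by
          rw [Set.projIcc_of_mem _ ⟨by linarith, by linarith⟩]
        rw [if_pos (by linarith : 2 * (t i : ℝ) ≤ 1 / 2), box_update, e2]
        by_cases h0 : L * (2 * (t i : ℝ) - 1) ≤ -L
        · rw [if_pos h0]
          have : (t i : ℝ) = 0 := by
            have : L * (t i : ℝ) ≤ 0 := by linarith
            have := (mul_nonneg_iff_of_pos_left hL).2 t0
            have : L * (t i : ℝ) = 0 := by linarith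
            simpa [hL.ne'] using this
          rw [this]; congr 2; ring
        · rw [if_neg h0, if_pos (by nlinarith)]
          congr 2; ring
      · push Not at h4
        have e2 : (Set.projIcc (0 : ℝ) 1 zero_le_one (2 * (2 * (t i : ℝ)) - 1) : ℝ) = 2 * (2 * (t i : ℝ)) - 1 := by
          rw [Set.projIcc_of_mem _ ⟨by linarith, by linarith⟩]
        rw [if_neg (by linarith : ¬ 2 * (t i : ℝ) ≤ 1 / 2), if_neg (by nlinarith), if_neg (by nlinarith), if_pos (by nlinarith)]
        have : (fun j => if j = i then σ (Set.projIcc (0 : ℝ) 1 zero_le_one (2 * (2 * (t i : ℝ)) - 1)) else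
            Function.update t i (Set.projIcc (0 : ℝ) 1 zero_le_one (2 * (2 * (t i : ℝ)) - 1)) j) = 
            Function.update t i (σ (Set.projIcc (0 : ℝ) 1 zero_le_one (2 * (2 * (t i : ℝ)) - 1))) := by
          funext j
          by_cases hj : j = i
          · subst hj; simp
          · simp [hj]
        rw [this, box_update, unitInterval.coe_symm_eq, e2]
        congr 2; ring
    · push Not at h2
      have e1 : (Set.projIcc (0 : ℝ) 1 zero_le_one (2 * (t i : ℝ) - 1) : ℝ) = 2 * (t i : ℝ) - 1 := by
        rw [Set.projIcc_of_mem _ ⟨by linarith, by linarith⟩]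
      rw [if_neg (by linarith : ¬ (t i : ℝ) ≤ 1 / 2), if_neg (by nlinarith), if_neg (by nlinarith), if_neg (by nlinarith),
        if_pos (by nlinarith), box_update, e1]
      congr 2; ring
  rw [cls_eq (good_zz hf hf' hf'' i), cls_eq hf, cls_eq hf', cls_eq hf'', e]
  have m1 : hmk (gl hf'') * hmk (GenLoop.transAt i (gl hf) (GenLoop.symmAt i (gl hf'))) = hmk (GenLoop.transAt i
      (GenLoop.transAt i (gl hf) (GenLoop.symmAt i (gl hf'))) (gl hf'')) := HomotopyGroup.mul_spec
  have m2 : hmk (GenLoop.symmAt i (gl hf')) * hmk (gl hf) =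
      hmk (GenLoop.transAt i (gl hf) (GenLoop.symmAt i (gl hf'))) := HomotopyGroup.mul_spec
  have m3 : (hmk (gl hf'))⁻¹ = hmk (GenLoop.symmAt i (gl hf')) := HomotopyGroup.inv_spec
  rw [← m1, ← m2, ← m3, mul_comm, mul_comm (hmk (gl hf'))⁻¹]

end cls
end SG
end

noncomputable section
namespace SG
open Equiv Topology unitInterval Topology.Homotopy

variable {m : ℕ}

def GoodF (L : ℝ) (f : Fam m) : Prop := ∀ A, Good st0 L (f A)

theorem GoodF.suppF {L : ℝ} {f : Fam m} (h : GoodF L f) : SuppF L f := fun A => (h A).supp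

theorem ext_congr {f g : Fam m} (hf : GoodF (LX m) f) (hg : GoodF (LX m) g)
    (h : ∀ A, cls st0 (LX m) (f A) = cls st0 (LX m) (g A)) (hE : ExtF f) : ExtF g := by
  choose H hH h0 h1 hs using fun A => homotopy_of_cls (hf A) (hg A) (h A)
  have := N1 H hH (fun τ A q i hi => hs A τ q i hi) (by
    simpa only [h0] using hE)
  simpa only [h1] using this

def sh (A : PS m) (τ : ℝ) (c : NN m A.1.card → ℝ) : NN m A.1.card → ℝ := fun i =>
  if i = i0 A then c (i0 A) * ((1 - τ) + τ * pA A (i0 A)) else c i + τ * c (i0 A) * pA A i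

theorem continuous_sh (A : PS m) : Continuous fun p : ℝ × (NN m A.1.card → ℝ) => sh A p.1 p.2 := by
  refine continuous_pi fun i => ?_
  unfold sh
  by_cases h : i = i0 A
  · simp only [h, if_true]; fun_prop
  · simp only [h, if_false]; fun_prop

theorem continuous_sh1 (A : PS m) (τ : ℝ) : Continuous (sh A τ) :=
  (continuous_sh A).comp (by fun_prop : Continuous fun q : NN m A.1.card → ℝ => (τ, q))

theorem sh_zero (A : PS m) (c) : sh A 0 c = c := by
  funext i
  unfold sh
  split_ifs with h
  · rw [h]; ring
  · ring

theorem sq_sh_one (A : PS m) (c) : sq A (sh A 1 c) = c (i0 A) := by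
  have := pA_ge A (i0 A)
  unfold sq sh
  rw [if_pos rfl]
  field_simp
  ring

theorem sh_update (A : PS m) (c) (r : ℝ) :
    sh A 1 (Function.update c (i0 A) r) = sh A 1 c + (r - c (i0 A)) • pA A := by
  funext i
  unfold sh
  simp only [Pi.add_apply, Pi.smul_apply, smul_eq_mul, Function.update_self]
  by_cases h : i = i0 A
  · subst h; simp; ring
  · simp [h]; ring

theorem sh_supp {f : Fam m} (hf : SuppF (LS m) f) (A : PS m) {τ : ℝ} (h0 : 0 ≤ τ) (h1 : τ ≤ 1) (c i)
    (hi : LD m ≤ |c i|) : f A (sh A τ c) = st0 := by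
  by_contra hcon
  have hq : ∀ j, |sh A τ c j| < LS m := fun j => by
    by_contra h
    push Not at h
    exact hcon (hf A _ j h)
  have hp := pA_ge A (i0 A)
  have hS := LS_pos m
  have hD := LD_ge m
  have hn := nr_ge m
  have k0 : |c (i0 A)| < LS m := by
    have h := hq (i0 A)
    unfold sh at h
    have hD1 : 1 ≤ (1 - τ) + τ * pA A (i0 A) := by nlinarith
    rw [if_pos rfl, abs_mul, abs_of_nonneg (by linarith : 0 ≤ (1 - τ) + τ * pA A (i0 A))] at h
    nlinarith [abs_nonneg (c (i0 A))]
  by_cases hii : i = i0 A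
  · rw [hii] at hi; linarith
  · have h := hq i
    unfold sh at h
    rw [if_neg hii] at h
    have hpi := pA_ge A i
    have hpi' := pA_le A i
    have h3 : |τ * c (i0 A) * pA A i| ≤ LS m * nr m := by
      rw [abs_mul, abs_mul, abs_of_nonneg h0, abs_of_nonneg (by linarith : 0 ≤ pA A i)]
      exact mul_le_mul ((mul_le_of_le_one_left (abs_nonneg _) h1).trans k0.le) hpi' (by linarith) (by linarith)
    have h4 := abs_sub (c i + τ * c (i0 A) * pA A i) (τ * c (i0 A) * pA A i)
    rw [add_sub_cancel_right] at h4
    unfold LD at hi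
    linarith

theorem Tf_supp {f f' f'' : Fam m} (hf : SuppF (LS m) f) (hf' : SuppF (LS m) f') (hf'' : SuppF (LS m) f'')
    (A : PS m) (q) (h : LD m < |sq A q| ∨ LD m < omq A q) : Tf f f' f'' A q = st0 := by
  have hS := LS_pos m
  have hD := LD_ge m
  have hz : LD m < omq A q → ∀ r : ℝ, ∀ {g : Fam m}, SuppF (LS m) g → g A (q + r • pA A) = st0 := by
    intro hom r g hg
    by_contra hcon
    have : omq A (q + r • pA A) ≤ LD m := omq_le fun i => by
      by_contra h9
      push Not at h9
      exact hcon (hg A _ i h9)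
    rw [omq_add] at this
    linarith
  rcases h with h | h
  · unfold Tf
    rw [zz_out (by linarith) _ _ _ (by
      rcases lt_abs.1 h with h | h
      · right; exact h
      · left; linarith), sub_self, zero_smul, add_zero]
    exact hf A q (i0 A) (by linarith [abs_sq_le A q])
  · exact zz_const (by linarith) (hz h _ hf) fun r _ _ => ⟨hz h _ hf, hz h _ hf', hz h _ hf''⟩

theorem Tf_sh_supp {f f' f'' : Fam m} (hf : SuppF (LS m) f) (hf' : SuppF (LS m) f') (hf'' : SuppF (LS m) f'')
    (A : PS m) {τ : ℝ} (h0 : 0 ≤ τ) (h1 : τ ≤ 1) (c i)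
    (hi : LX m ≤ |c i|) : Tf f f' f'' A (sh A τ c) = st0 := by
  by_contra hcon
  have hs : |sq A (sh A τ c)| ≤ LD m := by
    by_contra h
    exact hcon (Tf_supp hf hf' hf'' A _ (Or.inl (not_le.1 h)))
  have ho : omq A (sh A τ c) ≤ LD m := by
    by_contra h
    exact hcon (Tf_supp hf hf' hf'' A _ (Or.inr (not_le.1 h)))
  have hp := pA_ge A (i0 A)
  have hp' := pA_le A (i0 A)
  have hDp := LD_pos m
  have hn := nr_ge m
  have hD1 : 1 ≤ (1 - τ) + τ * pA A (i0 A) := by nlinarith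
  obtain ⟨D, hDe⟩ : ∃ D, D = (1 - τ) + τ * pA A (i0 A) := ⟨_, rfl⟩
  have esq : sq A (sh A τ c) = c (i0 A) * D / pA A (i0 A) := by
    unfold sq sh; rw [if_pos rfl, hDe]
  rw [← hDe] at hD1
  have hDn : 0 < LD m * nr m := by positivity
  have hLXe : LX m = (3 + nr m) * LD m := rfl
  by_cases hii : i = i0 A
  · rw [hii] at hi
    rw [esq, abs_div, abs_mul, abs_of_pos (by linarith : 0 < D),
      abs_of_pos (by linarith : 0 < pA A (i0 A)), div_le_iff₀ (by linarith)] at hs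
    have h2 : |c (i0 A)| ≤ |c (i0 A)| * D := le_mul_of_one_le_right (abs_nonneg _) hD1
    have h3 : LD m * pA A (i0 A) ≤ LD m * nr m := mul_le_mul_of_nonneg_left hp' hDp.le
    linarith
  · have hv := (norm_le_pi_norm (sh A τ c - sq A (sh A τ c) • pA A) i).trans ho
    simp only [Pi.sub_apply, Pi.smul_apply, smul_eq_mul, Real.norm_eq_abs] at hv
    have hshi : sh A τ c i = c i + τ * c (i0 A) * pA A i := by unfold sh; rw [if_neg hii]
    rw [hshi] at hv
    have hpi := pA_ge A i
    have hpi' := pA_le A i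
    have e : τ * c (i0 A) - sq A (sh A τ c) = - (c (i0 A) * (1 - τ) / pA A (i0 A)) := by
      rw [esq, hDe]; field_simp; ring
    have h4 : |τ * c (i0 A) - sq A (sh A τ c)| ≤ LD m := by
      refine le_trans ?_ hs
      rw [e, esq, abs_neg, abs_div, abs_div, abs_mul, abs_mul]
      apply div_le_div_of_nonneg_right _ (abs_nonneg _)
      apply mul_le_mul_of_nonneg_left _ (abs_nonneg _)
      rw [abs_of_nonneg (by linarith), abs_of_nonneg (by linarith), hDe]
      nlinarith
    have h5 : |(τ * c (i0 A) - sq A (sh A τ c)) * pA A i| ≤ LD m * nr m := by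
      rw [abs_mul, abs_of_nonneg (by linarith : 0 ≤ pA A i)]
      exact mul_le_mul h4 hpi' (by linarith) hDp.le
    have h6 := abs_sub (c i + τ * c (i0 A) * pA A i - sq A (sh A τ c) * pA A i)
      ((τ * c (i0 A) - sq A (sh A τ c)) * pA A i)
    have e2 : c i + τ * c (i0 A) * pA A i - sq A (sh A τ c) * pA A i -
      ((τ * c (i0 A) - sq A (sh A τ c)) * pA A i) = c i := by ring
    rw [e2] at h6
    linarith

theorem continuous_Tf {f f' f'' : Fam m} (hf : GoodF (LS m) f) (hf' : GoodF (LS m) f') (hf'' : GoodF (LS m) f'')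
    (A : PS m) : Continuous (Tf f f' f'' A) := by
  have hS := LS_pos m
  have hD := LD_ge m
  have cu : Continuous fun p : (NN m A.1.card → ℝ) × ℝ => p.1 + (p.2 - sq A p.1) • pA A := by fun_prop
  have ev : ∀ {f : Fam m} (hf : GoodF (LS m) f) q r, LD m ≤ |r| → f A (q + (r - sq A q) • pA A) = st0 := by
    intro f hf q r hr
    refine (hf A).supp _ (i0 A) ?_
    have h1 := abs_sq_le A (q + (r - sq A q) • pA A)
    rw [sq_add, add_sub_cancel] at h1
    linarith
  have a1 : LD m ≤ |LD m| := le_abs_self _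
  have a2 : LD m ≤ |-LD m| := by rw [abs_neg]; exact a1
  refine zz_continuous (by fun_prop) (by fun_prop) (by fun_prop) (fun x => by linarith)
      ((hf A).cont.comp cu) ((hf' A).cont.comp cu) ((hf'' A).cont.comp cu) ?_ ?_ ?_ <;> intro q
  · rw [ev hf _ _ a1, ev hf' _ _ a1]
  · rw [ev hf' _ _ a2, ev hf'' _ _ a2]
  · rw [ev hf _ _ a1, ev hf'' _ _ a1]

theorem Tf_sh (f f' f'' : Fam m) (A : PS m) (c) : Tf f f' f'' A (sh A 1 c) =
    zz (-LD m) (LD m) (c (i0 A)) (fun r => f A (sh A 1 (Function.update c (i0 A) r)))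
      (fun r => f' A (sh A 1 (Function.update c (i0 A) r)))
      (fun r => f'' A (sh A 1 (Function.update c (i0 A) r))) := by
  unfold Tf
  simp only [sh_update, sq_sh_one]

theorem good_sh {f : Fam m} (hf : GoodF (LS m) f) (A : PS m) : Good st0 (LD m) (fun c => f A (sh A 1 c)) :=
  ⟨LD_pos m, (hf A).cont.comp (continuous_sh1 A 1),
    fun q i hi => sh_supp hf.suppF A zero_le_one le_rfl q i hi⟩

theorem LD_le_LX (m : ℕ) : LD m ≤ LX m := by linarith [LX_ge m, LD_pos m]

theorem cls_sh {f : Fam m} (hf : GoodF (LS m) f) (A : PS m) :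
    cls st0 (LD m) (fun c => f A (sh A 1 c)) = cls st0 (LX m) (f A) := by
  rw [cls_mono (good_sh hf A) (LD_le_LX m)]
  have := cls_homotopy (k := (st0 : KM m)) (L := LX m) (fun p : ℝ × (NN m A.1.card → ℝ) => f A (sh A p.1 p.2))
    ((hf A).cont.comp (continuous_sh A)) (LX_pos m)
    (fun τ q i h0 h1 hi => sh_supp hf.suppF A h0 h1 q i ((LD_le_LX m).trans hi))
  rw [← this]
  simp only [sh_zero]

theorem good_Tf {f f' f'' : Fam m} (hf : GoodF (LS m) f) (hf' : GoodF (LS m) f') (hf'' : GoodF (LS m) f'') :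
    GoodF (LX m) (Tf f f' f'') := fun A => ⟨LX_pos m, continuous_Tf hf hf' hf'' A, fun q i hi => by
  have := Tf_sh_supp hf.suppF hf'.suppF hf''.suppF A le_rfl zero_le_one q i hi
  rwa [sh_zero] at this⟩

theorem cls_Tf {f f' f'' : Fam m} (hf : GoodF (LS m) f) (hf' : GoodF (LS m) f') (hf'' : GoodF (LS m) f'')
    (A : PS m) : cls st0 (LX m) (Tf f f' f'' A) =
    cls st0 (LX m) (f A) * (cls st0 (LX m) (f' A))⁻¹ * cls st0 (LX m) (f'' A) := by
  have hT := cls_homotopy (k := (st0 : KM m)) (L := LX m)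
    (fun p : ℝ × (NN m A.1.card → ℝ) => Tf f f' f'' A (sh A p.1 p.2))
    ((continuous_Tf hf hf' hf'' A).comp (continuous_sh A)) (LX_pos m)
    (fun τ q i h0 h1 hi => Tf_sh_supp hf.suppF hf'.suppF hf''.suppF A h0 h1 q i hi)
  simp only [sh_zero, Tf_sh] at hT
  have g := good_zz (good_sh hf A) (good_sh hf' A) (good_sh hf'' A) (i0 A)
  have c := cls_zz (good_sh hf A) (good_sh hf' A) (good_sh hf'' A) (i0 A)
  rw [cls_sh hf, cls_sh hf', cls_sh hf''] at c
  rw [← c, cls_mono g (LD_le_LX m)]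
  exact hT

/-- realizable classes -/
def NNset (m : ℕ) : Set (∀ A : PS m, HomotopyGroup (NN m A.1.card) (KM m) st0) :=
  {e | ∃ f : Fam m, GoodF (LS m) f ∧ ExtF f ∧ ∀ A, cls st0 (LX m) (f A) = e A}

theorem exists_repF (e : ∀ A : PS m, HomotopyGroup (NN m A.1.card) (KM m) st0) :
    ∃ f : Fam m, GoodF (LS m) f ∧ ∀ A, cls st0 (LX m) (f A) = e A := by
  have hS := LS_pos m
  choose f hf he using fun A => exists_rep (L := LS m) (by linarith) (e A)
  exact ⟨f, hf, fun A => by rw [← cls_mono (hf A) (LS_le_LX m).le]; exact he A⟩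

theorem NNset_real {e} (h : e ∈ NNset m) {g : Fam m} (hg : GoodF (LS m) g) 
    (hc : ∀ A, cls st0 (LX m) (g A) = e A) : ExtF g := by
  obtain ⟨f, hf, hE, he⟩ := h
  exact ext_congr (fun A => (hf A).mono (LS_le_LX m).le) (fun A => (hg A).mono (LS_le_LX m).le)
    (fun A => by rw [he, hc]) hE

theorem NNset_fold {e e' e''} (h : e ∈ NNset m) (h' : e' ∈ NNset m) (h'' : e'' ∈ NNset m) :
    e * e'⁻¹ * e'' ∈ NNset m := by
  obtain ⟨f, hf, hE, he⟩ := h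
  obtain ⟨f', hf', hE', he'⟩ := h'
  obtain ⟨f'', hf'', hE'', he''⟩ := h''
  obtain ⟨g, hg, hc⟩ := exists_repF (e * e'⁻¹ * e'')
  refine ⟨g, hg, ?_, hc⟩
  refine ext_congr (good_Tf hf hf' hf'') (fun A => (hg A).mono (LS_le_LX m).le) (fun A => ?_)
    (N2 hf.suppF hf'.suppF hf''.suppF hE hE' hE'')
  rw [cls_Tf hf hf' hf'', hc, he, he', he'']
  rfl

theorem NNset_base (j : PS m) : (fun A : PS m => cls st0 (LX m) (FF (pmS (gg A.1) j) A.1.card)) ∈ NNset m :=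
  ⟨fun A => FF (pmS (gg A.1) j) A.1.card, fun A => ⟨by linarith [LS_pos m], continuous_FF _ _,
    fun q i hi => FF_supp _ A q i hi⟩, ext_EP j, fun _ => rfl⟩

end SG
end

noncomputable section
namespace SG
open Equiv Topology unitInterval Topology.Homotopy

variable {m : ℕ}

theorem torsor_prod {G J : Type*} [CommGroup G] [Fintype J] (S : Set G)
    (hS : ∀ x ∈ S, ∀ y ∈ S, ∀ z ∈ S, x * y⁻¹ * z ∈ S) (e : J → G) (he : ∀ j, e j ∈ S)
    (u : J → ℤ) (hu : ∑ j, u j = 1) : ∏ j, e j ^ u j ∈ S := by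
  classical
  have hne : Nonempty J := by
    by_contra h
    rw [not_nonempty_iff] at h
    simp at hu
  obtain ⟨j0⟩ := hne
  set b := e j0 with hb
  have hbS : b ∈ S := he j0
  let H : Subgroup G :=
    { carrier := {x | x * b ∈ S}
      one_mem' := by simpa using hbS
      mul_mem' := by
        intro x y hx hy
        have := hS _ hx _ hbS _ hy
        have e1 : x * b * b⁻¹ * (y * b) = x * y * b := by
          rw [mul_inv_cancel_right, mul_assoc]
        rwa [e1] at this
      inv_mem' := by
        intro x hx
        have := hS _ hbS _ hx _ hbS
        have e1 : b * (x * b)⁻¹ * b = x⁻¹ * b := by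
          rw [mul_inv_rev, mul_inv_cancel_left]
        rwa [e1] at this }
  have h1 : ∏ j, (e j * b⁻¹) ^ u j ∈ H := by
    refine Subgroup.prod_mem _ fun j _ => Subgroup.zpow_mem _ ?_ _
    change e j * b⁻¹ * b ∈ S
    simpa using he j
  have h2 : ∏ j, (e j * b⁻¹) ^ u j = (∏ j, e j ^ u j) * b⁻¹ := by
    simp only [mul_zpow, Finset.prod_mul_distrib]
    congr 1
    have h4 : ∀ s : Finset J, ∏ j ∈ s, b⁻¹ ^ u j = b⁻¹ ^ (∑ j ∈ s, u j) := by
      intro s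
      induction s using Finset.induction_on with
      | empty => simp
      | insert a s ha ih => rw [Finset.prod_insert ha, Finset.sum_insert ha, ih, zpow_add]
    rw [h4, hu, zpow_one]
  rw [h2] at h1
  have h3 : (∏ j, e j ^ u j) * b⁻¹ * b ∈ S := h1
  simpa using h3

def TT (m : ℕ) (u : ℕ → ℤ) (a : ℕ) : HomotopyGroup (NN m a) (KM m) st0 :=
  ∏ j : PS m, cls st0 (LX m) (FF j a) ^ u j.1.card

theorem TT_mem (u : ℕ → ℤ) (hu : ∑ A : PS m, u A.1.card = 1) :
    (fun A : PS m => TT m u A.1.card) ∈ NNset m := by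
  have h := torsor_prod (NNset m) (fun x hx y hy z hz => NNset_fold hx hy hz)
    (fun j : PS m => fun A : PS m => cls st0 (LX m) (FF (pmS (gg A.1) j) A.1.card))
    NNset_base (fun j => u j.1.card) hu
  convert h using 1
  funext A
  rw [Finset.prod_apply]
  simp only [Pi.pow_apply]
  unfold TT
  symm
  refine Fintype.prod_equiv (pmE (gg A.1)) _ _ fun j => ?_
  change _ = cls st0 (LX m) (FF (pmS (gg A.1) j) A.1.card) ^ u (pm (gg A.1) j.1).card
  rw [card_pm]

theorem exists_inv_rep (u : ℕ → ℤ) (hu : ∑ A : PS m, u A.1.card = 1) :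
    ∃ rep : ∀ a : ℕ, (NN m a → ℝ) → KM m, (∀ a, Good st0 (LS m) (rep a)) ∧
      ExtF (fun A : PS m => rep A.1.card) := by
  have hS := LS_pos m
  choose rep hr hc using fun a => exists_rep (L := LS m) (by linarith) (TT m u a)
  refine ⟨rep, hr, NNset_real (TT_mem u hu) (fun A => hr _) fun A => ?_⟩
  rw [← cls_mono (hr _) (LS_le_LX m).le, hc]

theorem sum_card_eq (a : ℕ) (ha : 0 < a) (ha' : a < m + 5) :
    ∑ A : PS m, (if A.1.card = a then (1 : ℤ) else 0) = (m + 5).choose a := by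
  have h1 : ∑ A : PS m, (if A.1.card = a then (1 : ℤ) else 0) =
      ((Finset.univ.filter fun A : PS m => A.1.card = a).card : ℤ) := by
    rw [Finset.sum_boole]
  rw [h1]
  norm_cast
  have h2 : (Finset.powersetCard a (Finset.univ : Finset (Fin (m + 5)))).card = (m + 5).choose a := by
    simp
  rw [← h2]
  refine Finset.card_bij (fun A _ => A.1) ?_ ?_ ?_
  · intro A hA
    simpa using hA
  · intro A _ B _ h
    exact Subtype.ext h
  · intro B hB
    have hB' : B.card = a := by simpa using hB
    refine ⟨⟨B, Finset.card_pos.1 (by omega), Finset.card_pos.1 ?_⟩, by simpa using hB', rfl⟩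
    rw [Finset.card_compl, Fintype.card_fin]
    omega

theorem choose_coprime {p : ℕ} (hp : p.Prime) (hodd : Odd p) : IsCoprime (p : ℤ) ((2 * p).choose p : ℤ) := by
  have := Fact.mk hp
  have h := Choose.choose_modEq_choose_mod_mul_choose_div_nat (n := 2 * p) (k := p) (p := p)
  have h2 : 2 * p / p = 2 := Nat.mul_div_cancel _ hp.pos
  rw [Nat.mul_mod_left, Nat.mod_self, h2, Nat.div_self hp.pos] at h
  norm_num at h
  rw [Nat.isCoprime_iff_coprime, hp.coprime_iff_not_dvd]
  intro hd
  have h3 : p ∣ 2 := (h.dvd_iff dvd_rfl).1 hd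
  have := (Nat.prime_dvd_prime_iff_eq hp Nat.prime_two).1 h3
  subst this
  exact absurd hodd (by decide)

theorem exists_weights {p : ℕ} (hp : p.Prime) (hodd : Odd p) (hm : m + 5 = 2 * p) :
    ∃ u : ℕ → ℤ, ∑ A : PS m, u A.1.card = 1 := by
  obtain ⟨s, t, hst⟩ := choose_coprime hp hodd
  refine ⟨fun a => s * (if a = 2 then 1 else 0) - s * (p - 1) * (if a = 1 then 1 else 0)
    + t * (if a = p then 1 else 0), ?_⟩
  rw [Finset.sum_add_distrib, Finset.sum_sub_distrib, ← Finset.mul_sum, ← Finset.mul_sum, ← Finset.mul_sum,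
    sum_card_eq 2 (by omega) (by omega), sum_card_eq 1 (by omega) (by omega), sum_card_eq p hp.pos (by omega), hm]
  have h2 : ((2 * p).choose 2 : ℤ) = p * (2 * p - 1) := by
    have h := Nat.choose_two_right (2 * p)
    have e : 2 * p * (2 * p - 1) / 2 = p * (2 * p - 1) := by
      rw [mul_assoc]; exact Nat.mul_div_cancel_left _ (by norm_num)
    rw [h, e]
    have := hp.pos
    push_cast [Nat.cast_sub (show 1 ≤ 2 * p by omega)]
    ring
  rw [h2, Nat.choose_one_right]
  push_cast
  linear_combination hst

end SG
end

noncomputable section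
namespace SG
open Equiv Topology

variable {m : ℕ}

theorem rep_congr (rep : ∀ a : ℕ, (NN m a → ℝ) → KM m) {a b : ℕ} (h : a = b) (q : NN m a → ℝ) (q' : NN m b → ℝ)
    (hq : ∀ i h1 h2, q ⟨i, h1⟩ = q' ⟨i, h2⟩) : rep a q = rep b q' := by
  subst h
  congr 1
  funext i
  exact hq i.1 i.2 i.2

theorem exists_inversion {π : Perm (Fin (m + 5))} (h : π ≠ 1) : ∃ i j, i < j ∧ π⁻¹ j < π⁻¹ i := by
  by_contra hc
  push Not at hc
  apply h
  have hm : StrictMono (π⁻¹ : Perm (Fin (m + 5))) := by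
    intro i j hij
    exact lt_of_le_of_ne (hc i j hij) fun e => hij.ne (π⁻¹.injective e)
  have h1 : ⇑(π⁻¹) = id := by
    have := Subsingleton.elim (hm.orderIsoOfSurjective _ π⁻¹.surjective) (OrderIso.refl _)
    funext i
    have h2 := congrArg (fun f => f i) this
    simpa using h2
  have h3 : π⁻¹ = 1 := Equiv.ext fun i => by rw [h1]; rfl
  simpa using h3

theorem compat {rep : ∀ a : ℕ, (NN m a → ℝ) → KM m} {Ψ : VV m → KM m} {R M : ℝ}
    (hR : RealF Ψ (fun A : PS m => rep A.1.card) R) (hM : L1 m + 1 ≤ M) (hM1 : R + 2 * L1 m ≤ M)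
    {π : Perm (Fin (m + 5))} {x : VV m} (h : MC M π x) : Ψ x = act π (Ψ (x ∘ π)) := by
  have hL := L1_ge' m
  have hn := nr_ge m
  by_cases hπ : π = 1
  · subst hπ
    rw [act_one]; rfl
  obtain ⟨i, j, hij, hji⟩ := exists_inversion hπ
  have hs : M ≤ spread x := (h i j hij hji).trans (abs_le_spread x i j)
  have hs' : M ≤ spread (x ∘ π) := by
    refine (h i j hij hji).trans ?_
    have := abs_le_spread (x ∘ π) (π⁻¹ i) (π⁻¹ j)
    simpa using this
  by_cases hc : ∃ A : PS m, 0 < gap A x ∧ spr A x < L1 m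
  · obtain ⟨A, hg, hsp⟩ := hc
    have h1 := spread_le_gap_spr A x hg.le
    have hgg : gg (pm π A.1) = π⁻¹ * gg A.1 := gg_pm π fun i j e hij =>
      h.lt hij (by linarith [abs_le_spr x e])
    rw [hR.r1 A x (by linarith) hsp.le, hR.r1 (pmS π A) (x ∘ π) (by rw [gap_pmS]; linarith)
      (by rw [spr_pmS]; exact hsp.le)]
    have e1 : gg (pmS π A).1 = π⁻¹ * gg A.1 := hgg
    rw [e1, act_act, mul_inv_cancel_left]
    congr 1
    refine rep_congr rep (card_pm π A.1).symm _ _ fun i h1 h2 => ?_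
    unfold chart
    rw [e1]
    simp
  · push Not at hc
    have hc' : ∀ A : PS m, 0 < gap A (x ∘ π) → L1 m ≤ spr A (x ∘ π) := by
      intro A hA
      have e : A = pmS π (pmS π⁻¹ A) := by rw [pmS_mul]; simp [pmS_one]
      rw [e, gap_pmS] at hA
      rw [e, spr_pmS]
      exact hc _ hA
    rw [hR.r2 x (by linarith) hc, hR.r2 _ (by linarith) hc']
    unfold ap
    rw [EP_sym hM h]
    congr 1
    apply EP_indep
    obtain ⟨i, k, e⟩ := exists_spread (x ∘ π)
    obtain ⟨A, h3, -⟩ := GAP (x := x ∘ π) (i := k) (j := i) (h := 3) (by norm_num)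
      (by linarith)
    exact three_le_bb h3.le (by linarith [hc' A (by linarith)])

def offd (m : ℕ) : Finset (Fin (m + 5) × Fin (m + 5)) := Finset.univ.filter fun p => p.1 ≠ p.2

theorem offd_nonempty (m : ℕ) : (offd m).Nonempty := ⟨(0, 1), by simp [offd]⟩

def rho (z : ConfigSpace (m + 5)) : ℝ := (offd m).inf' (offd_nonempty m) fun p => ‖z.1 p.1 - z.1 p.2‖

theorem continuous_rho : Continuous (rho (m := m)) := by
  unfold rho
  refine Continuous.finset_inf'_apply _ fun p _ => ?_
  have h : ∀ i, Continuous fun z : ConfigSpace (m + 5) => z.1 i := fun i =>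
    (continuous_apply i).comp continuous_subtype_val
  exact ((h _).sub (h _)).norm

theorem rho_pos (z : ConfigSpace (m + 5)) : 0 < rho z := by
  unfold rho
  rw [Finset.lt_inf'_iff]
  intro p hp
  have hp' : p.1 ≠ p.2 := by simpa [offd] using hp
  exact norm_pos_iff.2 (sub_ne_zero.2 fun e => hp' (z.2 e))

theorem rho_le (z : ConfigSpace (m + 5)) {i j} (h : i ≠ j) : rho z ≤ ‖z.1 i - z.1 j‖ :=
  Finset.inf'_le (f := fun p : Fin (m + 5) × Fin (m + 5) => ‖z.1 p.1 - z.1 p.2‖) (b := (i, j)) (by simpa [offd] using h)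

theorem rho_perm_le (σ : Perm (Fin (m + 5))) (z) : rho z ≤ rho (configPermMap (m + 5) σ z) := by
  conv_rhs => unfold rho
  rw [Finset.le_inf'_iff]
  intro p hp
  have hp' : p.1 ≠ p.2 := by simpa [offd] using hp
  exact rho_le z fun e => hp' (σ⁻¹.injective e)

theorem rho_perm (σ : Perm (Fin (m + 5))) (z) : rho (configPermMap (m + 5) σ z) = rho z := by
  apply le_antisymm _ (rho_perm_le σ z)
  have h := rho_perm_le σ⁻¹ (configPermMap (m + 5) σ z)
  have e : configPermMap (m + 5) σ⁻¹ (configPermMap (m + 5) σ z) = z := by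
    apply Subtype.ext; funext i; simp [configPermMap]
  rwa [e] at h

def xx (M : ℝ) (z : ConfigSpace (m + 5)) : VV m := fun i => (z.1 i).re * (M / rho z)

theorem continuous_xx (M : ℝ) : Continuous (xx (m := m) M) := by
  refine continuous_pi fun i => ?_
  have h : Continuous fun z : ConfigSpace (m + 5) => z.1 i := (continuous_apply i).comp continuous_subtype_val
  exact (Complex.continuous_re.comp h).mul (continuous_const.div continuous_rho fun z => (rho_pos z).ne')

def Cset (m : ℕ) (τ : Perm (Fin (m + 5))) : Set (ConfigSpace (m + 5)) :=
  {z | ∀ i j, i ≤ j → (z.1 (τ i)).im ≤ (z.1 (τ j)).im}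

theorem isClosed_Cset (τ : Perm (Fin (m + 5))) : IsClosed (Cset m τ) := by
  have h : ∀ i, Continuous fun z : ConfigSpace (m + 5) => (z.1 i).im := fun i =>
    Complex.continuous_im.comp ((continuous_apply i).comp continuous_subtype_val)
  simp only [Cset, Set.setOf_forall]
  exact isClosed_iInter fun i => isClosed_iInter fun j => isClosed_iInter fun _ => isClosed_le (h _) (h _)

theorem MC_of_mem {M : ℝ} (hM : 0 ≤ M) {τ τ' : Perm (Fin (m + 5))} {z : ConfigSpace (m + 5)} (h : z ∈ Cset m τ)
    (h' : z ∈ Cset m τ') : MC M (τ⁻¹ * τ') (xx M z ∘ τ) := by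
  intro i j hij hji
  have h1 := h i j hij.le
  have h2 := h' _ _ hji.le
  simp only [mul_inv_rev, inv_inv, Perm.mul_apply] at h2
  simp only [← Perm.mul_apply, mul_inv_cancel_left, ← mul_assoc, mul_inv_cancel, one_mul] at h2
  have hne : τ i ≠ τ j := fun e => hij.ne (τ.injective e)
  have hr := rho_le z hne
  have hp := rho_pos z
  have e : ‖z.1 (τ i) - z.1 (τ j)‖ = |(z.1 (τ i)).re - (z.1 (τ j)).re| := by
    have e1 : z.1 (τ i) - z.1 (τ j) = (((z.1 (τ i)).re - (z.1 (τ j)).re : ℝ) : ℂ) := by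
      apply Complex.ext
      · simp
      · simp; linarith
    rw [e1, Complex.norm_real, Real.norm_eq_abs]
  rw [e] at hr
  have e2 : (xx M z ∘ τ) i - (xx M z ∘ τ) j = ((z.1 (τ i)).re - (z.1 (τ j)).re) * (M / rho z) := by
    simp only [xx, Function.comp]; ring
  rw [e2, abs_mul, abs_of_nonneg (div_nonneg hM hp.le)]
  calc M = rho z * (M / rho z) := by field_simp
    _ ≤ _ := mul_le_mul_of_nonneg_right hr (div_nonneg hM hp.le)

theorem genus_of_ext {rep : ∀ a : ℕ, (NN m a → ℝ) → KM m} (hE : ExtF (fun A : PS m => rep A.1.card)) :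
    SchwartzGenusLE (m + 5) (m + 4) := by
  obtain ⟨Ψ, R, hΨ, hR⟩ := hE
  obtain ⟨M, hM, hM1⟩ : ∃ M, L1 m + 1 ≤ M ∧ R + 2 * L1 m ≤ M := ⟨max (L1 m + 1) (R + 2 * L1 m), le_max_left _ _, le_max_right _ _⟩
  have hM0 : 0 ≤ M := by linarith [L1_ge' m, nr_ge m]
  have hcov : ∀ z : ConfigSpace (m + 5), ∃ τ, z ∈ Cset m τ := fun z =>
    ⟨Tuple.sort fun i => (z.1 i).im, fun i j hij => Tuple.monotone_sort (fun i => (z.1 i).im) hij⟩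
  obtain ⟨Φ, hΦ, hΦe⟩ := glue (Cset m) (fun τ z => act τ (Ψ (xx M z ∘ τ))) isClosed_Cset hcov
    (fun τ => by
      refine ((continuous_act τ).comp (hΨ.comp ?_)).continuousOn
      exact continuous_pi fun i => (continuous_apply (τ i)).comp (continuous_xx M))
    (fun τ τ' z h h' => by
      change act τ (Ψ (xx M z ∘ τ)) = act τ' (Ψ (xx M z ∘ τ'))
      rw [compat hR hM hM1 (MC_of_mem hM0 h h'), act_act, mul_inv_cancel_left]
      have e : (xx M z ∘ τ) ∘ ⇑(τ⁻¹ * τ') = xx M z ∘ τ' := by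
        funext i; simp
      rw [e])
  refine genus_of_map Φ hΦ fun σ z => ?_
  obtain ⟨τ, hτ⟩ := hcov z
  have hτ' : configPermMap (m + 5) σ z ∈ Cset m (σ * τ) := by
    intro i j hij
    simpa [configPermMap] using hτ i j hij
  rw [hΦe _ _ hτ, hΦe _ _ hτ', act_act]
  congr 2
  funext i
  simp [xx, rho_perm]
  simp [configPermMap]

end SG

end

/-- **Statement 3.** For every odd prime `p`, the Schwartz genus of
`q_{2p} : F(ℂ,2p) → F(ℂ,2p)/Σ_{2p}` is less than `2p`: the base admits a cover by
`2p - 1` open sets over each of which the covering is trivial. -/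
theorem schwartzGenus_lt_two_mul_prime (p : ℕ) (hp : p.Prime) (hodd : Odd p) :
    SchwartzGenusLE (2 * p) (2 * p - 1) := by
  have h3 : 3 ≤ p := by
    have := hp.two_le
    rcases this.lt_or_eq with h | h
    · exact h
    · subst h; exact absurd hodd (by decide)
  obtain ⟨m, hm⟩ : ∃ m, m + 5 = 2 * p := ⟨2 * p - 5, by omega⟩
  obtain ⟨u, hu⟩ := SG.exists_weights hp hodd hm
  obtain ⟨rep, -, hE⟩ := SG.exists_inv_rep u hu
  have h := SG.genus_of_ext hE
  rw [hm] at h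
  have e : m + 4 = 2 * p - 1 := by omega
  rwa [e] at h
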